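/- arXiv:2311.09864 — 5 statements merged into one kernel-verified Lean document; each statement's English description precedes it below -/
import Mathlib

section
/- Let A = A_{k_1,…,k_p} and B = A_{l_1,…,l_q} be block upper-triangular subalgebras of M_n(ℂ). Then there exists a bijective unital ℂ-algebra homomorphism φ : A → B if and only if p = q and (k_1,…,k_p) = (l_1,…,l_q). -/
open Matrix

noncomputable section

/-- The block index function: `blockIdx k i` is the index `s` (0-based) of the diagonal
block containing row/column `i`, for block sizes given by the list `k`. -/
def blockIdx (k : List ℕ) (i : ℕ) : ℕ :=
  ((Finset.range k.length).filter (fun s => (k.take (s + 1)).sum ≤ i)).card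

/-- The block upper-triangular algebra `𝒜_{k₁,…,k_r} ⊆ M_n(ℂ)` determined by the
list of block sizes `k`. -/
def blockAlg (n : ℕ) (k : List ℕ) : Set (Matrix (Fin n) (Fin n) ℂ) :=
  { X | ∀ i j : Fin n, blockIdx k (j : ℕ) < blockIdx k (i : ℕ) → X i j = 0 }

/-- A subset of `M_n(ℂ)` is a block upper-triangular subalgebra if it is of the form
`blockAlg n k` for some list `k` of positive integers summing to `n`. -/
def IsBlockUT (n : ℕ) (𝒜 : Set (Matrix (Fin n) (Fin n) ℂ)) : Prop :=
  ∃ k : List ℕ, (∀ m ∈ k, 0 < m) ∧ k.sum = n ∧ 𝒜 = blockAlg n k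

/-- The exchange matrix `J` (ones on the antidiagonal). -/
def exchMat (n : ℕ) : Matrix (Fin n) (Fin n) ℂ :=
  Matrix.of fun i j => if (i : ℕ) + (j : ℕ) + 1 = n then 1 else 0

theorem blockIdx_mono (k : List ℕ) {i j : ℕ} (h : i ≤ j) : blockIdx k i ≤ blockIdx k j := by
  unfold blockIdx
  apply Finset.card_le_card
  intro s hs
  simp only [Finset.mem_filter] at hs ⊢
  exact ⟨hs.1, hs.2.trans h⟩

theorem takeSum_mono (k : List ℕ) {s t : ℕ} (h : s ≤ t) : (k.take s).sum ≤ (k.take t).sum :=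
  (List.take_sublist_take_left h).sum_le_sum (by simp)

theorem lt_blockIdx_iff (k : List ℕ) (i s : ℕ) (hs : s < k.length) :
    s < blockIdx k i ↔ (k.take (s + 1)).sum ≤ i := by
  constructor
  · intro h
    by_contra hc
    have : blockIdx k i ≤ (Finset.range s).card := by
      unfold blockIdx
      apply Finset.card_le_card
      intro t ht
      simp only [Finset.mem_filter, Finset.mem_range] at ht ⊢
      by_contra hst
      exact hc ((takeSum_mono k (by omega)).trans ht.2)
    simp at this
    omega
  · intro h
    have : (Finset.range (s + 1)).card ≤ blockIdx k i := by
      unfold blockIdx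
      apply Finset.card_le_card
      intro t ht
      simp only [Finset.mem_filter, Finset.mem_range] at ht ⊢
      exact ⟨by omega, (takeSum_mono k (by omega)).trans h⟩
    simp at this
    omega

theorem blockIdx_lt (k : List ℕ) (i : ℕ) (h : i < k.sum) : blockIdx k i < k.length := by
  have hL : 0 < k.length := by
    rcases k with _ | ⟨a, t⟩
    · simp at h
    · simp
  have := lt_blockIdx_iff k i (k.length - 1) (by omega)
  rw [Nat.sub_add_cancel hL, List.take_length] at this
  omega

theorem card_block (n : ℕ) (k : List ℕ) (hks : k.sum = n) (j : Fin n) :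
    Fintype.card {i : Fin n // blockIdx k i ≤ blockIdx k j} =
      (k.take (blockIdx k j + 1)).sum := by
  have hb := blockIdx_lt k j (by rw [hks]; exact j.2)
  set T := (k.take (blockIdx k j + 1)).sum with hT
  have hTn : T ≤ n := by
    rw [hT]
    exact ((List.take_sublist _ _).sum_le_sum (by simp)).trans hks.le
  have e : {i : Fin n // blockIdx k i ≤ blockIdx k j} ≃ Fin T :=
    { toFun := fun i => ⟨i.1, by
        have := lt_blockIdx_iff k i.1 _ hb
        have := i.2
        omega⟩
      invFun := fun i => ⟨⟨i.1, by omega⟩, by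
        have := lt_blockIdx_iff k i.1 _ hb
        have := i.2
        simp only
        omega⟩
      left_inv := fun i => rfl
      right_inv := fun i => rfl }
  rw [Fintype.card_congr e, Fintype.card_fin]

theorem exists_block (n : ℕ) (k : List ℕ) (hk : ∀ m ∈ k, 0 < m) (hks : k.sum = n) (s : ℕ)
    (hs : s < k.length) : ∃ j : Fin n, blockIdx k j = s := by
  have h1 : (k.take (s + 1)).sum = (k.take s).sum + k[s] := by
    rw [List.take_succ_eq_append_getElem hs, List.sum_append, List.sum_singleton]
  have h2 : 0 < k[s] := hk _ (List.getElem_mem hs)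
  have h3 : (k.take (s + 1)).sum ≤ n := by
    rw [← hks]
    exact (List.take_sublist _ _).sum_le_sum (by simp)
  refine ⟨⟨(k.take s).sum, by omega⟩, ?_⟩
  simp only
  have h4 := lt_blockIdx_iff k (k.take s).sum s hs
  rcases s with _ | s
  · omega
  · have h5 := lt_blockIdx_iff k (k.take (s + 1)).sum s (by omega)
    have := h5.2 le_rfl
    omega

/-- Positive lists with the same set of partial sums agree. -/
theorem eq_of_partialSums (k l : List ℕ) (hk : ∀ m ∈ k, 0 < m) (hl : ∀ m ∈ l, 0 < m)
    (h1 : ∀ s < k.length, ∃ t < l.length, (k.take (s + 1)).sum = (l.take (t + 1)).sum)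
    (h2 : ∀ s < l.length, ∃ t < k.length, (l.take (s + 1)).sum = (k.take (t + 1)).sum) :
    k = l := by
  induction k generalizing l with
  | nil =>
    rcases l with _ | ⟨b, l⟩
    · rfl
    · obtain ⟨t, ht, _⟩ := h2 0 (by simp)
      simp at ht
  | cons a k ih =>
    rcases l with _ | ⟨b, l⟩
    · obtain ⟨t, ht, _⟩ := h1 0 (by simp)
      simp at ht
    · have hab : a = b := by
        obtain ⟨t, _, ht⟩ := h1 0 (by simp)
        obtain ⟨u, _, hu⟩ := h2 0 (by simp)
        simp at ht hu
        omega
      subst hab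
      congr 1
      have ha := hk a (by simp)
      have key : ∀ (k l : List ℕ), (∀ m ∈ k, 0 < m) →
          (∀ s < (a :: k).length, ∃ t < (a :: l).length,
            ((a :: k).take (s + 1)).sum = ((a :: l).take (t + 1)).sum) →
          ∀ s < k.length, ∃ t < l.length, (k.take (s + 1)).sum = (l.take (t + 1)).sum := by
        intro k l hk h s hs
        obtain ⟨t, ht, e⟩ := h (s + 1) (by simpa using hs)
        rw [List.take_succ_cons, List.take_succ_cons, List.sum_cons, List.sum_cons] at e
        rcases t with _ | t
        · exfalso
          rcases k with _ | ⟨c, k⟩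
          · simp at hs
          · have := hk c (by simp)
            simp at e
            omega
        · exact ⟨t, by simpa using ht, by omega⟩
      exact ih l (fun m hm => hk m (by simp [hm])) (fun m hm => hl m (by simp [hm]))
        (key k l (fun m hm => hk m (by simp [hm])) h1)
        (key l k (fun m hm => hl m (by simp [hm])) h2)

/-- Matrix with a single column `j` given by the function `c`. -/
def colMat {n : ℕ} (k : List ℕ) (j : Fin n)
    (c : {i : Fin n // blockIdx k i ≤ blockIdx k j} → ℂ) : Matrix (Fin n) (Fin n) ℂ :=
  Matrix.of fun i p => if p = j then
    (if h : blockIdx k i ≤ blockIdx k j then c ⟨i, h⟩ else 0) else 0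

theorem colMat_mem {n : ℕ} (k : List ℕ) (j : Fin n)
    (c : {i : Fin n // blockIdx k i ≤ blockIdx k j} → ℂ) : colMat k j c ∈ blockAlg n k := by
  intro i p h
  simp only [colMat, Matrix.of_apply]
  split_ifs with h1 h2
  · subst h1; omega
  · rfl
  · rfl

theorem colMat_add {n : ℕ} (k : List ℕ) (j : Fin n)
    (c d : {i : Fin n // blockIdx k i ≤ blockIdx k j} → ℂ) :
    colMat k j (c + d) = colMat k j c + colMat k j d := by
  ext i p
  simp only [colMat, Matrix.of_apply, Matrix.add_apply]
  split_ifs <;> simp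

theorem colMat_smul {n : ℕ} (k : List ℕ) (j : Fin n) (a : ℂ)
    (c : {i : Fin n // blockIdx k i ≤ blockIdx k j} → ℂ) :
    colMat k j (a • c) = a • colMat k j c := by
  ext i p
  simp only [colMat, Matrix.of_apply, Matrix.smul_apply]
  split_ifs <;> simp

theorem single_mem {n : ℕ} (k : List ℕ) (i j : Fin n) (h : blockIdx k i ≤ blockIdx k j) :
    Matrix.single i j (1 : ℂ) ∈ blockAlg n k := by
  intro a b hab
  rw [Matrix.single_apply]
  split_ifs with hc
  · obtain ⟨rfl, rfl⟩ := hc; omega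
  · rfl

theorem card_eq {n : ℕ} (k l : List ℕ)
    (φ : Matrix (Fin n) (Fin n) ℂ → Matrix (Fin n) (Fin n) ℂ)
    (hφ : Set.BijOn φ (blockAlg n k) (blockAlg n l))
    (hadd : ∀ X ∈ blockAlg n k, ∀ Y ∈ blockAlg n k, φ (X + Y) = φ X + φ Y)
    (hsmul : ∀ (c : ℂ), ∀ X ∈ blockAlg n k, φ (c • X) = c • φ X)
    (hmul : ∀ X ∈ blockAlg n k, ∀ Y ∈ blockAlg n k, φ (X * Y) = φ X * φ Y)
    (j : Fin n) : ∃ m : Fin n,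
      Fintype.card {i : Fin n // blockIdx k i ≤ blockIdx k j} =
      Fintype.card {i : Fin n // blockIdx l i ≤ blockIdx l m} := by
  let z : Fin n := ⟨0, by have := j.2; omega⟩
  have hz : ∀ i : Fin n, blockIdx k z ≤ blockIdx k i := fun i => blockIdx_mono k (Nat.zero_le _)
  have h0mem : (0 : Matrix (Fin n) (Fin n) ℂ) ∈ blockAlg n k := fun _ _ _ => rfl
  have h0 : φ 0 = 0 := by
    have := hsmul 0 0 h0mem
    simpa using this
  have hne : φ (Matrix.single z j 1) ≠ 0 := by
    intro h
    have h1 := hφ.injOn (single_mem k z j (hz j)) h0mem (by rw [h, h0])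
    have h2 := congrFun (congrFun h1 z) j
    simp at h2
  have hmem_jj := single_mem k j j le_rfl
  have hzj : φ (Matrix.single z j 1) =
      φ (Matrix.single z j 1) * φ (Matrix.single j j 1) := by
    rw [← hmul _ (single_mem k z j (hz j)) _ hmem_jj]
    simp
  obtain ⟨u, hu⟩ : ∃ u, φ (Matrix.single z j 1) *ᵥ u ≠ 0 := by
    by_contra hc
    push Not at hc
    apply hne
    ext a b
    have := congrFun (hc (Pi.single b 1)) a
    simpa using this
  obtain ⟨v, hv⟩ : ∃ v, v = φ (Matrix.single j j 1) *ᵥ u := ⟨_, rfl⟩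
  have hv0 : φ (Matrix.single z j 1) *ᵥ v ≠ 0 := by
    rw [hv, Matrix.mulVec_mulVec, ← hzj]; exact hu
  have hvP : φ (Matrix.single j j 1) *ᵥ v = v := by
    rw [hv, Matrix.mulVec_mulVec, ← hmul _ hmem_jj _ hmem_jj]
    simp
  have hvne : v ≠ 0 := by
    rintro rfl
    simp at hv0
  obtain ⟨m, hm, hmax⟩ : ∃ m, v m ≠ 0 ∧ ∀ i, v i ≠ 0 → blockIdx l i ≤ blockIdx l m := by
    obtain ⟨i₀, hi₀⟩ := Function.ne_iff.1 hvne
    obtain ⟨m, hm, hm'⟩ := Finset.exists_max_image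
      (Finset.univ.filter (fun i => v i ≠ 0)) (fun i : Fin n => blockIdx l i)
      ⟨i₀, by simpa using hi₀⟩
    exact ⟨m, by simpa using hm, fun i hi => hm' i (by simpa using hi)⟩
  refine ⟨m, ?_⟩
  have hout : ∀ Y ∈ blockAlg n l, ∀ i : Fin n, ¬ blockIdx l i ≤ blockIdx l m →
      (Y *ᵥ v) i = 0 := by
    intro Y hY i hi
    rw [Matrix.mulVec, dotProduct]
    apply Finset.sum_eq_zero
    intro p _
    by_cases hp : v p = 0
    · simp [hp]
    · rw [hY i p (by have := hmax p hp; omega), zero_mul]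
  let F : ({i : Fin n // blockIdx k i ≤ blockIdx k j} → ℂ) →ₗ[ℂ]
      ({i : Fin n // blockIdx l i ≤ blockIdx l m} → ℂ) :=
    { toFun := fun c i => (φ (colMat k j c) *ᵥ v) i.1
      map_add' := by
        intro c d
        ext i
        rw [colMat_add, hadd _ (colMat_mem k j c) _ (colMat_mem k j d), Matrix.add_mulVec]
        rfl
      map_smul' := by
        intro a c
        ext i
        rw [colMat_smul, hsmul _ _ (colMat_mem k j c), Matrix.smul_mulVec]
        rfl }
  have hFi : Function.Injective F := by
    rw [← LinearMap.ker_eq_bot, LinearMap.ker_eq_bot']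
    intro c hc
    have h1 : φ (colMat k j c) *ᵥ v = 0 := by
      ext i
      by_cases hi : blockIdx l i ≤ blockIdx l m
      · exact congrFun hc ⟨i, hi⟩
      · exact hout _ (hφ.mapsTo (colMat_mem k j c)) i hi
    ext ⟨i, hi⟩
    by_contra hci
    have h2 : Matrix.single z i 1 * colMat k j c = c ⟨i, hi⟩ • Matrix.single z j (1 : ℂ) := by
      ext a b
      by_cases ha : a = z
      · subst ha
        by_cases hb : b = j
        · subst hb
          simp [colMat, hi]
        · simp [colMat, hb, Matrix.single_apply, Ne.symm hb]
      · simp [ha, Matrix.single_apply, Ne.symm ha]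
    have h3 := congrArg (fun M => φ M *ᵥ v) h2
    rw [hmul _ (single_mem k z i (hz i)) _ (colMat_mem k j c),
      hsmul _ _ (single_mem k z j (hz j)), ← Matrix.mulVec_mulVec, h1, Matrix.mulVec_zero,
      Matrix.smul_mulVec] at h3
    rcases smul_eq_zero.1 h3.symm with h | h
    · exact hci h
    · exact hv0 h
  have hFs : Function.Surjective F := by
    intro w
    have hY : colMat l m ((v m)⁻¹ • w) ∈ blockAlg n l := colMat_mem _ _ _
    obtain ⟨X, hX, hXY⟩ := hφ.surjOn hY
    refine ⟨fun i => X i.1 j, ?_⟩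
    have h1 : colMat k j (fun i => X i.1 j) = X * Matrix.single j j 1 := by
      ext a b
      by_cases hb : b = j
      · subst hb
        by_cases ha : blockIdx k a ≤ blockIdx k b
        · simp [colMat, ha]
        · simp [colMat, ha, hX a b (by omega)]
      · simp [colMat, hb]
    ext ⟨i, hi⟩
    change (φ (colMat k j (fun i => X i.1 j)) *ᵥ v) i = _
    rw [h1, hmul _ hX _ hmem_jj, ← Matrix.mulVec_mulVec, hvP, hXY]
    simp only [Matrix.mulVec, dotProduct, colMat, Matrix.of_apply]
    rw [Finset.sum_eq_single m]
    · simp [hi]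
      field_simp
    · intro p _ hp
      simp [hp]
    · simp
  have := (LinearEquiv.ofBijective F ⟨hFi, hFs⟩).finrank_eq
  simpa only [Module.finrank_fintype_fun_eq_card] using this

theorem partialSums_sub {n : ℕ} (k l : List ℕ)
    (hk : ∀ m ∈ k, 0 < m) (hks : k.sum = n) (hls : l.sum = n)
    (φ : Matrix (Fin n) (Fin n) ℂ → Matrix (Fin n) (Fin n) ℂ)
    (hφ : Set.BijOn φ (blockAlg n k) (blockAlg n l))
    (hadd : ∀ X ∈ blockAlg n k, ∀ Y ∈ blockAlg n k, φ (X + Y) = φ X + φ Y)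
    (hsmul : ∀ (c : ℂ), ∀ X ∈ blockAlg n k, φ (c • X) = c • φ X)
    (hmul : ∀ X ∈ blockAlg n k, ∀ Y ∈ blockAlg n k, φ (X * Y) = φ X * φ Y) :
    ∀ s < k.length, ∃ t < l.length, (k.take (s + 1)).sum = (l.take (t + 1)).sum := by
  intro s hs
  obtain ⟨j, rfl⟩ := exists_block n k hk hks s hs
  obtain ⟨m, hm⟩ := card_eq k l φ hφ hadd hsmul hmul j
  rw [card_block n k hks, card_block n l hls] at hm
  exact ⟨_, blockIdx_lt l m (by rw [hls]; exact m.2), hm⟩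

theorem blockAlg_mul_mem {n : ℕ} (k : List ℕ) {X Y : Matrix (Fin n) (Fin n) ℂ}
    (hX : X ∈ blockAlg n k) (hY : Y ∈ blockAlg n k) : X * Y ∈ blockAlg n k := by
  intro i j h
  rw [Matrix.mul_apply]
  apply Finset.sum_eq_zero
  intro p _
  by_cases hp : blockIdx k p < blockIdx k i
  · rw [hX i p hp, zero_mul]
  · rw [hY p j (by omega), mul_zero]

theorem blockAlg_add_mem {n : ℕ} (k : List ℕ) {X Y : Matrix (Fin n) (Fin n) ℂ}
    (hX : X ∈ blockAlg n k) (hY : Y ∈ blockAlg n k) : X + Y ∈ blockAlg n k := by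
  intro i j h
  rw [Matrix.add_apply, hX i j h, hY i j h, add_zero]

theorem blockAlg_smul_mem {n : ℕ} (k : List ℕ) (c : ℂ) {X : Matrix (Fin n) (Fin n) ℂ}
    (hX : X ∈ blockAlg n k) : c • X ∈ blockAlg n k := by
  intro i j h
  rw [Matrix.smul_apply, hX i j h, smul_zero]

theorem blockAlg_iso_iff {n : ℕ} (k l : List ℕ)
    (hk : ∀ m ∈ k, 0 < m) (hl : ∀ m ∈ l, 0 < m)
    (hks : k.sum = n) (hls : l.sum = n) :
    (∃ φ : Matrix (Fin n) (Fin n) ℂ → Matrix (Fin n) (Fin n) ℂ,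
      Set.BijOn φ (blockAlg n k) (blockAlg n l) ∧
      (∀ X ∈ blockAlg n k, ∀ Y ∈ blockAlg n k, φ (X + Y) = φ X + φ Y) ∧
      (∀ (c : ℂ), ∀ X ∈ blockAlg n k, φ (c • X) = c • φ X) ∧
      (∀ X ∈ blockAlg n k, ∀ Y ∈ blockAlg n k, φ (X * Y) = φ X * φ Y) ∧
      φ 1 = 1) ↔ k = l := by
  constructor
  · rintro ⟨φ, hφ, hadd, hsmul, hmul, -⟩
    let ψ := Function.invFunOn φ (blockAlg n k)
    have hinv : Set.InvOn ψ φ (blockAlg n k) (blockAlg n l) := hφ.invOn_invFunOn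
    have hψ : Set.BijOn ψ (blockAlg n l) (blockAlg n k) := Set.BijOn.symm hinv.symm hφ
    have hr : ∀ Y ∈ blockAlg n l, φ (ψ Y) = Y := fun Y hY => hinv.2 hY
    have hm : ∀ Y ∈ blockAlg n l, ψ Y ∈ blockAlg n k := fun Y hY => hψ.mapsTo hY
    refine eq_of_partialSums k l hk hl
      (partialSums_sub k l hk hks hls φ hφ hadd hsmul hmul)
      (partialSums_sub l k hl hls hks ψ hψ ?_ ?_ ?_)
    · intro X hX Y hY
      apply hφ.injOn (hm _ (blockAlg_add_mem l hX hY))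
        (blockAlg_add_mem k (hm X hX) (hm Y hY))
      rw [hr _ (blockAlg_add_mem l hX hY), hadd _ (hm X hX) _ (hm Y hY), hr X hX, hr Y hY]
    · intro c X hX
      apply hφ.injOn (hm _ (blockAlg_smul_mem l c hX)) (blockAlg_smul_mem k c (hm X hX))
      rw [hr _ (blockAlg_smul_mem l c hX), hsmul _ _ (hm X hX), hr X hX]
    · intro X hX Y hY
      apply hφ.injOn (hm _ (blockAlg_mul_mem l hX hY))
        (blockAlg_mul_mem k (hm X hX) (hm Y hY))
      rw [hr _ (blockAlg_mul_mem l hX hY), hmul _ (hm X hX) _ (hm Y hY), hr X hX, hr Y hY]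
  · rintro rfl
    exact ⟨id, Set.bijOn_id _, fun _ _ _ _ => rfl, fun _ _ _ => rfl, fun _ _ _ _ => rfl, rfl⟩
end
end

section
/- Let A = A_{k_1,…,k_p} and B = A_{l_1,…,l_q} be block upper-triangular subalgebras of M_n(ℂ). Then there exists a bijective linear map φ : A → B satisfying φ(X²) = φ(X)² for all X ∈ A (a Jordan isomorphism) if and only if p = q and either (k_1,…,k_p) = (l_1,…,l_q) or (k_1,…,k_p) = (l_q,…,l_1). -/
open Matrix

noncomputable section

/-- Matrices that are upper triangular with respect to a level function. -/
def gAlg {n : ℕ} (a : Fin n → ℕ) : Set (Matrix (Fin n) (Fin n) ℂ) :=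
  { X | ∀ i j : Fin n, a j < a i → X i j = 0 }

theorem blockIdx_nil (i : ℕ) : blockIdx [] i = 0 := by simp [blockIdx]

theorem blockIdx_cons_lt (m : ℕ) (k : List ℕ) (i : ℕ) (h : i < m) :
    blockIdx (m :: k) i = 0 := by
  unfold blockIdx
  rw [Finset.card_eq_zero, Finset.filter_eq_empty_iff]
  intro s _
  simp only [List.take_succ_cons, List.sum_cons]
  omega

theorem blockIdx_cons_ge (m : ℕ) (k : List ℕ) (i : ℕ) (h : m ≤ i) :
    blockIdx (m :: k) i = blockIdx k (i - m) + 1 := by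
  unfold blockIdx
  rw [Finset.card_filter, Finset.card_filter, List.length_cons, Finset.sum_range_succ']
  congr 1
  · apply Finset.sum_congr rfl
    intro s _
    congr 1
    simp only [List.take_succ_cons, List.sum_cons]
    apply propext
    omega
  · simp [h]

theorem blockIdx_append_lt (l : List ℕ) (m i : ℕ) (h : i < l.sum) :
    blockIdx (l ++ [m]) i = blockIdx l i := by
  induction l generalizing i with
  | nil => simp at h
  | cons x l ih =>
    rw [List.cons_append]
    rcases lt_or_ge i x with hx | hx
    · rw [blockIdx_cons_lt _ _ _ hx, blockIdx_cons_lt _ _ _ hx]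
    · rw [blockIdx_cons_ge _ _ _ hx, blockIdx_cons_ge _ _ _ hx, ih]
      simp at h
      omega

theorem blockIdx_append_ge (l : List ℕ) (m i : ℕ) (h : l.sum ≤ i) (h' : i < l.sum + m) :
    blockIdx (l ++ [m]) i = l.length := by
  induction l generalizing i with
  | nil => 
    simp at h'
    simpa using blockIdx_cons_lt m [] i h'
  | cons x l ih =>
    rw [List.cons_append]
    simp at h h'
    rw [blockIdx_cons_ge _ _ _ (by omega), ih _ (by omega) (by omega)]
    simp

theorem blockIdx_reverse (l : List ℕ) (i j : ℕ) (h : i + j + 1 = l.sum) :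
    blockIdx l.reverse i + blockIdx l j + 1 = l.length := by
  induction l generalizing i j with
  | nil => simp at h
  | cons m l ih =>
    rw [List.reverse_cons]
    simp at h
    rcases lt_or_ge i l.sum with hi | hi
    · rw [blockIdx_append_lt _ _ _ (by simpa using hi), blockIdx_cons_ge _ _ _ (by omega)]
      have := ih i (j - m) (by omega)
      simp
      omega
    · rw [blockIdx_append_ge _ _ _ (by simpa using hi) (by simp; omega),
        blockIdx_cons_lt _ _ _ (by omega)]
      simp

theorem list_eq_of_kernel (k l : List ℕ) (hk : ∀ m ∈ k, 0 < m) (hl : ∀ m ∈ l, 0 < m)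
    (hs : k.sum = l.sum)
    (h : ∀ i j, i < k.sum → j < k.sum →
      (blockIdx k i = blockIdx k j ↔ blockIdx l i = blockIdx l j)) : k = l := by
  induction k generalizing l with
  | nil =>
    cases l with
    | nil => rfl
    | cons x l =>
      have := hl x (by simp)
      simp at hs
      omega
  | cons x k ih =>
    cases l with
    | nil =>
      have := hk x (by simp)
      simp at hs
      omega
    | cons y l =>
      have hx := hk x (by simp)
      have hy := hl y (by simp)
      simp only [List.sum_cons] at hs h
      have hxy : x = y := by
        rcases lt_trichotomy x y with hlt | heq | hlt
        · have := (h 0 x (by omega) (by omega)).2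
          rw [blockIdx_cons_lt _ _ _ hx, blockIdx_cons_lt _ _ _ hy, blockIdx_cons_lt _ _ _ hlt,
            blockIdx_cons_ge _ _ _ le_rfl] at this
          simp at this
        · exact heq
        · have := (h 0 y (by omega) (by omega)).1
          rw [blockIdx_cons_lt _ _ _ hx, blockIdx_cons_lt _ _ _ hy, blockIdx_cons_lt _ _ _ hlt,
            blockIdx_cons_ge _ _ _ le_rfl] at this
          simp at this
      subst hxy
      congr 1
      apply ih l (fun m hm => hk m (by simp [hm])) (fun m hm => hl m (by simp [hm])) (by omega)
      intro i j hi hj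
      have := h (i + x) (j + x) (by omega) (by omega)
      rw [blockIdx_cons_ge _ _ _ (by omega), blockIdx_cons_ge _ _ _ (by omega),
        blockIdx_cons_ge _ _ _ (by omega), blockIdx_cons_ge _ _ _ (by omega)] at this
      simpa using this

theorem card_le_of_card_eq {n : ℕ} (f g : Fin n → ℕ)
    (h : ∀ s, (Finset.univ.filter (fun i => f i = s)).card =
      (Finset.univ.filter (fun i => g i = s)).card) (m : ℕ) :
    (Finset.univ.filter (fun i => f i ≤ m)).card =
      (Finset.univ.filter (fun i => g i ≤ m)).card := by
  have key : ∀ f : Fin n → ℕ, (Finset.univ.filter (fun i => f i ≤ m)).card =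
      ∑ s ∈ Finset.range (m + 1), (Finset.univ.filter (fun i => f i = s)).card := by
    intro f
    rw [Finset.card_eq_sum_card_fiberwise (f := f) (t := Finset.range (m + 1))]
    · apply Finset.sum_congr rfl
      intro s hs
      congr 1
      ext i
      simp at hs ⊢
      omega
    · intro i hi
      simp at hi ⊢
      omega
  rw [key, key]
  exact Finset.sum_congr rfl (fun s _ => h s)

theorem mono_le_of_card_eq {n : ℕ} (f g : Fin n → ℕ) (hf : Monotone f) (hg : Monotone g)
    (h : ∀ s, (Finset.univ.filter (fun i => f i = s)).card =
      (Finset.univ.filter (fun i => g i = s)).card) (i : Fin n) : g i ≤ f i := by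
  by_contra! hlt
  have h1 := card_le_of_card_eq f g h (f i)
  have h2 : (Finset.Iic i).card ≤ (Finset.univ.filter (fun j => f j ≤ f i)).card := by
    apply Finset.card_le_card
    intro j hj
    simp at hj ⊢
    exact hf hj
  have h3 : (Finset.univ.filter (fun j => g j ≤ f i)).card ≤ (Finset.Iio i).card := by
    apply Finset.card_le_card
    intro j hj
    simp at hj ⊢
    by_contra! hij
    have := hg hij
    omega
  simp at h2 h3
  omega

theorem final_comb {n : ℕ} (k l : List ℕ)
    (hk : ∀ m ∈ k, 0 < m) (hl : ∀ m ∈ l, 0 < m)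
    (hks : k.sum = n) (hls : l.sum = n) (t : Fin n → ℕ)
    (hc : ∀ s, (Finset.univ.filter (fun i => t i = s)).card =
      (Finset.univ.filter (fun i : Fin n => blockIdx l i = s)).card)
    (h : ∀ i j : Fin n, blockIdx k i ≤ blockIdx k j ↔ t i ≤ t j) : k = l := by
  have hb : Monotone (fun i : Fin n => blockIdx l i) := fun i j hij => blockIdx_mono l hij
  have ht : Monotone t := fun i j hij => (h i j).1 (blockIdx_mono k hij)
  have e : ∀ i : Fin n, t i = blockIdx l i := fun i => le_antisymm
    (mono_le_of_card_eq _ _ hb ht (fun s => (hc s).symm) i) (mono_le_of_card_eq _ _ ht hb hc i)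
  apply list_eq_of_kernel k l hk hl (by omega)
  intro i j hi hj
  have h1 := h ⟨i, by omega⟩ ⟨j, by omega⟩
  have h2 := h ⟨j, by omega⟩ ⟨i, by omega⟩
  rw [e, e] at h1 h2
  simp only at h1 h2
  omega

/-- Betweenness of levels. -/
def LvlBtw {n : ℕ} (a : Fin n → ℕ) (i j k : Fin n) : Prop :=
  (a i ≤ a j ∧ a j ≤ a k) ∨ (a k ≤ a j ∧ a j ≤ a i)

theorem order_of_btw {n : ℕ} (a t : Fin n → ℕ) (h : ∀ i j k, LvlBtw a i j k ↔ LvlBtw t i j k) :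
    (∀ i j, a i ≤ a j ↔ t i ≤ t j) ∨ (∀ i j, a i ≤ a j ↔ t j ≤ t i) := by
  rcases Nat.eq_zero_or_pos n with rfl | hn
  · left
    intro i
    exact i.elim0
  have : Nonempty (Fin n) := ⟨⟨0, hn⟩⟩
  obtain ⟨p, hp⟩ := Finite.exists_min a
  obtain ⟨q, hq⟩ := Finite.exists_max a
  unfold LvlBtw at h
  rcases le_total (t p) (t q) with hpq | hpq
  · left
    intro i j
    have h1 := h p i j
    have h2 := h p i q
    have h3 := h p j q
    have h4 := h i j i
    have := hp i
    have := hp j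
    have := hq i
    have := hq j
    omega
  · right
    intro i j
    have h1 := h p i j
    have h2 := h p i q
    have h3 := h p j q
    have h4 := h i j i
    have := hp i
    have := hp j
    have := hq i
    have := hq j
    omega

/-- Anticommutator. -/
def ac {n : ℕ} (X Y : Matrix (Fin n) (Fin n) ℂ) : Matrix (Fin n) (Fin n) ℂ := X * Y + Y * X

theorem gAlg_mul {n : ℕ} {a : Fin n → ℕ} {X Y : Matrix (Fin n) (Fin n) ℂ}
    (hX : X ∈ gAlg a) (hY : Y ∈ gAlg a) : X * Y ∈ gAlg a := by
  intro i j hij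
  rw [Matrix.mul_apply]
  apply Finset.sum_eq_zero
  intro s _
  rcases lt_or_ge (a s) (a i) with h | h
  · rw [hX i s h, zero_mul]
  · rw [hY s j (by omega), mul_zero]

theorem gAlg_add {n : ℕ} {a : Fin n → ℕ} {X Y : Matrix (Fin n) (Fin n) ℂ}
    (hX : X ∈ gAlg a) (hY : Y ∈ gAlg a) : X + Y ∈ gAlg a := by
  intro i j hij
  rw [Matrix.add_apply, hX i j hij, hY i j hij, add_zero]

theorem gAlg_ac {n : ℕ} {a : Fin n → ℕ} {X Y : Matrix (Fin n) (Fin n) ℂ}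
    (hX : X ∈ gAlg a) (hY : Y ∈ gAlg a) : ac X Y ∈ gAlg a :=
  gAlg_add (gAlg_mul hX hY) (gAlg_mul hY hX)

theorem gAlg_single {n : ℕ} {a : Fin n → ℕ} (i j : Fin n) (h : a i ≤ a j) (c : ℂ) :
    Matrix.single i j c ∈ gAlg a := by
  intro s t hst
  rw [Matrix.single_apply, if_neg]
  rintro ⟨rfl, rfl⟩
  omega

theorem gAlg_zero {n : ℕ} {a : Fin n → ℕ} : (0 : Matrix (Fin n) (Fin n) ℂ) ∈ gAlg a :=
  fun _ _ _ => rfl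

/-- Peirce component. -/
theorem peirceComp {n : ℕ} (X : Matrix (Fin n) (Fin n) ℂ) (i j : Fin n) (hij : i ≠ j) :
    ac (Matrix.single i i 1) (ac (Matrix.single j j 1) X) =
      Matrix.single i j (X i j) + Matrix.single j i (X j i) := by
  unfold ac
  have h1 : (Matrix.single i i (1:ℂ)) * (Matrix.single j j 1) = 0 := by
    simp [hij]
  have h2 : (Matrix.single j j (1:ℂ)) * (Matrix.single i i 1) = 0 := by
    simp [hij.symm]
  rw [mul_add, add_mul, ← mul_assoc, h1, zero_mul, zero_add, mul_assoc X, h2, mul_zero, add_zero,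
    ← mul_assoc, Matrix.single_mul_mul_single, Matrix.single_mul_mul_single]
  simp

/-- The test expression. -/
def tst {n : ℕ} (X Y : Matrix (Fin n) (Fin n) ℂ) (i j k : Fin n) : Matrix (Fin n) (Fin n) ℂ :=
  ac (ac (Matrix.single i i 1) (ac (Matrix.single j j 1) X))
    (ac (Matrix.single j j 1) (ac (Matrix.single k k 1) Y))

theorem tst_iff {n : ℕ} (a : Fin n → ℕ) (i j k : Fin n) (hij : i ≠ j) (hjk : j ≠ k) :
    (∃ X ∈ gAlg a, ∃ Y ∈ gAlg a, tst X Y i j k ≠ 0) ↔ LvlBtw a i j k := by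
  unfold tst
  constructor
  · rintro ⟨X, hX, Y, hY, h⟩
    by_contra hB
    apply h
    rw [peirceComp _ _ _ hij, peirceComp _ _ _ hjk]
    unfold LvlBtw at hB
    have e1 : X i j * Y j k = 0 := by
      by_contra hne
      have h1 : ¬ a j < a i := fun hh => hne (by rw [hX i j hh, zero_mul])
      have h2 : ¬ a k < a j := fun hh => hne (by rw [hY j k hh, mul_zero])
      omega
    have e2 : Y k j * X j i = 0 := by
      by_contra hne
      have h1 : ¬ a i < a j := fun hh => hne (by rw [hX j i hh, mul_zero])
      have h2 : ¬ a j < a k := fun hh => hne (by rw [hY k j hh, zero_mul])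
      omega
    unfold ac
    simp only [mul_add, add_mul]
    by_cases hik : i = k
    · subst hik
      simp [hij, hij.symm, e1, e2, mul_comm (Y j i), mul_comm (X j i)]
    · have hki : k ≠ i := fun h => hik h.symm
      simp [hij, hij.symm, hjk, hjk.symm, hik, hki, e1, e2]
  · have main : ∀ X Y : Matrix (Fin n) (Fin n) ℂ,
        (ac (Matrix.single i j (X i j) + Matrix.single j i (X j i))
          (Matrix.single j k (Y j k) + Matrix.single k j (Y k j))) i k =
          X i j * Y j k + (if i = k then Y k j * X j i else 0) := by
      intro X Y
      unfold ac
      simp only [mul_add, add_mul]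
      by_cases hik : i = k
      · subst hik
        simp [hij, hij.symm]
      · have hki : k ≠ i := fun h => hik h.symm
        simp [hij, hij.symm, hjk, hjk.symm, hik, hki]
    have main' : ∀ X Y : Matrix (Fin n) (Fin n) ℂ,
        (ac (Matrix.single i j (X i j) + Matrix.single j i (X j i))
          (Matrix.single j k (Y j k) + Matrix.single k j (Y k j))) k i =
          Y k j * X j i + (if i = k then X i j * Y j k else 0) := by
      intro X Y
      unfold ac
      simp only [mul_add, add_mul]
      by_cases hik : i = k
      · subst hik
        simp [hij, hij.symm, add_comm]
      · have hki : k ≠ i := fun h => hik h.symm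
        simp [hij, hij.symm, hjk, hjk.symm, hik, hki]
    rintro (⟨h1, h2⟩ | ⟨h1, h2⟩)
    · refine ⟨_, gAlg_single i j h1 1, _, gAlg_single j k h2 1, fun h0 => ?_⟩
      rw [peirceComp _ _ _ hij, peirceComp _ _ _ hjk] at h0
      have := main (Matrix.single i j 1) (Matrix.single j k 1)
      rw [h0] at this
      simp [hij, hij.symm, hjk, hjk.symm] at this
    · refine ⟨_, gAlg_single j i h2 1, _, gAlg_single k j h1 1, fun h0 => ?_⟩
      rw [peirceComp _ _ _ hij, peirceComp _ _ _ hjk] at h0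
      have := main' (Matrix.single j i 1) (Matrix.single k j 1)
      rw [h0] at this
      simp [hij, hij.symm, hjk, hjk.symm] at this

theorem lvlBtw_iff {n : ℕ} (a t : Fin n → ℕ)
    (f : Matrix (Fin n) (Fin n) ℂ → Matrix (Fin n) (Fin n) ℂ)
    (hf : Set.BijOn f (gAlg a) (gAlg t))
    (h0 : f 0 = 0)
    (hac : ∀ X ∈ gAlg a, ∀ Y ∈ gAlg a, f (ac X Y) = ac (f X) (f Y))
    (hE : ∀ i, f (Matrix.single i i 1) = Matrix.single i i 1) (i j k : Fin n) :
    LvlBtw a i j k ↔ LvlBtw t i j k := by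
  by_cases hij : i = j
  · subst hij
    simp [LvlBtw, le_total]
  by_cases hjk : j = k
  · subst hjk
    simp [LvlBtw, le_total]
  have hEm : ∀ i, Matrix.single i i (1:ℂ) ∈ gAlg a := fun i => gAlg_single i i le_rfl 1
  have key : ∀ X ∈ gAlg a, ∀ Y ∈ gAlg a, f (tst X Y i j k) = tst (f X) (f Y) i j k := by
    intro X hX Y hY
    unfold tst
    rw [hac _ (gAlg_ac (hEm _) (gAlg_ac (hEm _) hX)) _ (gAlg_ac (hEm _) (gAlg_ac (hEm _) hY)),
      hac _ (hEm _) _ (gAlg_ac (hEm _) hX), hac _ (hEm _) _ (gAlg_ac (hEm _) hY),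
      hac _ (hEm _) _ hX, hac _ (hEm _) _ hY, hE, hE, hE]
  rw [← tst_iff a i j k hij hjk, ← tst_iff t i j k hij hjk]
  constructor
  · rintro ⟨X, hX, Y, hY, h⟩
    refine ⟨f X, hf.mapsTo hX, f Y, hf.mapsTo hY, fun hh => h ?_⟩
    rw [← key X hX Y hY, ← h0] at hh
    refine hf.injOn ?_ gAlg_zero hh
    unfold tst
    exact gAlg_ac (gAlg_ac (hEm _) (gAlg_ac (hEm _) hX)) (gAlg_ac (hEm _) (gAlg_ac (hEm _) hY))
  · rintro ⟨X', hX', Y', hY', h⟩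
    obtain ⟨X, hX, rfl⟩ := hf.surjOn hX'
    obtain ⟨Y, hY, rfl⟩ := hf.surjOn hY'
    refine ⟨X, hX, Y, hY, fun hh => h ?_⟩
    rw [← key X hX Y hY, hh, h0]

theorem orth_of_ac {n : ℕ} {P Q : Matrix (Fin n) (Fin n) ℂ} (hP : P * P = P)
    (h : P * Q + Q * P = 0) : P * Q = 0 := by
  have h1 : P * Q + P * Q * P = 0 := by
    have := congrArg (fun Z => P * Z) h
    simpa [mul_add, ← mul_assoc, hP] using this
  have h2 : P * Q * P + Q * P = 0 := by
    have := congrArg (fun Z => Z * P) h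
    simpa [add_mul, mul_assoc, hP] using this
  have h3 : P * Q = Q * P := by
    have e1 := eq_neg_of_add_eq_zero_left h1
    have e2 := eq_neg_of_add_eq_zero_right h2
    rw [e1, e2]
  rw [← h3, ← two_smul ℂ] at h
  simpa using h

/-- Simultaneous diagonalization of `n` nonzero orthogonal idempotents. -/
theorem exists_diag {n : ℕ} (P : Fin n → Matrix (Fin n) (Fin n) ℂ)
    (hP : ∀ i, P i * P i = P i) (h0 : ∀ i, P i ≠ 0)
    (ho : ∀ i j, i ≠ j → P i * P j = 0) :
    ∃ S T : Matrix (Fin n) (Fin n) ℂ, S * T = 1 ∧ T * S = 1 ∧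
      ∀ i, S * P i * T = Matrix.single i i 1 := by
  have hw : ∀ i, ∃ w, P i *ᵥ w ≠ 0 := by
    intro i
    by_contra! hh
    apply h0 i
    apply Matrix.ext_of_mulVec_single
    intro s
    rw [hh, Matrix.zero_mulVec]
  choose w hw using hw
  let T : Matrix (Fin n) (Fin n) ℂ := Matrix.of fun a i => (P i *ᵥ w i) a
  have hPT : ∀ i, P i * T = T * Matrix.single i i 1 := by
    intro i
    have hcol : ∀ a j, (P i * T) a j = (P i *ᵥ (P j *ᵥ w j)) a := by
      intro a j
      simp [Matrix.mul_apply, Matrix.mulVec, dotProduct, T]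
    ext a j
    rw [hcol, Matrix.mulVec_mulVec]
    by_cases hij : i = j
    · subst hij
      rw [hP]
      simp [T]
    · rw [ho i j hij]
      simp [Matrix.mul_single_apply_of_ne, hij, Ne.symm hij]
  have hT : IsUnit T := by
    rw [← Matrix.mulVec_injective_iff_isUnit]
    refine (injective_iff_map_eq_zero (Matrix.mulVecLin T).toAddMonoidHom).2 ?_
    intro c hc
    have hc : T *ᵥ c = 0 := hc
    ext i
    have h1 : (P i * T) *ᵥ c = 0 := by rw [← Matrix.mulVec_mulVec, hc, Matrix.mulVec_zero]
    rw [hPT, ← Matrix.mulVec_mulVec] at h1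
    obtain ⟨a, ha⟩ := Function.ne_iff.1 (hw i)
    have h2 := congrFun h1 a
    have h3 : (Matrix.single i i (1:ℂ)) *ᵥ c = Pi.single i (c i) := by
      ext s
      simp [Matrix.single_mulVec, Pi.single_apply, Function.update_apply]
    rw [h3, Matrix.mulVec_single] at h2
    simp [T] at h2
    rcases h2 with h2 | h2
    · exact absurd h2 ha
    · exact h2
  have hd : IsUnit T.det := (Matrix.isUnit_iff_isUnit_det T).1 hT
  refine ⟨T⁻¹, T, Matrix.nonsing_inv_mul _ hd, Matrix.mul_nonsing_inv _ hd, fun i => ?_⟩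
  rw [mul_assoc, hPT, ← mul_assoc, Matrix.nonsing_inv_mul _ hd, one_mul]

/-- Conjugating a triangular algebra. -/
theorem exists_type {n : ℕ} (b : Fin n → ℕ) (S T : Matrix (Fin n) (Fin n) ℂ)
    (hST : S * T = 1) (hTS : T * S = 1)
    (hm : ∀ i, T * Matrix.single i i 1 * S ∈ gAlg b) :
    ∃ t : Fin n → ℕ, (∀ i, ∃ c, t i = b c) ∧
      (∀ X, X ∈ gAlg b ↔ S * X * T ∈ gAlg t) ∧
      (∀ s, (Finset.univ.filter (fun i => t i = s)).card =
      (Finset.univ.filter (fun i => b i = s)).card) := by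
  have hsum : ∀ i, ∑ c, S i c * T c i = 1 := by
    intro i
    rw [← Matrix.mul_apply, hST, Matrix.one_apply_eq]
  have hex : ∀ i, ∃ c, S i c * T c i ≠ 0 := by
    intro i
    by_contra! hh
    have := hsum i
    simp [hh] at this
  choose c hc using hex
  have hz : ∀ i x y, b y < b x → T x i * S i y = 0 := by
    intro i x y hxy
    have := hm i x y hxy
    rw [Matrix.mul_apply, Finset.sum_eq_single i] at this
    · simpa using this
    · intro z _ hz
      simp [Matrix.mul_single_apply_of_ne, hz]
    · simp
  have hTl : ∀ i x, b (c i) < b x → T x i = 0 := by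
    intro i x hx
    have := hz i x (c i) hx
    rcases mul_eq_zero.1 this with h | h
    · exact h
    · exact absurd (by rw [h, zero_mul]) (hc i)
  have hSl : ∀ i y, b y < b (c i) → S i y = 0 := by
    intro i x hx
    have := hz i (c i) x hx
    rcases mul_eq_zero.1 this with h | h
    · exact absurd (by rw [h, mul_zero]) (hc i)
    · exact h
  refine ⟨fun i => b (c i), fun i => ⟨c i, rfl⟩, fun X => ⟨fun hX => ?_, fun hX => ?_⟩, fun s => ?_⟩
  · intro i j hij
    rw [Matrix.mul_apply]
    apply Finset.sum_eq_zero
    intro y _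
    rw [Matrix.mul_apply, Finset.sum_mul]
    apply Finset.sum_eq_zero
    intro x _
    by_cases h1 : b x < b (c i)
    · rw [hSl i x h1]; simp
    by_cases h2 : b (c j) < b y
    · rw [hTl j y h2]; simp
    rw [hX x y (by simp only at hij; omega)]; simp
  · have e : X = T * (S * X * T) * S := by
      rw [mul_assoc S, ← mul_assoc T, hTS, one_mul, mul_assoc, hTS, mul_one]
    rw [e]
    intro x y hxy
    rw [Matrix.mul_apply]
    apply Finset.sum_eq_zero
    intro j _
    rw [Matrix.mul_apply, Finset.sum_mul]
    apply Finset.sum_eq_zero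
    intro i _
    by_cases h1 : b (c i) < b x
    · rw [hTl i x h1]; simp
    by_cases h2 : b y < b (c j)
    · rw [hSl j y h2]; simp
    rw [hX i j (by simp only; omega)]; simp
  · have h1 : ∀ i, (∑ x ∈ Finset.univ.filter (fun x => b x = s), T x i * S i x) =
        if b (c i) = s then 1 else 0 := by
      intro i
      have hv : ∀ x, b x ≠ b (c i) → T x i * S i x = 0 := by
        intro x hx
        rcases lt_or_gt_of_ne hx with h | h
        · rw [hSl i x h, mul_zero]
        · rw [hTl i x h, zero_mul]
      rw [Finset.sum_filter]
      split_ifs with hs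
      · rw [← hsum i]
        apply Finset.sum_congr rfl
        intro x _
        split_ifs with hx
        · rw [mul_comm]
        · rw [mul_comm, hv x (by rw [hs]; exact hx)]
      · apply Finset.sum_eq_zero
        intro x _
        split_ifs with hx
        · exact hv x (by rw [hx]; exact fun h => hs h.symm)
        · rfl
    have h2 : (∑ i, ∑ x ∈ Finset.univ.filter (fun x => b x = s), T x i * S i x) =
        ((Finset.univ.filter (fun i => b i = s)).card : ℂ) := by
      rw [Finset.sum_comm]
      have : ∀ x, ∑ i, T x i * S i x = 1 := by
        intro x
        rw [← Matrix.mul_apply, hTS, Matrix.one_apply_eq]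
      simp [this]
    simp only [h1] at h2
    rw [Finset.sum_boole] at h2
    exact_mod_cast h2

theorem forward_dir {n : ℕ} (k l : List ℕ)
    (hk : ∀ m ∈ k, 0 < m) (hl : ∀ m ∈ l, 0 < m)
    (hks : k.sum = n) (hls : l.sum = n)
    (f : Matrix (Fin n) (Fin n) ℂ → Matrix (Fin n) (Fin n) ℂ)
    (hf : Set.BijOn f (blockAlg n k) (blockAlg n l))
    (hadd : ∀ X ∈ blockAlg n k, ∀ Y ∈ blockAlg n k, f (X + Y) = f X + f Y)
    (hsq : ∀ X ∈ blockAlg n k, f (X * X) = f X * f X) :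
    k = l ∨ k = l.reverse := by
  set a : Fin n → ℕ := fun i => blockIdx k i with ha
  set b : Fin n → ℕ := fun i => blockIdx l i with hb
  change Set.BijOn f (gAlg a) (gAlg b) at hf
  change ∀ X ∈ gAlg a, ∀ Y ∈ gAlg a, f (X + Y) = f X + f Y at hadd
  change ∀ X ∈ gAlg a, f (X * X) = f X * f X at hsq
  have hf0 : f 0 = 0 := by
    have := hadd 0 gAlg_zero 0 gAlg_zero
    simpa using this
  have hac : ∀ X ∈ gAlg a, ∀ Y ∈ gAlg a, f (ac X Y) = ac (f X) (f Y) := by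
    intro X hX Y hY
    have h1 := hsq (X + Y) (gAlg_add hX hY)
    have e : (X + Y) * (X + Y) = X * X + (ac X Y + Y * Y) := by
      unfold ac
      noncomm_ring
    rw [e, hadd _ (gAlg_mul hX hX) _ (gAlg_add (gAlg_ac hX hY) (gAlg_mul hY hY)),
      hadd _ (gAlg_ac hX hY) _ (gAlg_mul hY hY), hsq X hX, hsq Y hY, hadd X hX Y hY] at h1
    have e2 : (f X + f Y) * (f X + f Y) = f X * f X + (ac (f X) (f Y) + f Y * f Y) := by
      unfold ac
      noncomm_ring
    rw [e2] at h1
    exact add_right_cancel (add_left_cancel h1)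
  have hEm : ∀ i, Matrix.single i i (1:ℂ) ∈ gAlg a := fun i => gAlg_single i i le_rfl 1
  have hP : ∀ i, f (Matrix.single i i 1) * f (Matrix.single i i 1) = f (Matrix.single i i 1) := by
    intro i
    rw [← hsq _ (hEm i)]
    simp
  obtain ⟨S, T, hST, hTS, hd⟩ := exists_diag (fun i => f (Matrix.single i i 1)) hP
    (by
      intro i hi
      have := hf.injOn (hEm i) gAlg_zero (hi.trans hf0.symm)
      have := congrFun (congrFun this i) i
      simp at this)
    (by
      intro i j hij
      apply orth_of_ac (hP i)
      have := hac _ (hEm i) _ (hEm j)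
      unfold ac at this
      rw [← this]
      simp [hij, hij.symm, hf0])
  have hback : ∀ X, T * (S * X * T) * S = X := by
    intro X
    rw [mul_assoc S, ← mul_assoc T, hTS, one_mul, mul_assoc, hTS, mul_one]
  obtain ⟨t, htb, htm, htc⟩ := exists_type b S T hST hTS (by
    intro i
    rw [← hd i, hback]
    exact hf.mapsTo (hEm i))
  have hbtw := lvlBtw_iff a t (fun X => S * f X * T)
    (by
      refine ⟨fun X hX => (htm _).1 (hf.mapsTo hX), fun X hX Y hY h => ?_, fun Y hY => ?_⟩
      · apply hf.injOn hX hY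
        rw [← hback (f X), ← hback (f Y)]
        simp only at h
        rw [h]
      · have e : S * (T * Y * S) * T = Y := by
          rw [mul_assoc T, ← mul_assoc S, hST, one_mul, mul_assoc, hST, mul_one]
        have : T * Y * S ∈ gAlg b := by
          rw [htm, e]
          exact hY
        obtain ⟨X, hX, hXe⟩ := hf.surjOn this
        refine ⟨X, hX, ?_⟩
        simp only
        rw [hXe, e])
    (by simp [hf0])
    (by
      intro X hX Y hY
      rw [hac X hX Y hY]
      unfold ac
      have e : ∀ U V : Matrix (Fin n) (Fin n) ℂ, S * U * T * (S * V * T) = S * (U * V) * T := by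
        intro U V
        calc S * U * T * (S * V * T) = S * U * (T * S) * V * T := by simp only [mul_assoc]
          _ = _ := by rw [hTS, mul_one]; simp only [mul_assoc]
      rw [e, e, mul_add, add_mul])
    hd
  rcases order_of_btw a t hbtw with h | h
  · left
    exact final_comb k l hk hl hks hls t htc h
  · right
    have hrev : ∀ i : Fin n, blockIdx l.reverse i + b (Fin.rev i) + 1 = l.length := by
      intro i
      apply blockIdx_reverse
      rw [Fin.val_rev]
      omega
    have hbl : ∀ i, b i + 1 ≤ l.length := by
      intro i
      have := hrev (Fin.rev i)
      rw [Fin.rev_rev] at this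
      omega
    have htl : ∀ i, t i + 1 ≤ l.length := by
      intro i
      obtain ⟨c, hc⟩ := htb i
      rw [hc]
      exact hbl c
    refine final_comb k l.reverse hk (by simpa using hl) hks (by simpa using hls)
      (fun i => l.length - 1 - t i) ?_ ?_
    · intro s
      by_cases hs : s < l.length
      · have e1 : (Finset.univ.filter (fun i => l.length - 1 - t i = s)) =
            Finset.univ.filter (fun i => t i = l.length - 1 - s) := by
          ext i
          have := htl i
          simp
          omega
        rw [e1, htc]
        apply Finset.card_bij (fun i _ => Fin.rev i)
        · intro i hi
          have := hrev (Fin.rev i)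
          rw [Fin.rev_rev] at this
          simp only [Finset.mem_filter, Finset.mem_univ, true_and] at hi ⊢
          omega
        · intro i _ j _ hij
          exact Fin.rev_injective hij
        · intro i hi
          refine ⟨Fin.rev i, ?_, Fin.rev_rev i⟩
          have := hrev i
          simp only [Finset.mem_filter, Finset.mem_univ, true_and] at hi ⊢
          omega
      · rw [Finset.card_eq_zero.2, Finset.card_eq_zero.2]
        · rw [Finset.filter_eq_empty_iff]
          intro i _
          have := hrev i
          omega
        · rw [Finset.filter_eq_empty_iff]
          intro i _
          have := htl i
          omega
    · intro i j
      have h1 := h i j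
      have h2 := htl i
      have h3 := htl j
      simp only [ha] at h1
      rw [h1]
      omega

theorem backward_rev {n : ℕ} (l : List ℕ) (hls : l.sum = n) :
    ∃ φ : Matrix (Fin n) (Fin n) ℂ → Matrix (Fin n) (Fin n) ℂ,
      Set.BijOn φ (blockAlg n l.reverse) (blockAlg n l) ∧
      (∀ X ∈ blockAlg n l.reverse, ∀ Y ∈ blockAlg n l.reverse, φ (X + Y) = φ X + φ Y) ∧
      (∀ (c : ℂ), ∀ X ∈ blockAlg n l.reverse, φ (c • X) = c • φ X) ∧
      (∀ X ∈ blockAlg n l.reverse, φ (X * X) = φ X * φ X) := by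
  have hrev : ∀ i : Fin n, blockIdx l.reverse i + blockIdx l (Fin.rev i : Fin n) + 1
      = l.length := by
    intro i
    apply blockIdx_reverse
    rw [Fin.val_rev]
    omega
  have hrev' : ∀ i : Fin n, blockIdx l.reverse (Fin.rev i : Fin n) + blockIdx l i + 1
      = l.length := by
    intro i
    have := hrev (Fin.rev i)
    rwa [Fin.rev_rev] at this
  let φ : Matrix (Fin n) (Fin n) ℂ → Matrix (Fin n) (Fin n) ℂ :=
    fun X => Matrix.of fun i j => X (Fin.rev j) (Fin.rev i)
  have hφφ : ∀ X, φ (φ X) = X := by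
    intro X
    ext i j
    simp [φ]
  refine ⟨φ, ⟨?_, ?_, ?_⟩, ?_, ?_, ?_⟩
  · intro X hX i j hij
    apply hX
    have := hrev' i
    have := hrev' j
    omega
  · intro X _ Y _ h
    rw [← hφφ X, h, hφφ]
  · intro Y hY
    refine ⟨φ Y, ?_, hφφ Y⟩
    intro i j hij
    apply hY
    have := hrev i
    have := hrev j
    omega
  · intro X _ Y _
    ext i j
    simp [φ]
  · intro c X _
    ext i j
    simp [φ]
  · intro X _
    ext i j
    simp only [φ, Matrix.mul_apply, Matrix.of_apply]
    rw [← Equiv.sum_comp Fin.revPerm]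
    apply Finset.sum_congr rfl
    intro s _
    simp [mul_comm]

theorem blockAlg_jordan_iso_iff {n : ℕ} (k l : List ℕ)
    (hk : ∀ m ∈ k, 0 < m) (hl : ∀ m ∈ l, 0 < m)
    (hks : k.sum = n) (hls : l.sum = n) :
    (∃ φ : Matrix (Fin n) (Fin n) ℂ → Matrix (Fin n) (Fin n) ℂ,
      Set.BijOn φ (blockAlg n k) (blockAlg n l) ∧
      (∀ X ∈ blockAlg n k, ∀ Y ∈ blockAlg n k, φ (X + Y) = φ X + φ Y) ∧
      (∀ (c : ℂ), ∀ X ∈ blockAlg n k, φ (c • X) = c • φ X) ∧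
      (∀ X ∈ blockAlg n k, φ (X * X) = φ X * φ X)) ↔
    (k = l ∨ k = l.reverse) := by
  constructor
  · rintro ⟨φ, hf, hadd, _, hsq⟩
    exact forward_dir k l hk hl hks hls φ hf hadd hsq
  · rintro (rfl | rfl)
    · exact ⟨id, Set.bijOn_id _, fun _ _ _ _ => rfl, fun _ _ _ => rfl, fun _ _ => rfl⟩
    · exact backward_rev l hls
end
end

section
/- Let A ⊆ M_n(ℂ) be a block upper-triangular subalgebra and let φ : A → M_n(ℂ) be a continuous map which preserves commutativity and spectrum and which fixes every diagonal matrix (φ(D) = D for all diagonal D). Then φ is homogeneous: φ(αA) = αφ(A) for every α ∈ ℂ and every A ∈ A. -/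
open Matrix

noncomputable section

open Polynomial in
/-- Nonvanishing of det of the derivative of the charpoly at M forces n distinct eigenvalues. -/
theorem ncard_spectrum_of_det {n : ℕ} (M : Matrix (Fin n) (Fin n) ℂ)
    (h : (aeval M (derivative M.charpoly)).det ≠ 0) : (spectrum ℂ M).ncard = n := by
  have hspec : ∀ x, x ∈ spectrum ℂ M ↔ x ∈ M.charpoly.roots := by
    intro x
    rw [Matrix.mem_spectrum_iff_isRoot_charpoly, mem_roots M.charpoly_monic.ne_zero]
  have hnd : M.charpoly.roots.Nodup := by
    rw [Multiset.nodup_iff_count_le_one]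
    intro a
    by_contra hc
    push Not at hc
    rw [count_roots, one_lt_rootMultiplicity_iff_isRoot M.charpoly_monic.ne_zero] at hc
    obtain ⟨h1, h2⟩ := hc
    apply h
    obtain ⟨q, hq⟩ := dvd_iff_isRoot.mpr h2
    rw [hq, map_mul, Matrix.det_mul]
    have : (aeval M (X - C a)).det = 0 := by
      have h3 : a ∈ spectrum ℂ M := Matrix.mem_spectrum_iff_isRoot_charpoly.mpr h1
      rw [spectrum.mem_iff, Matrix.isUnit_iff_isUnit_det, isUnit_iff_ne_zero, not_not] at h3
      rw [← neg_sub, Matrix.det_neg, mul_eq_zero] at h3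
      simp at h3
      simpa using h3
    rw [this, zero_mul]
  have : spectrum ℂ M = (M.charpoly.roots.toFinset : Set ℂ) := by
    ext x; simp only [hspec, Finset.mem_coe, Multiset.mem_toFinset]
  rw [this, Set.ncard_coe_finset, Multiset.toFinset_card_of_nodup hnd,
    IsAlgClosed.card_roots_eq_natDegree, Matrix.charpoly_natDegree_eq_dim, Fintype.card_fin]

open Polynomial in
theorem det_diag_ne_zero {n : ℕ} (d : Fin n → ℂ) (hd : Function.Injective d) :
    (aeval (Matrix.diagonal d) (derivative (Matrix.diagonal d).charpoly)).det ≠ 0 := by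
  have h1 : ∀ q : ℂ[X], aeval (Matrix.diagonal d) q = Matrix.diagonal (fun i => q.eval (d i)) := by
    intro q
    have := Polynomial.aeval_algHom_apply (Matrix.diagonalAlgHom (n := Fin n) (α := ℂ) ℂ) d q
    simp only [Matrix.diagonalAlgHom_apply] at this
    rw [this]
    congr 1
    ext i
    have h := Polynomial.aeval_algHom_apply (Pi.evalAlgHom ℂ (fun _ : Fin n => ℂ) i) d q
    rw [Pi.evalAlgHom_apply, Pi.evalAlgHom_apply, Polynomial.coe_aeval_eq_eval] at h
    exact h.symm
  rw [h1, Matrix.det_diagonal, Finset.prod_ne_zero_iff]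
  intro i _
  rw [Matrix.charpoly_diagonal, derivative_prod_finset, eval_finsetSum, Finset.sum_eq_single i]
  · simp [eval_prod, Finset.prod_ne_zero_iff, sub_ne_zero]
    intro j hj hji
    exact hj (hd hji.symm)
  · intro j _ hj
    simp only [eval_mul, eval_prod, mul_eq_zero]
    left
    exact Finset.prod_eq_zero (Finset.mem_erase.mpr ⟨hj.symm, Finset.mem_univ i⟩) (by simp)
  · simp

open Polynomial in
/-- The segment towards a diagonal matrix with distinct entries is generically regular. -/
theorem eventually_ncard {n : ℕ} (A : Matrix (Fin n) (Fin n) ℂ) (d : Fin n → ℂ)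
    (hd : Function.Injective d) :
    ∀ᶠ t in nhdsWithin (0 : ℂ) {0}ᶜ,
      (spectrum ℂ (A + t • (Matrix.diagonal d - A))).ncard = n := by
  let N : Matrix (Fin n) (Fin n) ℂ[X] :=
    A.map C + (X : ℂ[X]) • (Matrix.diagonal d - A).map C
  let p : ℂ[X] := (aeval N (derivative N.charpoly)).det
  have hN : ∀ t, (evalRingHom t).mapMatrix N = A + t • (Matrix.diagonal d - A) := by
    intro t; ext i j; simp [N]
  have hp : ∀ t, p.eval t = (aeval (A + t • (Matrix.diagonal d - A))
      (derivative (A + t • (Matrix.diagonal d - A)).charpoly)).det := by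
    intro t
    rw [← hN]
    change evalRingHom t _ = _
    rw [RingHom.map_det]
    congr 1
    have h2 : ((evalRingHom t).mapMatrix N).charpoly = N.charpoly.map (evalRingHom t) :=
      Matrix.charpoly_map N (evalRingHom t)
    rw [h2, derivative_map, aeval_def, aeval_def, hom_eval₂, eval₂_map]
    congr 1
    ext a i j <;> simp [Matrix.algebraMap_matrix_apply] <;> split_ifs <;> simp
  have hp0 : p ≠ 0 := by
    intro h0
    have := hp 1
    rw [h0] at this
    simp only [eval_zero, one_smul, add_sub_cancel] at this
    exact det_diag_ne_zero d hd this.symm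
  have hfin : ∀ᶠ t in nhdsWithin (0 : ℂ) {0}ᶜ, t ∉ ((p.roots.toFinset : Set ℂ) \ {0}) := by
    apply mem_nhdsWithin_of_mem_nhds
    apply IsOpen.mem_nhds
    · exact ((p.roots.toFinset.finite_toSet.subset Set.sdiff_subset).isClosed).isOpen_compl
    · simp
  filter_upwards [hfin, self_mem_nhdsWithin] with t ht ht0
  apply ncard_spectrum_of_det
  rw [← hp]
  intro h
  apply ht
  refine ⟨?_, ht0⟩
  simp [hp0, h]

/-- A matrix with n distinct eigenvalues is diagonalizable. -/
theorem exists_diag_s15 {n : ℕ} (B : Matrix (Fin n) (Fin n) ℂ) (h : (spectrum ℂ B).ncard = n) :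
    ∃ (P : Matrix (Fin n) (Fin n) ℂ) (d : Fin n → ℂ), IsUnit P ∧ Function.Injective d ∧
      B * P = P * Matrix.diagonal d := by
  have hfin : (spectrum ℂ B).Finite := Matrix.finite_spectrum B
  have := hfin.to_subtype
  let e : spectrum ℂ B ≃ Fin n := Finite.equivFinOfCardEq (by rw [Nat.card_coe_set_eq, h])
  let d : Fin n → ℂ := fun i => (e.symm i : ℂ)
  have hd : Function.Injective d := Subtype.val_injective.comp e.symm.injective
  have hv : ∀ i, ∃ v, Module.End.HasEigenvector (Matrix.toLin' B) (d i) v := by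
    intro i
    apply Module.End.HasEigenvalue.exists_hasEigenvector
    rw [Module.End.hasEigenvalue_iff_mem_spectrum, Matrix.spectrum_toLin']
    exact (e.symm i).2
  choose v hv using hv
  have hli := Module.End.eigenvectors_linearIndependent' (Matrix.toLin' B) d hd v hv
  refine ⟨(Matrix.of v)ᵀ, d, ?_, hd, ?_⟩
  · rw [← Matrix.linearIndependent_cols_iff_isUnit]
    exact hli
  · ext i j
    rw [Matrix.mul_diagonal]
    have := congrFun (hv j).apply_eq_smul i
    rw [Matrix.toLin'_apply] at this
    simpa [Matrix.mul_apply, Matrix.mulVec, dotProduct, mul_comm] using this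

theorem commute_diag {n : ℕ} (d : Fin n → ℂ) (hd : Function.Injective d)
    (C : Matrix (Fin n) (Fin n) ℂ) (h : C * Matrix.diagonal d = Matrix.diagonal d * C) :
    C = Matrix.diagonal (fun i => C i i) := by
  ext i j
  by_cases hij : i = j
  · subst hij; simp
  · rw [Matrix.diagonal_apply_ne _ hij]
    have := congrFun (congrFun h i) j
    rw [Matrix.mul_diagonal, Matrix.diagonal_mul] at this
    have h2 : C i j * (d j - d i) = 0 := by linear_combination this
    rcases mul_eq_zero.mp h2 with h3 | h3
    · exact h3
    · exact absurd (hd (sub_eq_zero.mp h3)).symm hij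

theorem key_curve {n : ℕ} (F : ℂ → Matrix (Fin n) (Fin n) ℂ)
    (hF : ContinuousOn F {0}ᶜ) (hn : (spectrum ℂ (F 1)).ncard = n)
    (hc : ∀ a, F a * F 1 = F 1 * F a)
    (hs : ∀ a, a ≠ 0 → ∀ x ∈ spectrum ℂ (F a), a⁻¹ * x ∈ spectrum ℂ (F 1)) :
    ∀ a, a ≠ 0 → F a = a • F 1 := by
  obtain ⟨P, d, hP, hd, hB⟩ := exists_diag_s15 (F 1) hn
  obtain ⟨u, rfl⟩ := hP
  set P : Matrix (Fin n) (Fin n) ℂ := (u : Matrix (Fin n) (Fin n) ℂ) with hPdef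
  set Q : Matrix (Fin n) (Fin n) ℂ := ((u⁻¹ : (Matrix (Fin n) (Fin n) ℂ)ˣ) :
    Matrix (Fin n) (Fin n) ℂ) with hQdef
  have hPQ : P * Q = 1 := by simp [P, Q]
  have hQP : Q * P = 1 := by simp [P, Q]
  have hD : Q * F 1 * P = Matrix.diagonal d := by
    rw [mul_assoc, hB, ← mul_assoc, hQP, one_mul]
  let G : ℂ → Matrix (Fin n) (Fin n) ℂ := fun a => Q * F a * P
  have hGF : ∀ a, F a = P * G a * Q := by
    intro a
    calc F a = (P * Q) * F a * (P * Q) := by rw [hPQ]; simp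
      _ = P * G a * Q := by simp only [G, mul_assoc]
  have hGm : ∀ a b, G a * G b = Q * (F a * F b) * P := by
    intro a b
    calc G a * G b = Q * F a * (P * Q) * F b * P := by simp only [G, mul_assoc]
      _ = _ := by rw [hPQ]; simp only [mul_assoc, one_mul]
  have hG1 : G 1 = Matrix.diagonal d := hD
  have hGd : ∀ a, G a = Matrix.diagonal (fun i => G a i i) := by
    intro a
    apply commute_diag d hd
    rw [← hG1, hGm, hGm, hc]
  have hGs : ∀ a i, G a i i ∈ spectrum ℂ (F a) := by
    intro a i
    have h1 : spectrum ℂ (F a) = spectrum ℂ (G a) := by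
      rw [hGF a]; exact spectrum.units_conjugate
    rw [h1, hGd a, spectrum_diagonal]
    exact ⟨i, by simp⟩
  have hGc : ContinuousOn G {0}ᶜ := by
    have : Continuous fun M : Matrix (Fin n) (Fin n) ℂ => Q * M * P := by fun_prop
    exact this.comp_continuousOn hF
  have hpre : IsPreconnected ({0}ᶜ : Set ℂ) :=
    (isConnected_compl_singleton_of_one_lt_rank (by simp) 0).isPreconnected
  have hfin : (spectrum ℂ (F 1)).Finite := Matrix.finite_spectrum _
  have hent : ∀ a, a ≠ 0 → ∀ i, G a i i = a * d i := by
    intro a ha i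
    have hcont : ContinuousOn (fun a => a⁻¹ * G a i i) {0}ᶜ := by
      apply ContinuousOn.mul
      · exact continuousOn_inv₀
      · have : Continuous fun M : Matrix (Fin n) (Fin n) ℂ => M i i := by fun_prop
        exact this.comp_continuousOn hGc
    have himg := hpre.image _ hcont
    have hsub : ((fun a => a⁻¹ * G a i i) '' {0}ᶜ).Subsingleton := by
      have hf2 : ((fun a => a⁻¹ * G a i i) '' {0}ᶜ).Finite := by
        apply hfin.subset
        rintro _ ⟨b, hb, rfl⟩
        exact hs b hb _ (hGs b i)
      exact (Set.Finite.countable hf2).isTotallyDisconnected _ subset_rfl himg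
    have h2 := hsub ⟨a, ha, rfl⟩ ⟨1, by simp, rfl⟩
    simp only [hG1, Matrix.diagonal_apply_eq, inv_one, one_mul] at h2
    rw [← h2]; field_simp
  intro a ha
  have : G a = a • G 1 := by
    rw [hGd a, hG1]
    ext i j
    by_cases hij : i = j
    · subst hij; simp [hent a ha]
    · simp [Matrix.diagonal_apply_ne _ hij]
  rw [hGF a, this, hGF 1]
  simp

theorem homogeneity {n : ℕ} (𝒜 : Set (Matrix (Fin n) (Fin n) ℂ))
    (h𝒜 : IsBlockUT n 𝒜)
    (φ : Matrix (Fin n) (Fin n) ℂ → Matrix (Fin n) (Fin n) ℂ)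
    (hcont : ContinuousOn φ 𝒜)
    (hcomm : ∀ X ∈ 𝒜, ∀ Y ∈ 𝒜, X * Y = Y * X → φ X * φ Y = φ Y * φ X)
    (hspec : ∀ X ∈ 𝒜, spectrum ℂ (φ X) = spectrum ℂ X)
    (hfix : ∀ d : Fin n → ℂ, φ (Matrix.diagonal d) = Matrix.diagonal d) :
    ∀ (α : ℂ), ∀ A ∈ 𝒜, φ (α • A) = α • φ A := by
  obtain ⟨k, -, -, rfl⟩ := h𝒜
  have hlin : ∀ X ∈ blockAlg n k, ∀ Y ∈ blockAlg n k, ∀ t : ℂ, X + t • Y ∈ blockAlg n k := by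
    intro X hX Y hY t i j hij
    simp [hX i j hij, hY i j hij]
  have hsm : ∀ X ∈ blockAlg n k, ∀ t : ℂ, t • X ∈ blockAlg n k := by
    intro X hX t i j hij
    simp [hX i j hij]
  have hdiag : ∀ d : Fin n → ℂ, Matrix.diagonal d ∈ blockAlg n k := by
    intro d i j hij
    apply Matrix.diagonal_apply_ne
    rintro rfl
    exact lt_irrefl _ hij
  have hreg : ∀ A ∈ blockAlg n k, (spectrum ℂ A).ncard = n → ∀ a : ℂ, a ≠ 0 →
      φ (a • A) = a • φ A := by
    intro A hA hn a ha
    have := key_curve (fun a => φ (a • A)) ?_ ?_ ?_ ?_ a ha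
    · simpa using this
    · apply hcont.comp (Continuous.continuousOn (by fun_prop))
      intro t _
      exact hsm A hA t
    · simp only [one_smul]
      rw [hspec A hA, hn]
    · intro b
      apply hcomm _ (hsm A hA b) _ (hsm A hA 1)
      simp
    · intro b hb x hx
      simp only [one_smul] at hx ⊢
      rw [hspec _ (hsm A hA b)] at hx
      rw [hspec _ hA]
      have h3 : x = (Units.mk0 b hb) • (b⁻¹ * x) := by
        simp [Units.smul_def, hb]
      rw [h3] at hx
      exact spectrum.smul_mem_smul_iff.mp hx
  intro α A hA
  by_cases hα : α = 0
  · subst hα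
    have := hfix 0
    simpa using this
  let d : Fin n → ℂ := fun i => ((i : ℕ) : ℂ)
  have hd : Function.Injective d := by
    intro i j hij
    simpa [d, Fin.ext_iff] using hij
  let g : ℂ → Matrix (Fin n) (Fin n) ℂ := fun t => A + t • (Matrix.diagonal d - A)
  have hg : Continuous g := by fun_prop
  have hgm : ∀ t, g t ∈ blockAlg n k := by
    intro t
    apply hlin A hA
    have := hlin _ (hdiag d) A hA (-1)
    simpa [sub_eq_add_neg] using this
  have hg0 : g 0 = A := by simp [g]
  have c1 : Continuous fun t => φ (α • g t) := by
    rw [← continuousOn_univ]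
    exact hcont.comp (by fun_prop) (fun t _ => hsm _ (hgm t) α)
  have c2 : Continuous fun t => α • φ (g t) := by
    have c3 : Continuous fun t => φ (g t) := by
      rw [← continuousOn_univ]
      exact hcont.comp (by fun_prop) (fun t _ => hgm t)
    exact c3.const_smul α
  have t1 := (c1.tendsto 0).mono_left (nhdsWithin_le_nhds (s := {0}ᶜ))
  have t2 := (c2.tendsto 0).mono_left (nhdsWithin_le_nhds (s := {0}ᶜ))
  have he : (fun t => φ (α • g t)) =ᶠ[nhdsWithin (0 : ℂ) {0}ᶜ] (fun t => α • φ (g t)) := by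
    filter_upwards [eventually_ncard A d hd] with t ht
    exact hreg _ (hgm t) ht α hα
  have := tendsto_nhds_unique (t1.congr' he) t2
  simpa only [hg0] using this
end
end

section
/- Let A ⊆ M_n(ℂ) be a block upper-triangular subalgebra and let φ : A → M_n(ℂ) be a continuous injective map which preserves commutativity and spectrum and which fixes every diagonal matrix (φ(D) = D for all diagonal D). Then for every matrix R ∈ A of rank one, the matrix φ(R) also has rank one (and σ(φ(R)) = σ(R)). -/
open Matrix

noncomputable section

open Matrix Filter Topology

theorem aux_diag {n : ℕ} (M : Matrix (Fin n) (Fin n) ℂ) (D : Fin n → ℂ)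
    (hD : Function.Injective D) (hs : spectrum ℂ M = Set.range D) :
    ∃ T : (Matrix (Fin n) (Fin n) ℂ)ˣ, M * T.val = T.val * diagonal D := by
  have h1 : ∀ i, ∃ v, Module.End.HasEigenvector (Matrix.toLin' M) (D i) v := by
    intro i
    apply Module.End.HasEigenvalue.exists_hasEigenvector
    rw [Module.End.hasEigenvalue_iff_mem_spectrum, Matrix.spectrum_toLin', hs]
    exact ⟨i, rfl⟩
  choose v hv using h1
  have h2 := Module.End.eigenvectors_linearIndependent' _ D hD v hv
  let T : Matrix (Fin n) (Fin n) ℂ := Matrix.of fun i j => v j i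
  have hT : IsUnit T := by
    rw [← Matrix.linearIndependent_cols_iff_isUnit]
    exact h2
  obtain ⟨u, hu⟩ := hT
  refine ⟨u, ?_⟩
  rw [hu]
  ext i j
  rw [Matrix.mul_diagonal]
  have h3 := congrFun (hv j).apply_eq_smul i
  simp only [Matrix.toLin'_apply, Pi.smul_apply, smul_eq_mul] at h3
  rw [mul_comm, show T i j = v j i from rfl, ← h3]
  rfl

theorem aux_trace {n : ℕ} (M : Matrix (Fin n) (Fin n) ℂ) (D : Fin n → ℂ)
    (hD : Function.Injective D) (hs : spectrum ℂ M = Set.range D) :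
    M.trace = ∑ i, D i := by
  obtain ⟨T, hT⟩ := aux_diag M D hD hs
  have h : M = T.val * diagonal D * T⁻¹.val := by
    rw [← hT, mul_assoc, Units.mul_inv, mul_one]
  rw [h, Matrix.trace_mul_comm, ← mul_assoc, Units.inv_mul, one_mul, Matrix.trace_diagonal]

theorem aux_comm {n : ℕ} (M B : Matrix (Fin n) (Fin n) ℂ) (D : Fin n → ℂ)
    (hD : Function.Injective D) (hs : spectrum ℂ M = Set.range D) (hc : M * B = B * M) :
    ∃ (T : (Matrix (Fin n) (Fin n) ℂ)ˣ) (d : Fin n → ℂ),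
      B = T.val * diagonal d * T⁻¹.val := by
  obtain ⟨T, hT⟩ := aux_diag M D hD hs
  set C := T⁻¹.val * B * T.val with hC
  have hM : M = T.val * diagonal D * T⁻¹.val := by
    rw [← hT, mul_assoc, Units.mul_inv, mul_one]
  have hB : B = T.val * C * T⁻¹.val := by
    simp [hC, mul_assoc]
  have hDC : diagonal D * C = C * diagonal D := by
    have e1 : diagonal D = T⁻¹.val * M * T.val := by
      simp [hM, mul_assoc]
    rw [e1, hC]
    calc T⁻¹.val * M * T.val * (T⁻¹.val * B * T.val) = T⁻¹.val * (M * B) * T.val := by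
          simp [mul_assoc]
      _ = _ := by rw [hc]; simp [mul_assoc]
  refine ⟨T, C.diag, ?_⟩
  have : diagonal C.diag = C := by
    ext i j
    by_cases hij : i = j
    · subst hij; simp
    · rw [diagonal_apply_ne _ hij]
      have := congrFun (congrFun hDC i) j
      rw [Matrix.diagonal_mul, Matrix.mul_diagonal] at this
      have h0 : (D i - D j) * C i j = 0 := by linear_combination this
      rcases mul_eq_zero.1 h0 with h | h
      · exact absurd (hD (sub_eq_zero.1 h)) hij
      · exact h.symm
  rw [this]; exact hB

theorem aux_rank {n : ℕ} (B : Matrix (Fin n) (Fin n) ℂ) (T : (Matrix (Fin n) (Fin n) ℂ)ˣ)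
    (d : Fin n → ℂ) (hB : B = T.val * diagonal d * T⁻¹.val) (μ : ℂ) (hμ : μ ≠ 0)
    (htr : B.trace = μ) (hs : spectrum ℂ B ⊆ {0, μ}) : B.rank = 1 := by
  classical
  have hd : ∀ i, d i = 0 ∨ d i = μ := by
    intro i
    have h : d i ∈ spectrum ℂ B := by
      rw [hB, spectrum.units_conjugate, spectrum_diagonal]
      exact ⟨i, rfl⟩
    simpa using hs h
  have hr : B.rank = (diagonal d).rank := by
    rw [hB, Matrix.rank_mul_eq_left_of_isUnit_det, Matrix.rank_mul_eq_right_of_isUnit_det]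
    · exact (Matrix.isUnit_iff_isUnit_det _).1 T.isUnit
    · exact (Matrix.isUnit_iff_isUnit_det _).1 T⁻¹.isUnit
  rw [hr, Matrix.rank_diagonal, Fintype.card_subtype]
  rw [hB, Matrix.trace_mul_comm, ← mul_assoc, Units.inv_mul, one_mul, Matrix.trace_diagonal] at htr
  have : ∑ i, d i = ∑ i, if d i ≠ 0 then μ else 0 := by
    apply Finset.sum_congr rfl
    intro i _
    rcases hd i with h | h <;> simp [h, hμ]
  rw [this, ← Finset.sum_filter, Finset.sum_const, nsmul_eq_mul] at htr
  have h1 := mul_right_cancel₀ hμ (htr.trans (one_mul μ).symm)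
  exact_mod_cast h1

theorem aux_S {n : ℕ} (b : Fin n → ℕ) (x y : Fin n → ℂ)
    (hR : (vecMulVec x y).BlockTriangular b) (hμ : y ⬝ᵥ x ≠ 0) :
    ∃ (S : (Matrix (Fin n) (Fin n) ℂ)ˣ) (l : Fin n), S.val.BlockTriangular b ∧
      S⁻¹.val.BlockTriangular b ∧
      vecMulVec x y = S.val * diagonal (Pi.single l (y ⬝ᵥ x)) * S⁻¹.val := by
  obtain ⟨l, -, hl⟩ := Finset.exists_ne_zero_of_sum_ne_zero hμ
  have hyl : y l ≠ 0 := left_ne_zero_of_mul hl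
  have hxl : x l ≠ 0 := right_ne_zero_of_mul hl
  have hy : ∀ k, b k < b l → y k = 0 := by
    intro k hk
    have := hR hk
    rw [vecMulVec_apply] at this
    exact (mul_eq_zero.1 this).resolve_left hxl
  have hx : ∀ k, b l < b k → x k = 0 := by
    intro k hk
    have := hR hk
    rw [vecMulVec_apply] at this
    exact (mul_eq_zero.1 this).resolve_right hyl
  let S : Matrix (Fin n) (Fin n) ℂ := Matrix.of fun i k =>
    if k = l then x i else (if i = k then 1 else 0) - (if i = l then y k / y l else 0)
  have hSdef : ∀ i k, S i k =
    if k = l then x i else (if i = k then 1 else 0) - (if i = l then y k / y l else 0) :=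
    fun i k => rfl
  have hSb : S.BlockTriangular b := by
    intro i k hik
    rw [hSdef]
    by_cases hk : k = l
    · subst hk; simp [hx i hik]
    · have : i ≠ k := by rintro rfl; exact lt_irrefl _ hik
      by_cases hi : i = l
      · subst hi; simp [hk, this, hy k hik]
      · simp [hk, hi, this]
  have hyS : y ᵥ* S = Pi.single l (y ⬝ᵥ x) := by
    ext k
    by_cases hk : k = l
    · subst hk
      simp [vecMul, dotProduct, hSdef]
    · simp [vecMul, dotProduct, hSdef, hk, mul_sub, Finset.sum_sub_distrib]
      field_simp
      simp
  have hSu : IsUnit S := by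
    rw [Matrix.isUnit_iff_isUnit_det, isUnit_iff_ne_zero]
    intro h0
    obtain ⟨v, hv0, hv⟩ := Matrix.exists_mulVec_eq_zero_iff.2 h0
    apply hv0
    have h1 : (y ᵥ* S) ⬝ᵥ v = 0 := by
      rw [← Matrix.dotProduct_mulVec, hv, dotProduct_zero]
    rw [hyS, single_dotProduct] at h1
    have hvl : v l = 0 := (mul_eq_zero.1 h1).resolve_left hμ
    ext i
    by_cases hi : i = l
    · subst hi; exact hvl
    · have h2 := congrFun hv i
      have h3 : (S *ᵥ v) i = v i := by
        simp only [mulVec, dotProduct]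
        rw [Finset.sum_eq_single i]
        · simp [hSdef, hi]
        · intro k _ hk
          by_cases hkl : k = l
          · subst hkl; simp [hvl]
          · simp [hSdef, hi, hkl, hk.symm]
        · simp
      rw [← h3, h2]
  obtain ⟨u, hu⟩ := hSu
  refine ⟨u, l, by rw [hu]; exact hSb, ?_, ?_⟩
  · rw [Matrix.coe_units_inv, hu]
    have : Invertible S := by rw [← hu]; exact u.invertible
    exact Matrix.blockTriangular_inv_of_blockTriangular hSb
  · have : vecMulVec x y * u.val = u.val * diagonal (Pi.single l (y ⬝ᵥ x)) := by
      rw [hu]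
      ext i k
      rw [Matrix.mul_diagonal, Matrix.vecMulVec_mul, hyS, vecMulVec_apply]
      by_cases hk : k = l
      · subst hk; simp [hSdef]
      · simp [hk]
    rw [← this, mul_assoc, Units.mul_inv, mul_one]

theorem aux_inj {n : ℕ} (l : Fin n) (μ : ℂ) :
    ∀ᶠ t : ℂ in 𝓝[≠] 0, Function.Injective
      (fun i : Fin n => (Pi.single l μ : Fin n → ℂ) i + t * ((i : ℕ) : ℂ)) := by
  have : ∀ i j : Fin n, i ≠ j → ∀ᶠ t : ℂ in 𝓝[≠] 0,
      (Pi.single l μ : Fin n → ℂ) i + t * ((i : ℕ) : ℂ) ≠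
      (Pi.single l μ : Fin n → ℂ) j + t * ((j : ℕ) : ℂ) := by
    intro i j hij
    have hd : ((i : ℕ) : ℂ) - ((j : ℕ) : ℂ) ≠ 0 := by
      rw [sub_ne_zero]
      intro h
      exact hij (Fin.ext (by exact_mod_cast h))
    apply nhdsNE_le_cofinite (0 : ℂ)
    have hf := (Set.finite_singleton (((Pi.single l μ : Fin n → ℂ) j -
      (Pi.single l μ : Fin n → ℂ) i) / (((i : ℕ) : ℂ) - ((j : ℕ) : ℂ)))).compl_mem_cofinite
    filter_upwards [hf] with t ht h
    apply ht
    rw [Set.mem_singleton_iff, eq_div_iff hd]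
    linear_combination h
  have h2 : ∀ᶠ t : ℂ in 𝓝[≠] 0, ∀ i j : Fin n, i ≠ j →
      (Pi.single l μ : Fin n → ℂ) i + t * ((i : ℕ) : ℂ) ≠
      (Pi.single l μ : Fin n → ℂ) j + t * ((j : ℕ) : ℂ) := by
    rw [eventually_all]; intro i
    rw [eventually_all]; intro j
    by_cases hij : i = j
    · simp [hij]
    · filter_upwards [this i j hij] with t ht _ using ht
  filter_upwards [h2] with t ht i j hij
  by_contra hne
  exact ht i j hne hij

theorem aux_nonnil {n : ℕ} (b : Fin n → ℕ)
    (φ : Matrix (Fin n) (Fin n) ℂ → Matrix (Fin n) (Fin n) ℂ)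
    (hcont : ContinuousOn φ {X | X.BlockTriangular b})
    (hcomm : ∀ X, X.BlockTriangular b → ∀ Y, Y.BlockTriangular b →
      X * Y = Y * X → φ X * φ Y = φ Y * φ X)
    (hspec : ∀ X, X.BlockTriangular b → spectrum ℂ (φ X) = spectrum ℂ X)
    (x y : Fin n → ℂ) (hR : (vecMulVec x y).BlockTriangular b) (hμ : y ⬝ᵥ x ≠ 0) :
    (φ (vecMulVec x y)).rank = 1 := by
  obtain ⟨S, l, hS, hS', hRS⟩ := aux_S b x y hR hμ
  set μ := y ⬝ᵥ x
  set R := vecMulVec x y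
  let D : ℂ → Fin n → ℂ := fun t i => (Pi.single l μ : Fin n → ℂ) i + t * ((i : ℕ) : ℂ)
  let X : ℂ → Matrix (Fin n) (Fin n) ℂ := fun t => S.val * diagonal (D t) * S⁻¹.val
  have hXb : ∀ t, (X t).BlockTriangular b := fun t =>
    (hS.mul (blockTriangular_diagonal _)).mul hS'
  have hX0 : X 0 = R := by
    rw [hRS]
    have : D 0 = Pi.single l μ := by ext i; simp [D]
    simp only [X, this]
  have hXs : ∀ t, spectrum ℂ (X t) = Set.range (D t) := by
    intro t
    rw [spectrum.units_conjugate, spectrum_diagonal]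
  have hXc : Continuous X := by
    have : Continuous fun t => diagonal (D t) := by
      apply Continuous.matrix_diagonal
      fun_prop
    exact (continuous_const.matrix_mul this).matrix_mul continuous_const
  have hφc : Continuous fun t => φ (X t) := hcont.comp_continuous hXc hXb
  have hinj := aux_inj l μ
  have htr : (φ R).trace = μ := by
    have h1 : Tendsto (fun t => (φ (X t)).trace) (𝓝[≠] 0) (𝓝 (φ (X 0)).trace) :=
      (hφc.matrix_trace.tendsto 0).mono_left nhdsWithin_le_nhds
    have h2 : Tendsto (fun t => ∑ i, D t i) (𝓝[≠] 0) (𝓝 (∑ i, D 0 i)) := by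
      have : Continuous fun t => ∑ i, D t i := by fun_prop
      exact (this.tendsto 0).mono_left nhdsWithin_le_nhds
    have h3 : (fun t => (φ (X t)).trace) =ᶠ[𝓝[≠] 0] fun t => ∑ i, D t i := by
      filter_upwards [hinj] with t ht
      exact aux_trace _ _ ht ((hspec _ (hXb t)).trans (hXs t))
    have h4 := tendsto_nhds_unique (h1.congr' h3) h2
    rw [← hX0, h4]
    simp [D]
  obtain ⟨t, ht⟩ := hinj.exists
  have hc : X t * R = R * X t := by
    rw [hRS]
    calc S.val * diagonal (D t) * S⁻¹.val * (S.val * diagonal (Pi.single l μ) * S⁻¹.val)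
        = S.val * (diagonal (D t) * diagonal (Pi.single l μ)) * S⁻¹.val := by simp only [mul_assoc, Units.inv_mul_cancel_left]
      _ = S.val * (diagonal (Pi.single l μ) * diagonal (D t)) * S⁻¹.val := by
          rw [diagonal_mul_diagonal, diagonal_mul_diagonal]; simp only [mul_comm]
      _ = _ := by simp only [X, mul_assoc, Units.inv_mul_cancel_left]
  obtain ⟨T, d, hT⟩ := aux_comm _ _ _ ht ((hspec _ (hXb t)).trans (hXs t))
    (hcomm _ (hXb t) _ hR hc)
  refine aux_rank _ T d hT μ hμ htr ?_
  rw [hspec _ hR, ← hX0, hXs]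
  rintro _ ⟨i, rfl⟩
  by_cases hi : i = l
  · subst hi; simp [D]
  · simp [D, hi]

theorem aux_vmv {n : ℕ} (R : Matrix (Fin n) (Fin n) ℂ) (h : R.rank ≤ 1) :
    ∃ x y, R = vecMulVec x y := by
  rw [Matrix.rank, finrank_le_one_iff] at h
  obtain ⟨v, hv⟩ := h
  choose c hc using fun j : Fin n => hv ⟨R *ᵥ Pi.single j 1, ⟨Pi.single j 1, rfl⟩⟩
  refine ⟨v, c, ?_⟩
  ext i j
  have := congrFun (congrArg Subtype.val (hc j)) i
  simp at this
  rw [vecMulVec_apply, mul_comm]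
  exact this.symm

theorem aux_main {n : ℕ} (b : Fin n → ℕ)
    (φ : Matrix (Fin n) (Fin n) ℂ → Matrix (Fin n) (Fin n) ℂ)
    (hcont : ContinuousOn φ {X | X.BlockTriangular b})
    (hcomm : ∀ X, X.BlockTriangular b → ∀ Y, Y.BlockTriangular b →
      X * Y = Y * X → φ X * φ Y = φ Y * φ X)
    (hspec : ∀ X, X.BlockTriangular b → spectrum ℂ (φ X) = spectrum ℂ X)
    (R : Matrix (Fin n) (Fin n) ℂ) (hR : R.BlockTriangular b) (hr : R.rank = 1)
    (hne : φ R ≠ 0) : (φ R).rank = 1 := by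
  obtain ⟨x, y, rfl⟩ := aux_vmv R hr.le
  by_cases hμ : y ⬝ᵥ x = 0
  swap
  · exact aux_nonnil b φ hcont hcomm hspec x y hR hμ
  have hy0 : ∃ j, y j ≠ 0 := by
    by_contra! h
    have : y = 0 := funext h
    simp [this] at hr
  obtain ⟨j, hj, hmin⟩ := (Set.toFinite {j | y j ≠ 0}).exists_minimalFor b _ hy0
  have hmin' : ∀ k, y k ≠ 0 → b j ≤ b k := by
    intro k hk
    by_contra! hlt
    exact absurd (hmin hk hlt.le) (not_le.2 hlt)
  let X : ℂ → Matrix (Fin n) (Fin n) ℂ := fun t => vecMulVec (x + t • Pi.single j 1) y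
  have hXb : ∀ t, (X t).BlockTriangular b := by
    intro t i k hik
    simp only [X, vecMulVec_apply, Pi.add_apply, Pi.smul_apply]
    by_cases hk : y k = 0
    · simp [hk]
    · have hij : i ≠ j := by
        rintro rfl
        exact absurd (hmin' k hk) (not_le.2 hik)
      have := hR hik
      rw [vecMulVec_apply] at this
      simp [hij, this]
  have hXc : Continuous X := by
    apply continuous_matrix
    intro i k
    simp only [X, vecMulVec_apply, Pi.add_apply, Pi.smul_apply]
    fun_prop
  have hφc : Continuous fun t => φ (X t) := hcont.comp_continuous hXc hXb
  have hX0 : X 0 = vecMulVec x y := by simp [X]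
  have hrk : ∀ t, t ≠ 0 → (φ (X t)).rank = 1 := by
    intro t ht
    apply aux_nonnil b φ hcont hcomm hspec _ _ (hXb t)
    rw [dotProduct_add, hμ]
    simp only [dotProduct_smul, dotProduct_single, smul_eq_mul, zero_add, mul_one]
    exact mul_ne_zero ht hj
  have hminor : ∀ i k p q, φ (X 0) i k * φ (X 0) p q = φ (X 0) i q * φ (X 0) p k := by
    intro i k p q
    have e : ∀ i k, Tendsto (fun t => φ (X t) i k) (𝓝[≠] 0) (𝓝 (φ (X 0) i k)) := fun i k =>
      ((hφc.matrix_elem i k).tendsto 0).mono_left nhdsWithin_le_nhds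
    refine tendsto_nhds_unique_of_eventuallyEq ((e i k).mul (e p q)) ((e i q).mul (e p k)) ?_
    filter_upwards [self_mem_nhdsWithin] with t ht
    obtain ⟨u, v, huv⟩ := aux_vmv _ (hrk t ht).le
    simp only [huv, vecMulVec_apply]
    ring
  rw [hX0] at hminor
  set B := φ (vecMulVec x y)
  obtain ⟨p, q, hpq⟩ : ∃ p q, B p q ≠ 0 := by
    by_contra! h
    exact hne (Matrix.ext h)
  have hB : B = vecMulVec (fun i => B i q) (fun k => B p k / B p q) := by
    ext i k
    rw [vecMulVec_apply]
    field_simp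
    exact hminor i k p q
  apply le_antisymm
  · rw [hB]; exact rank_vecMulVec_le _ _
  · rw [Nat.one_le_iff_ne_zero]
    intro h0
    apply hne
    rw [Matrix.rank, Submodule.finrank_eq_zero, LinearMap.range_eq_bot] at h0
    ext i k
    have := congrFun (LinearMap.congr_fun h0 (Pi.single k 1)) i
    simpa using this

theorem rank_one_preserved {n : ℕ} (𝒜 : Set (Matrix (Fin n) (Fin n) ℂ))
    (h𝒜 : IsBlockUT n 𝒜)
    (φ : Matrix (Fin n) (Fin n) ℂ → Matrix (Fin n) (Fin n) ℂ)
    (hcont : ContinuousOn φ 𝒜)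
    (hinj : Set.InjOn φ 𝒜)
    (hcomm : ∀ X ∈ 𝒜, ∀ Y ∈ 𝒜, X * Y = Y * X → φ X * φ Y = φ Y * φ X)
    (hspec : ∀ X ∈ 𝒜, spectrum ℂ (φ X) = spectrum ℂ X)
    (hfix : ∀ d : Fin n → ℂ, φ (Matrix.diagonal d) = Matrix.diagonal d) :
    ∀ R ∈ 𝒜, R.rank = 1 → (φ R).rank = 1 ∧ spectrum ℂ (φ R) = spectrum ℂ R := by
  obtain ⟨k, -, -, rfl⟩ := h𝒜
  have hA : blockAlg n k = {X | X.BlockTriangular fun i : Fin n => blockIdx k (i : ℕ)} := by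
    ext X
    exact ⟨fun h i j hij => h i j hij, fun h i j hij => h hij⟩
  rw [hA] at *
  intro R hR hr
  refine ⟨?_, hspec R hR⟩
  apply aux_main _ φ hcont hcomm hspec R hR hr
  intro h0
  have hz : φ 0 = 0 := by
    have := hfix 0
    simpa using this
  have : R = 0 := hinj hR (fun _ _ _ => rfl) (h0.trans hz.symm)
  simp [this] at hr
end
end

section
/- Let n ≥ 3, let A, B ⊆ M_n(ℂ) be block upper-triangular subalgebras, and let φ : A → B be a continuous injective map which preserves commutativity and spectrum. Then one of the following holds: (a) A ⊆ B and there exists an invertible T ∈ B such that φ(X) = T X T⁻¹ for all X ∈ A; or (b) A^⊙ ⊆ B and there exists an invertible T ∈ B such that φ(X) = T X^⊙ T⁻¹ for all X ∈ A, where X^⊙ := J Xᵗ J and J is the exchange matrix (J_{ij} = 1 iff i + j = n + 1). -/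
open Matrix

noncomputable section

set_option linter.unusedSectionVars false

section Infra

variable {ι : Type} [Fintype ι] [DecidableEq ι]

theorem aux_spec_diag (d : ι → ℂ) : spectrum ℂ (Matrix.diagonal d) = Set.range d := by
  ext r
  rw [Matrix.mem_spectrum_iff_isRoot_charpoly, Matrix.charpoly_diagonal]
  simp only [Polynomial.IsRoot, Polynomial.eval_prod, Finset.prod_eq_zero_iff]
  simp only [Finset.mem_univ, Polynomial.eval_sub, Polynomial.eval_X, Polynomial.eval_C, true_and,
    Set.mem_range, sub_eq_zero]
  exact ⟨fun ⟨i, h⟩ => ⟨i, h.symm⟩, fun ⟨i, h⟩ => ⟨i, h.symm⟩⟩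

theorem aux_spec_conj (S S' X : Matrix ι ι ℂ) (h : S * S' = 1) :
    spectrum ℂ (S * X * S') = spectrum ℂ X := by
  have h' : S' * S = 1 := mul_eq_one_comm.mp h
  let u : (Matrix ι ι ℂ)ˣ := ⟨S, S', h, h'⟩
  exact spectrum.units_conjugate (a := X) (u := u)

theorem aux_spec_transpose (X : Matrix ι ι ℂ) :
    spectrum ℂ Xᵀ = spectrum ℂ X := by
  ext r
  rw [Matrix.mem_spectrum_iff_isRoot_charpoly, Matrix.mem_spectrum_iff_isRoot_charpoly,
    Matrix.charpoly_transpose]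

theorem aux_eig (M : Matrix ι ι ℂ) (d : ι → ℂ) (hd : Function.Injective d)
    (h : ∀ i, d i ∈ spectrum ℂ M) :
    ∃ T T' : Matrix ι ι ℂ, T * T' = 1 ∧ M = T * Matrix.diagonal d * T' := by
  have h1 : ∀ i, ∃ v, Module.End.HasEigenvector (Matrix.toLin' M) (d i) v := by
    intro i
    apply Module.End.HasEigenvalue.exists_hasEigenvector
    rw [Module.End.hasEigenvalue_iff_mem_spectrum, Matrix.spectrum_toLin']
    exact h i
  choose v hv using h1
  have hli := Module.End.eigenvectors_linearIndependent' _ d hd v hv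
  let T : Matrix ι ι ℂ := Matrix.of fun i j => v j i
  have hT : IsUnit T := by
    rw [← Matrix.linearIndependent_cols_iff_isUnit]
    exact hli
  have hdet : IsUnit T.det := (Matrix.isUnit_iff_isUnit_det T).mp hT
  refine ⟨T, T⁻¹, Matrix.mul_nonsing_inv T hdet, ?_⟩
  have hMT : M * T = T * Matrix.diagonal d := by
    ext i j
    have := congrFun (hv j).apply_eq_smul i
    rw [Matrix.toLin'_apply] at this
    rw [Matrix.mul_diagonal]
    simp only [Matrix.mulVec, dotProduct, Pi.smul_apply, smul_eq_mul] at this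
    simp only [Matrix.mul_apply, T, Matrix.of_apply]
    rw [this, mul_comm]
  rw [← hMT, Matrix.mul_assoc, Matrix.mul_nonsing_inv T hdet, Matrix.mul_one]

/-- continuous selection of an eigenvalue along a connected family is constant. -/
theorem aux_select (U : Set ℂ) (hU : IsPreconnected U) (f : ℂ → ℂ) (w : ι → ℂ → ℂ)
    (hf : Continuous f) (hw : ∀ i, Continuous (w i))
    (hinj : ∀ z ∈ U, Function.Injective (fun i => w i z))
    (hsel : ∀ z ∈ U, ∃ k, f z = w k z) (i : ι) (z₀ : ℂ) (hz₀ : z₀ ∈ U) (h0 : f z₀ = w i z₀) :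
    ∀ z ∈ U, f z = w i z := by
  rw [isPreconnected_closed_iff] at hU
  by_contra! hcon
  obtain ⟨z, hz, hzne⟩ := hcon
  have := hU {z | f z = w i z} (⋃ k ∈ {k | k ≠ i}, {z | f z = w k z})
    (isClosed_eq hf (hw i))
    ((Set.toFinite _).isClosed_biUnion (fun k _ => isClosed_eq hf (hw k)))
    (by
      intro y hy
      obtain ⟨k, hk⟩ := hsel y hy
      by_cases hki : k = i
      · left; subst hki; exact hk
      · right
        simp only [Set.mem_iUnion]
        exact ⟨k, hki, hk⟩)
    ⟨z₀, hz₀, h0⟩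
    (by
      obtain ⟨k, hk⟩ := hsel z hz
      refine ⟨z, hz, ?_⟩
      simp only [Set.mem_iUnion]
      refine ⟨k, ?_, hk⟩
      rintro rfl
      exact hzne hk)
  obtain ⟨y, hy, hy1, hy2⟩ := this
  simp only [Set.mem_iUnion] at hy2
  obtain ⟨k, hki, hk⟩ := hy2
  apply hki
  apply hinj y hy
  show w k y = w i y
  rw [← hk]; exact hy1

theorem aux_bad_countable (v l : ι → ℂ) (hv : Function.Injective v) :
    {z : ℂ | ¬ Function.Injective (fun i => v i + z * (l i - v i))}.Countable := by
  have : {z : ℂ | ¬ Function.Injective (fun i => v i + z * (l i - v i))} ⊆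
      Set.range (fun p : ι × ι => - (v p.1 - v p.2) / ((l p.1 - v p.1) - (l p.2 - v p.2))) := by
    intro z hz
    simp only [Function.Injective, Set.mem_ofPred_eq] at hz
    push Not at hz
    obtain ⟨i, j, hij, hne⟩ := hz
    refine ⟨(i, j), ?_⟩
    have hvne : v i - v j ≠ 0 := sub_ne_zero.mpr (fun h => hne (hv h))
    have h2 : z * ((l i - v i) - (l j - v j)) = -(v i - v j) := by linear_combination hij
    have h3 : (l i - v i) - (l j - v j) ≠ 0 := by
      intro h0
      rw [h0, mul_zero] at h2
      exact hvne (neg_eq_zero.mp h2.symm)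
    show -(v i - v j) / ((l i - v i) - (l j - v j)) = z
    rw [← h2]; field_simp
  exact (Set.countable_range _).mono this

theorem aux_exists_inj : ∃ v : ι → ℂ, Function.Injective v := by
  refine ⟨fun i => ((Fintype.equivFin ι i : ℕ) : ℂ), ?_⟩
  intro i j h
  have : ((Fintype.equivFin ι i : ℕ)) = (Fintype.equivFin ι j : ℕ) := by
    simpa using h
  exact (Fintype.equivFin ι).injective (Fin.ext this)

theorem aux_sep_family (p : Polynomial (Polynomial ℂ)) (hm : p.Monic) (hpos : 0 < p.natDegree)
    (h0 : (p.map (Polynomial.evalRingHom 0)).Separable) :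
    ∃ B : Set ℂ, B.Countable ∧ ∀ z ∉ B, (p.map (Polynomial.evalRingHom z)).Separable := by
  obtain ⟨n, hn⟩ : ∃ n, p.natDegree = n := ⟨_, rfl⟩
  rw [hn] at hpos
  have hpdd : p.derivative.natDegree ≤ n - 1 := by
    rw [← hn]; exact Polynomial.natDegree_derivative_le p
  obtain ⟨ρ, hρdef⟩ : ∃ ρ, Polynomial.resultant p p.derivative n (n - 1) = ρ := ⟨_, rfl⟩
  have hρ0 : Polynomial.evalRingHom 0 ρ ≠ 0 := by
    have h1 := Polynomial.resultant_map_map p p.derivative n (n-1) (Polynomial.evalRingHom 0)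
    rw [hρdef] at h1
    rw [← h1, ← Polynomial.derivative_map]
    have h2 := Polynomial.resultant_ne_zero _ _ h0
    have h3 : (p.map (Polynomial.evalRingHom 0)).natDegree = n := by
      rw [hm.natDegree_map, hn]
    rw [Polynomial.natDegree_derivative, h3] at h2
    exact h2
  have hρ : ρ ≠ 0 := by
    rintro rfl
    exact hρ0 (map_zero _)
  refine ⟨{z | ρ.IsRoot z}, (Polynomial.finite_setOfPred_isRoot hρ).countable, ?_⟩
  intro z hz
  obtain ⟨a, b, -, -, hab⟩ := Polynomial.exists_mul_add_mul_eq_C_resultant (m := n) (n := n - 1)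
    p p.derivative hn.le hpdd (Or.inl hpos.ne')
  rw [hρdef] at hab
  have hab2 := congrArg (Polynomial.map (Polynomial.evalRingHom z)) hab
  rw [Polynomial.map_add, Polynomial.map_mul, Polynomial.map_mul, ← Polynomial.derivative_map,
    Polynomial.map_C] at hab2
  have hr : Polynomial.evalRingHom z ρ ≠ 0 := hz
  obtain ⟨r, hrdef⟩ : ∃ r, Polynomial.evalRingHom z ρ = r := ⟨_, rfl⟩
  rw [hrdef] at hab2 hr
  refine ⟨Polynomial.C r⁻¹ * a.map (Polynomial.evalRingHom z),
    Polynomial.C r⁻¹ * b.map (Polynomial.evalRingHom z), ?_⟩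
  have : Polynomial.C r⁻¹ * Polynomial.C r = 1 := by
    rw [← Polynomial.C_mul, inv_mul_cancel₀ hr, Polynomial.C_1]
  rw [← this, ← hab2]
  ring

theorem aux_sep_diag (Y : Matrix ι ι ℂ) (hsep : Y.charpoly.Separable) :
    ∃ (d : ι → ℂ) (T T' : Matrix ι ι ℂ),
      Function.Injective d ∧ T * T' = 1 ∧ Y = T * Matrix.diagonal d * T' := by
  have hnd := Polynomial.nodup_roots hsep
  have hcard : Y.charpoly.roots.card = Fintype.card ι := by
    have h1 := IsAlgClosed.card_roots_eq_natDegree (p := Y.charpoly)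
    rw [h1, Matrix.charpoly_natDegree_eq_dim]
  have hfc : Y.charpoly.roots.toFinset.card = Fintype.card ι := by
    rw [Multiset.toFinset_card_of_nodup hnd, hcard]
  let e := (Fintype.equivFin ι).trans (Y.charpoly.roots.toFinset.equivFinOfCardEq hfc).symm
  have hdi : Function.Injective (fun i => ((e i : ℂ))) :=
    Subtype.val_injective.comp e.injective
  obtain ⟨T, T', hT, hYT⟩ := aux_eig Y (fun i => ((e i : ℂ))) hdi (by
    intro i
    rw [Matrix.mem_spectrum_iff_isRoot_charpoly]
    have := (e i).2
    rw [Multiset.mem_toFinset] at this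
    exact Polynomial.isRoot_of_mem_roots this)
  exact ⟨_, T, T', hdi, hT, hYT⟩

/-- Off a countable set of parameters, the pencil has simple spectrum. -/
theorem aux_pencil [Nonempty ι] (v : ι → ℂ) (hv : Function.Injective v) (X : Matrix ι ι ℂ) :
    ∃ B : Set ℂ, B.Countable ∧ ∀ z ∉ B, ∃ (d : ι → ℂ) (T T' : Matrix ι ι ℂ),
      Function.Injective d ∧ T * T' = 1 ∧
      Matrix.diagonal v + z • (X - Matrix.diagonal v) = T * Matrix.diagonal d * T' := by
  obtain ⟨N, hNdef⟩ : ∃ N : Matrix ι ι (Polynomial ℂ), N = (Matrix.diagonal v).map Polynomial.C +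
    (Polynomial.X : Polynomial ℂ) • (X - Matrix.diagonal v).map Polynomial.C := ⟨_, rfl⟩
  have hN : ∀ z, N.map (Polynomial.evalRingHom z) =
      Matrix.diagonal v + z • (X - Matrix.diagonal v) := by
    intro z
    ext i j
    rw [hNdef]
    simp only [Matrix.map_apply, Matrix.add_apply, Matrix.smul_apply, Matrix.sub_apply,
      smul_eq_mul, map_add, map_mul, map_sub]
    simp only [Polynomial.coe_evalRingHom, Polynomial.eval_C, Polynomial.eval_X]
  have hp : ∀ z, N.charpoly.map (Polynomial.evalRingHom z) =
      (Matrix.diagonal v + z • (X - Matrix.diagonal v)).charpoly := by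
    intro z
    rw [← hN z, Matrix.charpoly_map]
  obtain ⟨B, hB, hBz⟩ := aux_sep_family N.charpoly (Matrix.charpoly_monic N)
    (by rw [Matrix.charpoly_natDegree_eq_dim]; exact Fintype.card_pos)
    (by
      rw [hp, zero_smul, add_zero, Matrix.charpoly_diagonal]
      exact Polynomial.separable_prod_X_sub_C_iff.mpr hv)
  refine ⟨B, hB, fun z hz => ?_⟩
  have := hBz z hz
  rw [hp] at this
  exact aux_sep_diag _ this

end Infra

section Frames

variable {ι : Type} [Fintype ι] [DecidableEq ι]

/-- matrices supported on the relation `r`. -/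
def Pat (r : ι → ι → Prop) (X : Matrix ι ι ℂ) : Prop := ∀ i j, ¬ r i j → X i j = 0

/-- the preserving hypotheses for a map on the matrices supported on `r`. -/
structure Hyp (r : ι → ι → Prop) (φ : Matrix ι ι ℂ → Matrix ι ι ℂ) : Prop where
  cont : ContinuousOn φ {X | Pat r X}
  inj : ∀ X Y, Pat r X → Pat r Y → φ X = φ Y → X = Y
  comm : ∀ X Y, Pat r X → Pat r Y → X * Y = Y * X → φ X * φ Y = φ Y * φ X
  spec : ∀ X, Pat r X → spectrum ℂ (φ X) = spectrum ℂ X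

/-- a preorder with a bottom `b` and a top `t`. -/
structure Pre (r : ι → ι → Prop) (b t : ι) : Prop where
  refl : ∀ i, r i i
  trans : ∀ i j k, r i j → r j k → r i k
  bot : ∀ i, r b i
  top : ∀ i, r i t

variable {r : ι → ι → Prop} {b t : ι} {φ : Matrix ι ι ℂ → Matrix ι ι ℂ}

theorem Pat.mul (P : Pre r b t) {X Y : Matrix ι ι ℂ} (hX : Pat r X) (hY : Pat r Y) :
    Pat r (X * Y) := by
  intro i j hij
  rw [Matrix.mul_apply]
  apply Finset.sum_eq_zero
  intro k _
  by_cases h : r i k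
  · rw [hY k j (fun h' => hij (P.trans _ _ _ h h')), mul_zero]
  · rw [hX i k h, zero_mul]

theorem Pat.diag (P : Pre r b t) (d : ι → ℂ) : Pat r (Matrix.diagonal d) := by
  intro i j hij
  apply Matrix.diagonal_apply_ne
  rintro rfl
  exact hij (P.refl _)

theorem Pat.add {X Y : Matrix ι ι ℂ} (hX : Pat r X) (hY : Pat r Y) : Pat r (X + Y) := by
  intro i j hij
  rw [Matrix.add_apply, hX i j hij, hY i j hij, add_zero]

theorem Pat.smul (c : ℂ) {X : Matrix ι ι ℂ} (hX : Pat r X) : Pat r (c • X) := by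
  intro i j hij
  rw [Matrix.smul_apply, hX i j hij, smul_zero]

theorem Pat.sub {X Y : Matrix ι ι ℂ} (hX : Pat r X) (hY : Pat r Y) : Pat r (X - Y) := by
  intro i j hij
  rw [Matrix.sub_apply, hX i j hij, hY i j hij, sub_zero]

theorem Hyp.conj (H : Hyp r φ) (T T' : Matrix ι ι ℂ) (h : T * T' = 1) :
    Hyp r (fun X => T * φ X * T') := by
  have h' : T' * T = 1 := mul_eq_one_comm.mp h
  refine ⟨?_, ?_, ?_, ?_⟩
  · exact (continuousOn_const.mul H.cont).mul continuousOn_const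
  · intro X Y hX hY hXY
    apply H.inj X Y hX hY
    have := congrArg (fun Z => T' * Z * T) hXY
    calc φ X = (T' * T) * φ X * (T' * T) := by rw [h']; simp
      _ = T' * (T * φ X * T') * T := by noncomm_ring
      _ = T' * (T * φ Y * T') * T := this
      _ = (T' * T) * φ Y * (T' * T) := by noncomm_ring
      _ = φ Y := by rw [h']; simp
  · intro X Y hX hY hXY
    have := H.comm X Y hX hY hXY
    calc T * φ X * T' * (T * φ Y * T') = T * φ X * (T' * T) * φ Y * T' := by noncomm_ring
      _ = T * (φ X * φ Y) * T' := by rw [h']; noncomm_ring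
      _ = T * (φ Y * φ X) * T' := by rw [this]
      _ = T * φ Y * (T' * T) * φ X * T' := by rw [h']; noncomm_ring
      _ = T * φ Y * T' * (T * φ X * T') := by noncomm_ring
  · intro X hX
    rw [aux_spec_conj _ _ _ h, H.spec X hX]

theorem Hyp.transpose (H : Hyp r φ) : Hyp r (fun X => (φ X)ᵀ) := by
  refine ⟨?_, ?_, ?_, ?_⟩
  · exact (continuous_id.matrix_transpose).comp_continuousOn H.cont
  · intro X Y hX hY hXY
    exact H.inj X Y hX hY (Matrix.transpose_injective hXY)
  · intro X Y hX hY hXY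
    have := H.comm X Y hX hY hXY
    rw [← Matrix.transpose_mul, ← Matrix.transpose_mul, this]
  · intro X hX
    rw [aux_spec_transpose, H.spec X hX]

set_option maxHeartbeats 2000000 in
theorem frame (H : Hyp r φ) (S S' : Matrix ι ι ℂ) (hS : S * S' = 1)
    (hP : ∀ l : ι → ℂ, Pat r (S * Matrix.diagonal l * S')) :
    ∃ T T' : Matrix ι ι ℂ, T * T' = 1 ∧
      ∀ l : ι → ℂ, φ (S * Matrix.diagonal l * S') = T * Matrix.diagonal l * T' := by
  obtain ⟨v, hv⟩ := aux_exists_inj (ι := ι)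
  have hS' : S' * S = 1 := mul_eq_one_comm.mp hS
  have hspec : ∀ l, spectrum ℂ (φ (S * Matrix.diagonal l * S')) = Set.range l := by
    intro l
    rw [H.spec _ (hP l), aux_spec_conj _ _ _ hS, aux_spec_diag]
  obtain ⟨T, T', hT, hM⟩ := aux_eig (φ (S * Matrix.diagonal v * S')) v hv (by
    intro i; rw [hspec]; exact ⟨i, rfl⟩)
  have hT' : T' * T = 1 := mul_eq_one_comm.mp hT
  refine ⟨T, T', hT, ?_⟩
  obtain ⟨μ, hμ⟩ : ∃ μ : (ι → ℂ) → ι → ℂ,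
      μ = fun l i => (T' * φ (S * Matrix.diagonal l * S') * T) i i := ⟨_, rfl⟩
  have hdiag : ∀ l, T' * φ (S * Matrix.diagonal l * S') * T = Matrix.diagonal (μ l) := by
    intro l
    have hc := H.comm _ _ (hP l) (hP v) (by
      calc S * diagonal l * S' * (S * diagonal v * S')
          = S * diagonal l * (S' * S) * diagonal v * S' := by noncomm_ring
        _ = S * (diagonal l * diagonal v) * S' := by rw [hS']; noncomm_ring
        _ = S * (diagonal v * diagonal l) * S' := by
            rw [diagonal_mul_diagonal, diagonal_mul_diagonal]
            simp only [mul_comm]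
        _ = S * diagonal v * (S' * S) * diagonal l * S' := by rw [hS']; noncomm_ring
        _ = S * diagonal v * S' * (S * diagonal l * S') := by noncomm_ring)
    rw [hM] at hc
    have hc2 : (T' * φ (S * Matrix.diagonal l * S') * T) * diagonal v =
        diagonal v * (T' * φ (S * Matrix.diagonal l * S') * T) := by
      calc (T' * φ (S * Matrix.diagonal l * S') * T) * diagonal v
          = T' * (φ (S * Matrix.diagonal l * S') * (T * diagonal v * T')) * T := by
            calc _ = T' * φ (S * Matrix.diagonal l * S') * T * diagonal v * 1 := by noncomm_ring
              _ = _ := by rw [← hT']; noncomm_ring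
        _ = T' * ((T * diagonal v * T') * φ (S * Matrix.diagonal l * S')) * T := by rw [hc]
        _ = (T' * T) * diagonal v * (T' * φ (S * Matrix.diagonal l * S') * T) := by noncomm_ring
        _ = _ := by rw [hT']; noncomm_ring
    ext i j
    by_cases hij : i = j
    · subst hij
      rw [Matrix.diagonal_apply_eq, hμ]
    · rw [Matrix.diagonal_apply_ne _ hij]
      have := congrFun (congrFun hc2 i) j
      rw [Matrix.mul_diagonal, Matrix.diagonal_mul] at this
      have hne : v j - v i ≠ 0 := sub_ne_zero.mpr (fun h => hij (hv h).symm)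
      have h2 : (v j - v i) * (T' * φ (S * diagonal l * S') * T) i j = 0 := by
        linear_combination this
      exact (mul_eq_zero.mp h2).resolve_left hne
  have hback : ∀ l, φ (S * Matrix.diagonal l * S') = T * Matrix.diagonal (μ l) * T' := by
    intro l
    rw [← hdiag]
    calc φ (S * Matrix.diagonal l * S') = (T * T') * φ (S * Matrix.diagonal l * S') * (T * T') := by
          rw [hT]; simp
      _ = _ := by noncomm_ring
  have hrange : ∀ l i, ∃ k, μ l i = l k := by
    intro l i
    have h1 := hspec l
    rw [hback l, aux_spec_conj _ _ _ hT, aux_spec_diag] at h1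
    have : μ l i ∈ Set.range l := by rw [← h1]; exact ⟨i, rfl⟩
    obtain ⟨k, hk⟩ := this
    exact ⟨k, hk.symm⟩
  have hμv : μ v = v := by
    have h1 := hdiag v
    rw [hM] at h1
    have h2 : T' * (T * diagonal v * T') * T = diagonal v := by
      calc _ = (T' * T) * diagonal v * (T' * T) := by noncomm_ring
        _ = _ := by rw [hT']; simp
    rw [h2] at h1
    exact (Matrix.diagonal_injective h1).symm
  have hμcont : Continuous μ := by
    have h1 : Continuous (fun l : ι → ℂ => φ (S * Matrix.diagonal l * S')) := by
      rw [← continuousOn_univ]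
      refine H.cont.comp (t := {X | Pat r X}) ?_ (fun l _ => hP l)
      refine Continuous.continuousOn ?_
      exact (continuous_const.mul (continuous_id.matrix_diagonal)).mul continuous_const
    have h2 : Continuous (fun l : ι → ℂ => T' * φ (S * Matrix.diagonal l * S') * T) :=
      (continuous_const.mul h1).mul continuous_const
    rw [hμ]
    exact continuous_pi (fun i => h2.matrix_elem i i)
  intro l
  rw [hback l]
  congr 3
  ext i
  let w : ι → ℂ → ℂ := fun i z => v i + z * (l i - v i)
  have hw : ∀ i, Continuous (w i) := fun i => by fun_prop
  let f : ℂ → ℂ := fun z => μ (fun j => w j z) i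
  have hf : Continuous f :=
    (continuous_apply i).comp (hμcont.comp (continuous_pi hw))
  have hbad := aux_bad_countable v l hv
  set U : Set ℂ := {z : ℂ | ¬ Function.Injective (fun i => v i + z * (l i - v i))}ᶜ with hUdef
  have hUinj : ∀ z ∈ U, Function.Injective (fun i => w i z) := by
    intro z hz
    by_contra hcon
    exact hz hcon
  have hU : IsPreconnected U :=
    (hbad.isPathConnected_compl_of_one_lt_rank (by simp)).isConnected.isPreconnected
  have hdense : Dense U := hbad.dense_compl ℂ
  have h0 : (0 : ℂ) ∈ U := by
    intro h
    apply h
    intro a c hac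
    apply hv
    simpa using hac
  have hw0 : (fun j => w j 0) = v := by ext j; simp [w]
  have hw1 : (fun j => w j 1) = l := by ext j; simp [w]
  have hsel := aux_select U hU f w hf hw hUinj (fun z _ => hrange _ i) i 0 h0 (by
    show μ (fun j => w j 0) i = w i 0
    rw [hw0, hμv]; simp [w])
  have hall : f = w i := by
    apply Continuous.ext_on hdense hf (hw i)
    intro z hz; exact hsel z hz
  have := congrFun hall 1
  simp only [f, hw1] at this
  rw [this]; simp [w]

theorem dens [Nonempty ι] (P : Pre r b t) (H : Hyp r φ)
    (hfix : ∀ (S S' : Matrix ι ι ℂ) (d : ι → ℂ), Function.Injective d → S * S' = 1 →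
      Pat r (S * Matrix.diagonal d * S') → φ (S * Matrix.diagonal d * S') = S * Matrix.diagonal d * S')
    (X : Matrix ι ι ℂ) (hX : Pat r X) : φ X = X := by
  obtain ⟨v, hv⟩ := aux_exists_inj (ι := ι)
  obtain ⟨B, hB, hBz⟩ := aux_pencil v hv X
  let g : ℂ → Matrix ι ι ℂ := fun z => Matrix.diagonal v + z • (X - Matrix.diagonal v)
  have hg : Continuous g := by fun_prop
  have hgP : ∀ z, Pat r (g z) := fun z =>
    (Pat.diag P v).add ((hX.sub (Pat.diag P v)).smul z)
  have hφg : Continuous (fun z => φ (g z)) := by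
    rw [← continuousOn_univ]
    exact H.cont.comp (t := {X | Pat r X}) hg.continuousOn (fun z _ => hgP z)
  have : (fun z => φ (g z)) = g := by
    apply Continuous.ext_on (hB.dense_compl ℂ) hφg hg
    intro z hz
    obtain ⟨d, T, T', hd, hT, hY⟩ := hBz z hz
    have hp := hgP z
    simp only [g] at hp ⊢
    rw [hY] at hp ⊢
    exact hfix T T' d hd hT hp
  have h1 := congrFun this 1
  simp only [g, one_smul, add_sub_cancel] at h1
  exact h1

/-- spectral projections stay in the pattern -/
theorem pat_interp (P : Pre r b t) (S S' : Matrix ι ι ℂ) (d : ι → ℂ) (hd : Function.Injective d)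
    (hS : S * S' = 1) (hp : Pat r (S * Matrix.diagonal d * S')) (l : ι → ℂ) :
    Pat r (S * Matrix.diagonal l * S') := by
  have hS' : S' * S = 1 := mul_eq_one_comm.mp hS
  have hpow : ∀ k : ℕ, (S * Matrix.diagonal d * S') ^ k = S * Matrix.diagonal (d ^ k) * S' := by
    intro k
    induction k with
    | zero => simp [hS]
    | succ k ih =>
      rw [pow_succ, ih]
      calc _ = S * Matrix.diagonal (d ^ k) * (S' * S) * Matrix.diagonal d * S' := by noncomm_ring
        _ = S * (Matrix.diagonal (d ^ k) * Matrix.diagonal d) * S' := by rw [hS']; noncomm_ring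
        _ = _ := by rw [Matrix.diagonal_mul_diagonal]; rfl
  have hPk : ∀ k : ℕ, Pat r (S * Matrix.diagonal (d ^ k) * S') := by
    intro k
    rw [← hpow]
    induction k with
    | zero => rw [pow_zero, ← Matrix.diagonal_one]; exact Pat.diag P _
    | succ k ih => rw [pow_succ]; exact ih.mul P hp
  let p := Lagrange.interpolate Finset.univ d l
  have hl : l = ∑ k ∈ Finset.range (p.natDegree + 1), p.coeff k • d ^ k := by
    ext i
    have h1 : p.eval (d i) = l i :=
      Lagrange.eval_interpolate_at_node l (hd.injOn) (Finset.mem_univ i)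
    rw [← h1, Polynomial.eval_eq_sum_range]
    simp
  have hsum : S * Matrix.diagonal l * S' =
      ∑ k ∈ Finset.range (p.natDegree + 1), p.coeff k • (S * Matrix.diagonal (d ^ k) * S') := by
    have h2 : Matrix.diagonal l = ∑ k ∈ Finset.range (p.natDegree + 1),
        p.coeff k • Matrix.diagonal (d ^ k) := by
      conv_lhs => rw [hl]
      ext i j
      by_cases hij : i = j
      · subst hij; simp [Matrix.sum_apply]
      · simp [Matrix.sum_apply, hij]
    rw [h2, Finset.mul_sum, Finset.sum_mul]
    simp
  rw [hsum]
  intro i j hij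
  rw [Matrix.sum_apply]
  apply Finset.sum_eq_zero
  intro k _
  exact (hPk k).smul _ i j hij

theorem conj_single (T T' : Matrix ι ι ℂ) (k : ι) (c : ℂ) :
    T * Matrix.diagonal (Pi.single k c) * T' =
      c • Matrix.vecMulVec (fun i => T i k) (fun j => T' k j) := by
  ext i j
  rw [Matrix.mul_apply, Finset.sum_eq_single k]
  · simp [Matrix.mul_diagonal, Matrix.vecMulVec_apply]; ring
  · intro m _ hm
    simp [Matrix.mul_diagonal, hm]
  · simp

theorem rank_one_frame (P : Pre r b t) (x f : ι → ℂ) (hxf : f ⬝ᵥ x = 1)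
    (hp : Pat r (Matrix.vecMulVec x f)) :
    ∃ (S S' : Matrix ι ι ℂ) (k : ι), S * S' = 1 ∧ Pat r S ∧ Pat r S' ∧
      ∀ c : ℂ, S * Matrix.diagonal (Pi.single k c) * S' = c • Matrix.vecMulVec x f := by
  have : ∃ k, f k * x k ≠ 0 := by
    by_contra! h
    rw [dotProduct, Finset.sum_eq_zero (fun i _ => h i)] at hxf
    exact zero_ne_one hxf
  obtain ⟨k, hk⟩ := this
  have hfk : f k ≠ 0 := left_ne_zero_of_mul hk
  have hxk : x k ≠ 0 := right_ne_zero_of_mul hk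
  have hxr : ∀ i, ¬ r i k → x i = 0 := by
    intro i hi
    have := hp i k hi
    rw [Matrix.vecMulVec_apply] at this
    exact (mul_eq_zero.mp this).resolve_right hfk
  have hfr : ∀ j, ¬ r k j → f j = 0 := by
    intro j hj
    have := hp k j hj
    rw [Matrix.vecMulVec_apply] at this
    exact (mul_eq_zero.mp this).resolve_left hxk
  let e : ι → ℂ := Pi.single k 1
  have hek : e k = 1 := by simp [e]
  have hene : ∀ i, i ≠ k → e i = 0 := by intro i hi; simp [e, hi]
  let a : ι → ℂ := (x k)⁻¹ • x - e
  let c : ι → ℂ := e - (f k)⁻¹ • f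
  let q : ι → ℂ := (2 * x k) • f - e
  let S : Matrix ι ι ℂ := 1 + Matrix.vecMulVec a e + Matrix.vecMulVec e c
  let S' : Matrix ι ι ℂ := 1 - Matrix.vecMulVec x f + Matrix.vecMulVec e q
  have hea : e ⬝ᵥ a = 0 := by
    simp [e, a, hxk]
  have hee : e ⬝ᵥ e = 1 := by simp [e]
  have hfe : f ⬝ᵥ e = f k := by simp [e]
  have hfa : f ⬝ᵥ a = (x k)⁻¹ - f k := by
    simp only [a, dotProduct_sub, dotProduct_smul, hxf, hfe]; simp
  have hq1 : q ⬝ᵥ a = 2 * x k * ((x k)⁻¹ - f k) := by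
    simp only [q, sub_dotProduct, smul_dotProduct, hfa, hea]; simp
  have hq2 : q ⬝ᵥ e = 2 * x k * f k - 1 := by
    simp only [q, sub_dotProduct, smul_dotProduct, hfe, hee]; simp
  have hS'S : S' * S = 1 := by
    simp only [S, S', add_mul, sub_mul, mul_add, mul_one, one_mul, Matrix.vecMulVec_mul_vecMulVec,
      hfe, hfa, hq1, hq2]
    ext i j
    simp only [Matrix.add_apply, Matrix.sub_apply, Matrix.vecMulVec_apply, Pi.smul_apply,
      smul_eq_mul, a, c, q, Pi.sub_apply]
    field_simp
    ring
  refine ⟨S, S', k, mul_eq_one_comm.mp hS'S, ?_, ?_, ?_⟩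
  · intro i j hij
    have hne : i ≠ j := by rintro rfl; exact hij (P.refl _)
    simp only [S, Matrix.add_apply, Matrix.vecMulVec_apply, Matrix.one_apply_ne hne, a, c,
      Pi.sub_apply, Pi.smul_apply, smul_eq_mul]
    by_cases hj : j = k
    · subst hj
      rw [hxr i hij, hene i hne]; simp
    · rw [hene j hj]
      by_cases hi : i = k
      · subst hi; rw [hfr j hij]; simp
      · rw [hene i hi]; simp
  · intro i j hij
    have hne : i ≠ j := by rintro rfl; exact hij (P.refl _)
    have h0 := hp i j hij
    simp only [S', Matrix.add_apply, Matrix.sub_apply, h0, Matrix.one_apply_ne hne]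
    simp only [Matrix.vecMulVec_apply, q, Pi.sub_apply, Pi.smul_apply, smul_eq_mul]
    by_cases hi : i = k
    · subst hi
      rw [hfr j hij, hene j hne.symm]; simp
    · rw [hene i hi]; simp
  · intro z
    rw [conj_single]
    congr 1
    ext i j
    simp only [Matrix.vecMulVec_apply, S, S', Matrix.add_apply, Matrix.sub_apply, a, c, q,
      Pi.sub_apply, Pi.smul_apply, smul_eq_mul, hek]
    have h1 : (1 : Matrix ι ι ℂ) i k = e i := by
      by_cases hi : i = k
      · subst hi; simp [hek]
      · rw [hene i hi, Matrix.one_apply_ne hi]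
    have h2 : (1 : Matrix ι ι ℂ) k j = e j := by
      by_cases hi : j = k
      · subst hi; simp [hek]
      · rw [hene j hi, Matrix.one_apply_ne (Ne.symm hi)]
    rw [h1, h2]
    field_simp
    ring

theorem rank_one_map (P : Pre r b t) (H : Hyp r φ) (x f : ι → ℂ) (hxf : f ⬝ᵥ x = 1)
    (hp : Pat r (Matrix.vecMulVec x f)) :
    ∃ y g : ι → ℂ, g ⬝ᵥ y = 1 ∧
      ∀ c : ℂ, φ (c • Matrix.vecMulVec x f) = c • Matrix.vecMulVec y g := by
  obtain ⟨S, S', k, hS, hPS, hPS', hR⟩ := rank_one_frame P x f hxf hp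
  obtain ⟨T, T', hT, hφ⟩ := frame H S S' hS (fun l => (hPS.mul P (Pat.diag P l)).mul P hPS')
  refine ⟨fun i => T i k, fun j => T' k j, ?_, ?_⟩
  · have hT' : T' * T = 1 := mul_eq_one_comm.mp hT
    have := congrFun (congrFun hT' k) k
    rw [Matrix.mul_apply, Matrix.one_apply_eq] at this
    exact this
  · intro c
    rw [← hR, hφ, conj_single]

/-- orthogonality of rank one idempotents is preserved. -/
theorem orth_map (H : Hyp r φ) (x f x' f' y g y' g' : ι → ℂ)
    (hxf : f ⬝ᵥ x = 1)
    (hp : Pat r (Matrix.vecMulVec x f)) (hp' : Pat r (Matrix.vecMulVec x' f'))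
    (hgy : g ⬝ᵥ y = 1) (hgy' : g' ⬝ᵥ y' = 1)
    (hφ : φ (Matrix.vecMulVec x f) = Matrix.vecMulVec y g)
    (hφ' : φ (Matrix.vecMulVec x' f') = Matrix.vecMulVec y' g')
    (h1 : f ⬝ᵥ x' = 0) (h2 : f' ⬝ᵥ x = 0) : g ⬝ᵥ y' = 0 ∧ g' ⬝ᵥ y = 0 := by
  have hc := H.comm _ _ hp hp' (by
    rw [Matrix.vecMulVec_mul_vecMulVec, Matrix.vecMulVec_mul_vecMulVec, h1, h2]; simp)
  rw [hφ, hφ', Matrix.vecMulVec_mul_vecMulVec, Matrix.vecMulVec_mul_vecMulVec] at hc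
  have hne : Matrix.vecMulVec y g ≠ Matrix.vecMulVec y' g' := by
    intro h
    have h3 := H.inj _ _ hp hp' (by rw [hφ, hφ', h])
    have h4 := congrArg (fun M => M *ᵥ x) h3
    simp only [Matrix.vecMulVec_mulVec, hxf, h2] at h4
    have h5 : x = 0 := by simpa using h4
    rw [h5] at hxf
    simp at hxf
  have hA : ∀ i j, (g ⬝ᵥ y') * (y i * g' j) = (g' ⬝ᵥ y) * (y' i * g j) := by
    intro i j
    have := congrFun (congrFun hc i) j
    simp only [Matrix.vecMulVec_apply, Pi.smul_apply, smul_eq_mul] at this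
    linear_combination this
  obtain ⟨α, hα⟩ : ∃ α, g ⬝ᵥ y' = α := ⟨_, rfl⟩
  obtain ⟨β, hβ⟩ : ∃ β, g' ⬝ᵥ y = β := ⟨_, rfl⟩
  rw [hα, hβ] at hA ⊢
  have hB : ∀ j, α * g' j = β * (α * g j) := by
    intro j
    have : ∑ i, g i * (α * (y i * g' j)) = ∑ i, g i * (β * (y' i * g j)) :=
      Finset.sum_congr rfl (fun i _ => by rw [hA])
    have e1 : ∑ i, g i * (α * (y i * g' j)) = (g ⬝ᵥ y) * (α * g' j) := by
      rw [dotProduct, Finset.sum_mul]; exact Finset.sum_congr rfl (fun i _ => by ring)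
    have e2 : ∑ i, g i * (β * (y' i * g j)) = (g ⬝ᵥ y') * (β * g j) := by
      rw [dotProduct, Finset.sum_mul]; exact Finset.sum_congr rfl (fun i _ => by ring)
    rw [e1, e2, hgy, hα] at this
    linear_combination this
  have hC : ∀ i, α * (β * y i) = β * y' i := by
    intro i
    have : ∑ j, (α * (y i * g' j)) * y j = ∑ j, (β * (y' i * g j)) * y j :=
      Finset.sum_congr rfl (fun j _ => by rw [hA])
    have e1 : ∑ j, (α * (y i * g' j)) * y j = (g' ⬝ᵥ y) * (α * y i) := by
      rw [dotProduct, Finset.sum_mul]; exact Finset.sum_congr rfl (fun i _ => by ring)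
    have e2 : ∑ j, (β * (y' i * g j)) * y j = (g ⬝ᵥ y) * (β * y' i) := by
      rw [dotProduct, Finset.sum_mul]; exact Finset.sum_congr rfl (fun i _ => by ring)
    rw [e1, e2, hgy, hβ] at this
    linear_combination this
  by_cases hα0 : α = 0
  · refine ⟨hα0, ?_⟩
    by_contra hβ0
    have hy' : y' = 0 := by
      ext i
      have := hC i
      rw [hα0, zero_mul] at this
      exact (mul_eq_zero.mp this.symm).resolve_left hβ0
    rw [hy'] at hgy'
    simp at hgy'
  · exfalso
    have hg' : g' = β • g := by
      ext j
      have := hB j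
      simp only [Pi.smul_apply, smul_eq_mul]
      apply mul_left_cancel₀ hα0
      linear_combination this
    have hβ0 : β ≠ 0 := by
      intro h
      rw [hg', h] at hgy'
      simp at hgy'
    have hy' : y' = α • y := by
      ext i
      have := hC i
      simp only [Pi.smul_apply, smul_eq_mul]
      apply mul_left_cancel₀ hβ0
      linear_combination -this
    have hab : β * α = 1 := by
      rw [hg', hy', smul_dotProduct, dotProduct_smul, hgy] at hgy'
      simpa using hgy'
    apply hne
    ext i j
    simp only [hg', hy', Matrix.vecMulVec_apply, Pi.smul_apply, smul_eq_mul]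
    linear_combination (-(y i * g j)) * hab

end Frames

section RankOne

variable {ι : Type} [Fintype ι] [DecidableEq ι]
variable {r : ι → ι → Prop} {b t : ι} {φ : Matrix ι ι ℂ → Matrix ι ι ℂ}

/-- Properties of a map on rank one idempotents. -/
structure Rk (r : ι → ι → Prop) (φ : Matrix ι ι ℂ → Matrix ι ι ℂ) : Prop where
  ex : ∀ x f : ι → ℂ, f ⬝ᵥ x = 1 → Pat r (Matrix.vecMulVec x f) →
    ∃ y g : ι → ℂ, g ⬝ᵥ y = 1 ∧ φ (Matrix.vecMulVec x f) = Matrix.vecMulVec y g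
  orth : ∀ x f x' f' y g y' g' : ι → ℂ, f ⬝ᵥ x = 1 → f' ⬝ᵥ x' = 1 →
    Pat r (Matrix.vecMulVec x f) → Pat r (Matrix.vecMulVec x' f') →
    g ⬝ᵥ y = 1 → g' ⬝ᵥ y' = 1 →
    φ (Matrix.vecMulVec x f) = Matrix.vecMulVec y g →
    φ (Matrix.vecMulVec x' f') = Matrix.vecMulVec y' g' →
    f ⬝ᵥ x' = 0 → f' ⬝ᵥ x = 0 → g ⬝ᵥ y' = 0 ∧ g' ⬝ᵥ y = 0

theorem Hyp.rk (P : Pre r b t) (H : Hyp r φ) : Rk r φ := by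
  refine ⟨?_, ?_⟩
  · intro x f hxf hp
    obtain ⟨y, g, hgy, h⟩ := rank_one_map P H x f hxf hp
    refine ⟨y, g, hgy, ?_⟩
    have := h 1
    rwa [one_smul, one_smul] at this
  · intro x f x' f' y g y' g' hxf _ hp hp' hgy hgy' hφ hφ' h1 h2
    exact orth_map H x f x' f' y g y' g' hxf hp hp' hgy hgy' hφ hφ' h1 h2

theorem Rk.dual (K : Rk r φ) : Rk (fun i j => r j i) (fun X => (φ Xᵀ)ᵀ) := by
  have hpat : ∀ x f : ι → ℂ, Pat (fun i j => r j i) (Matrix.vecMulVec x f) →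
      Pat r (Matrix.vecMulVec f x) := by
    intro x f h i j hij
    have := h j i hij
    rw [Matrix.vecMulVec_apply] at this ⊢
    rw [mul_comm]; exact this
  have hval : ∀ x f y g : ι → ℂ, (φ (Matrix.vecMulVec x f)ᵀ)ᵀ = Matrix.vecMulVec y g ↔
      φ (Matrix.vecMulVec f x) = Matrix.vecMulVec g y := by
    intro x f y g
    rw [Matrix.transpose_vecMulVec, ← Matrix.transpose_vecMulVec g y]
    exact Matrix.transpose_inj
  refine ⟨?_, ?_⟩
  · intro x f hxf hp
    obtain ⟨y, g, hgy, h⟩ := K.ex f x (by rw [dotProduct_comm]; exact hxf) (hpat _ _ hp)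
    exact ⟨g, y, by rw [dotProduct_comm]; exact hgy, (hval _ _ _ _).mpr h⟩
  · intro x f x' f' y g y' g' hxf hxf' hp hp' hgy hgy' hφ hφ' h1 h2
    have := K.orth f x f' x' g y g' y' (by rw [dotProduct_comm]; exact hxf)
      (by rw [dotProduct_comm]; exact hxf') (hpat _ _ hp) (hpat _ _ hp')
      (by rw [dotProduct_comm]; exact hgy) (by rw [dotProduct_comm]; exact hgy')
      ((hval _ _ _ _).mp hφ) ((hval _ _ _ _).mp hφ')
      (by rw [dotProduct_comm]; exact h2) (by rw [dotProduct_comm]; exact h1)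
    exact ⟨by rw [dotProduct_comm]; exact this.2, by rw [dotProduct_comm]; exact this.1⟩

theorem Pre.dual (P : Pre r b t) : Pre (fun i j => r j i) t b :=
  ⟨P.refl, fun i j k h1 h2 => P.trans _ _ _ h2 h1, P.top, P.bot⟩

theorem lin_alg_one (x x₁ y f : ι → ℂ) (hfx : f ⬝ᵥ x = 1) (hfx₁ : f ⬝ᵥ x₁ = 0) (hx₁ : x₁ ≠ 0)
    (h : ∀ f₁ : ι → ℂ, f₁ ⬝ᵥ x = 0 → f₁ ⬝ᵥ x₁ = 1 → f₁ ⬝ᵥ y = 0) : y = (f ⬝ᵥ y) • x := by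
  have h' : ∀ f₁ : ι → ℂ, f₁ ⬝ᵥ x = 0 → f₁ ⬝ᵥ x₁ ≠ 0 → f₁ ⬝ᵥ y = 0 := by
    intro f₁ h1 h2
    have := h ((f₁ ⬝ᵥ x₁)⁻¹ • f₁) (by rw [smul_dotProduct, h1, smul_zero])
      (by rw [smul_dotProduct, smul_eq_mul, inv_mul_cancel₀ h2])
    rw [smul_dotProduct, smul_eq_mul] at this
    exact (mul_eq_zero.mp this).resolve_left (inv_ne_zero h2)
  obtain ⟨i, hi⟩ : ∃ i, x₁ i ≠ 0 := by
    by_contra! hcon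
    exact hx₁ (funext hcon)
  have key : ∀ j, (Pi.single j 1 - x j • f) ⬝ᵥ x = 0 := by
    intro j
    rw [sub_dotProduct, smul_dotProduct, hfx, single_dotProduct]; simp
  have hi0 : (Pi.single i 1 - x i • f) ⬝ᵥ x₁ ≠ 0 := by
    rw [sub_dotProduct, smul_dotProduct, hfx₁, single_dotProduct]; simpa using hi
  have h0 := h' _ (key i) hi0
  have hall : ∀ f₁ : ι → ℂ, f₁ ⬝ᵥ x = 0 → f₁ ⬝ᵥ y = 0 := by
    intro f₁ h1
    by_cases h2 : f₁ ⬝ᵥ x₁ = 0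
    · have := h' (f₁ + (Pi.single i 1 - x i • f)) (by rw [add_dotProduct, h1, key, add_zero])
        (by rw [add_dotProduct, h2, zero_add]; exact hi0)
      rw [add_dotProduct, h0, add_zero] at this
      exact this
    · exact h' f₁ h1 h2
  ext j
  have := hall _ (key j)
  rw [sub_dotProduct, smul_dotProduct, single_dotProduct] at this
  simp only [smul_eq_mul, one_mul, Pi.smul_apply] at this ⊢
  linear_combination this

theorem pat_row (P : Pre r b t) (v : ι → ℂ) : Pat r (Matrix.vecMulVec (Pi.single b 1) v) := by
  intro i j hij
  rw [Matrix.vecMulVec_apply]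
  have : i ≠ b := by rintro rfl; exact hij (P.bot j)
  simp [this]

theorem pat_col (P : Pre r b t) (u : ι → ℂ) : Pat r (Matrix.vecMulVec u (Pi.single t 1)) := by
  intro i j hij
  rw [Matrix.vecMulVec_apply]
  have : j ≠ t := by rintro rfl; exact hij (P.top i)
  simp [this]

theorem prop_of_zero (P : Pre r b t) (K : Rk r φ)
    (hrow : ∀ v : ι → ℂ, v b = 1 → φ (Matrix.vecMulVec (Pi.single b 1) v) =
      Matrix.vecMulVec (Pi.single b 1) v)
    (x f y g : ι → ℂ) (hfx : f ⬝ᵥ x = 1) (hp : Pat r (Matrix.vecMulVec x f))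
    (hgy : g ⬝ᵥ y = 1) (hφ : φ (Matrix.vecMulVec x f) = Matrix.vecMulVec y g)
    (hfb : f b = 0) : y = (f ⬝ᵥ y) • x := by
  apply lin_alg_one x (Pi.single b 1) y f hfx
  · rw [dotProduct_single, hfb, zero_mul]
  · intro h
    have := congrFun h b
    simp at this
  · intro v hvx hvb
    rw [dotProduct_single, mul_one] at hvb
    have hvb' : v ⬝ᵥ (Pi.single b 1 : ι → ℂ) = 1 := by rw [dotProduct_single, mul_one, hvb]
    exact (K.orth x f (Pi.single b 1) v y g (Pi.single b 1) v hfx hvb' hp (pat_row P v) hgy hvb' hφ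
      (hrow v hvb) (by rw [dotProduct_single, hfb, zero_mul]) hvx).2

theorem prop_of_zero' (P : Pre r b t) (K : Rk r φ)
    (hcol : ∀ u : ι → ℂ, u t = 1 → φ (Matrix.vecMulVec u (Pi.single t 1)) =
      Matrix.vecMulVec u (Pi.single t 1))
    (x f y g : ι → ℂ) (hfx : f ⬝ᵥ x = 1) (hp : Pat r (Matrix.vecMulVec x f))
    (hgy : g ⬝ᵥ y = 1) (hφ : φ (Matrix.vecMulVec x f) = Matrix.vecMulVec y g)
    (hxt : x t = 0) : g = (x ⬝ᵥ g) • f := by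
  refine prop_of_zero P.dual K.dual ?_ f x g y (by rw [dotProduct_comm]; exact hfx) ?_
    (by rw [dotProduct_comm]; exact hgy) ?_ hxt
  · intro v hv
    rw [Matrix.transpose_vecMulVec, hcol v hv, Matrix.transpose_vecMulVec]
  · intro i j hij
    have := hp j i hij
    rw [Matrix.vecMulVec_apply] at this ⊢
    rw [mul_comm]; exact this
  · show (φ (Matrix.vecMulVec f x)ᵀ)ᵀ = _
    rw [Matrix.transpose_vecMulVec, hφ, Matrix.transpose_vecMulVec]

theorem prop_all (P : Pre r b t) (K : Rk r φ) (hbt : b ≠ t) (m : ι) (hmb : m ≠ b) (hmt : m ≠ t)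
    (hrow : ∀ v : ι → ℂ, v b = 1 → φ (Matrix.vecMulVec (Pi.single b 1) v) =
      Matrix.vecMulVec (Pi.single b 1) v)
    (hcol : ∀ u : ι → ℂ, u t = 1 → φ (Matrix.vecMulVec u (Pi.single t 1)) =
      Matrix.vecMulVec u (Pi.single t 1))
    (x f y g : ι → ℂ) (hfx : f ⬝ᵥ x = 1) (hp : Pat r (Matrix.vecMulVec x f))
    (hgy : g ⬝ᵥ y = 1) (hφ : φ (Matrix.vecMulVec x f) = Matrix.vecMulVec y g) :
    y = (f ⬝ᵥ y) • x := by
  by_cases hfb : f b = 0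
  · exact prop_of_zero P K hrow x f y g hfx hp hgy hφ hfb
  by_cases hm : ∃ k, k ≠ b ∧ k ≠ t ∧ r k b
  · obtain ⟨k, hkb, hkt, hkr⟩ := hm
    have hfx₁ : f ⬝ᵥ (f k • Pi.single b 1 - f b • Pi.single k 1 : ι → ℂ) = 0 := by
      rw [dotProduct_sub, dotProduct_smul, dotProduct_smul, dotProduct_single, dotProduct_single]
      simp; ring
    have hx1t : (f k • Pi.single b 1 - f b • Pi.single k 1 : ι → ℂ) t = 0 := by
      simp [hbt.symm, hkt.symm]
    have hx1r : ∀ i j, ¬ r i j → (f k • Pi.single b 1 - f b • Pi.single k 1 : ι → ℂ) i = 0 := by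
      intro i j hij
      have h1 : i ≠ b := by rintro rfl; exact hij (P.bot j)
      have h2 : i ≠ k := by rintro rfl; exact hij (P.trans _ _ _ hkr (P.bot j))
      simp [h1, h2]
    have hx10 : (f k • Pi.single b 1 - f b • Pi.single k 1 : ι → ℂ) ≠ 0 := by
      intro h
      have := congrFun h k
      simp [hkb] at this
      exact hfb this
    obtain ⟨x₁, hx₁⟩ : ∃ x₁ : ι → ℂ, x₁ = f k • Pi.single b 1 - f b • Pi.single k 1 := ⟨_, rfl⟩
    rw [← hx₁] at hfx₁ hx1t hx1r hx10
    apply lin_alg_one x x₁ y f hfx hfx₁ hx10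
    intro f₁ hf₁x hf₁x₁
    have hp1 : Pat r (Matrix.vecMulVec x₁ f₁) := by
      intro i j hij
      rw [Matrix.vecMulVec_apply, hx1r i j hij, zero_mul]
    obtain ⟨y₁, g₁, hgy₁, hφ₁⟩ := K.ex x₁ f₁ hf₁x₁ hp1
    have hg₁ := prop_of_zero' P K hcol x₁ f₁ y₁ g₁ hf₁x₁ hp1 hgy₁ hφ₁ hx1t
    have ho := (K.orth x f x₁ f₁ y g y₁ g₁ hfx hf₁x₁ hp hp1 hgy hgy₁ hφ hφ₁ hfx₁ hf₁x).2
    have hc0 : x₁ ⬝ᵥ g₁ ≠ 0 := by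
      intro h
      rw [h, zero_smul] at hg₁
      rw [hg₁] at hgy₁
      simp at hgy₁
    rw [hg₁, smul_dotProduct, smul_eq_mul] at ho
    exact (mul_eq_zero.mp ho).resolve_left hc0
  · push Not at hm
    have hx : ∀ i, i ≠ b → x i = 0 := by
      intro i hi
      have hnr : ¬ r i b := by
        by_cases hit : i = t
        · subst hit
          intro h
          exact hm m hmb hmt (P.trans _ _ _ (P.top m) h)
        · exact hm i hi hit
      have := hp i b hnr
      rw [Matrix.vecMulVec_apply] at this
      exact (mul_eq_zero.mp this).resolve_right hfb
    have hfxb : f b * x b = 1 := by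
      rw [dotProduct, Finset.sum_eq_single b] at hfx
      · exact hfx
      · intro i _ hi; rw [hx i hi, mul_zero]
      · simp
    have hR : Matrix.vecMulVec x f = Matrix.vecMulVec (Pi.single b 1) (x b • f) := by
      ext i j
      simp only [Matrix.vecMulVec_apply, Pi.smul_apply, smul_eq_mul]
      by_cases hi : i = b
      · subst hi; simp
      · rw [hx i hi]; simp [hi]
    have h1 := hrow (x b • f) (by show x b * f b = 1; rw [mul_comm]; exact hfxb)
    rw [← hR, hφ] at h1
    have h2 := congrArg (fun M => M *ᵥ y) h1
    simp only [Matrix.vecMulVec_mulVec, hgy] at h2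
    simpa using h2

theorem fix_rank_one (P : Pre r b t) (K : Rk r φ) (hbt : b ≠ t) (m : ι) (hmb : m ≠ b) (hmt : m ≠ t)
    (hrow : ∀ v : ι → ℂ, v b = 1 → φ (Matrix.vecMulVec (Pi.single b 1) v) =
      Matrix.vecMulVec (Pi.single b 1) v)
    (hcol : ∀ u : ι → ℂ, u t = 1 → φ (Matrix.vecMulVec u (Pi.single t 1)) =
      Matrix.vecMulVec u (Pi.single t 1))
    (x f : ι → ℂ) (hfx : f ⬝ᵥ x = 1) (hp : Pat r (Matrix.vecMulVec x f)) :
    φ (Matrix.vecMulVec x f) = Matrix.vecMulVec x f := by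
  obtain ⟨y, g, hgy, hφ⟩ := K.ex x f hfx hp
  have h1 := prop_all P K hbt m hmb hmt hrow hcol x f y g hfx hp hgy hφ
  have h2 : g = (x ⬝ᵥ g) • f := by
    refine prop_all P.dual K.dual hbt.symm m hmt hmb ?_ ?_ f x g y
      (by rw [dotProduct_comm]; exact hfx) ?_ (by rw [dotProduct_comm]; exact hgy) ?_
    · intro v hv
      rw [Matrix.transpose_vecMulVec, hcol v hv, Matrix.transpose_vecMulVec]
    · intro v hv
      rw [Matrix.transpose_vecMulVec, hrow v hv, Matrix.transpose_vecMulVec]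
    · intro i j hij
      have := hp j i hij
      rw [Matrix.vecMulVec_apply] at this ⊢
      rw [mul_comm]; exact this
    · show (φ (Matrix.vecMulVec f x)ᵀ)ᵀ = _
      rw [Matrix.transpose_vecMulVec, hφ, Matrix.transpose_vecMulVec]
  rw [hφ]
  obtain ⟨p, hp'⟩ : ∃ p, f ⬝ᵥ y = p := ⟨_, rfl⟩
  obtain ⟨q, hq'⟩ : ∃ q, x ⬝ᵥ g = q := ⟨_, rfl⟩
  rw [hp'] at h1
  rw [hq'] at h2
  rw [h1, h2, smul_dotProduct, dotProduct_smul, hfx] at hgy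
  rw [h1, h2]
  ext i j
  simp only [Matrix.vecMulVec_apply, Pi.smul_apply, smul_eq_mul] at hgy ⊢
  linear_combination (x i * f j) * hgy

/-- If rows from the bottom and columns to the top are fixed then `φ` is the identity. -/
theorem fix_all [Nonempty ι] (P : Pre r b t) (H : Hyp r φ) (hbt : b ≠ t) (m : ι) (hmb : m ≠ b)
    (hmt : m ≠ t)
    (hrow : ∀ v : ι → ℂ, v b = 1 → φ (Matrix.vecMulVec (Pi.single b 1) v) =
      Matrix.vecMulVec (Pi.single b 1) v)
    (hcol : ∀ u : ι → ℂ, u t = 1 → φ (Matrix.vecMulVec u (Pi.single t 1)) =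
      Matrix.vecMulVec u (Pi.single t 1))
    (X : Matrix ι ι ℂ) (hX : Pat r X) : φ X = X := by
  apply dens P H _ X hX
  intro S S' d hd hS hp
  have hpl := pat_interp P S S' d hd hS hp
  obtain ⟨T, T', hT, hφ⟩ := frame H S S' hS hpl
  have hS' : S' * S = 1 := mul_eq_one_comm.mp hS
  have hE : ∀ k, S * Matrix.diagonal (Pi.single k 1) * S' = T * Matrix.diagonal (Pi.single k 1) * T' := by
    intro k
    rw [← hφ]
    have h1 := hpl (Pi.single k 1)
    rw [conj_single, one_smul] at h1 ⊢
    symm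
    apply fix_rank_one P (H.rk P) hbt m hmb hmt hrow hcol _ _ _ h1
    have := congrFun (congrFun hS' k) k
    rw [Matrix.mul_apply, Matrix.one_apply_eq] at this
    exact this
  have hd : Matrix.diagonal d = ∑ k, d k • Matrix.diagonal (Pi.single k (1 : ℂ)) := by
    ext i j
    by_cases hij : i = j
    · subst hij; simp [Matrix.sum_apply, Pi.single_apply]
    · simp [Matrix.sum_apply, hij]
  rw [hφ, hd, Finset.mul_sum, Finset.mul_sum, Finset.sum_mul, Finset.sum_mul]
  apply Finset.sum_congr rfl
  intro k _
  rw [Matrix.mul_smul, Matrix.smul_mul, Matrix.mul_smul, Matrix.smul_mul, hE k]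

end RankOne

section Types

variable {ι : Type} [Fintype ι] [DecidableEq ι]
variable {r : ι → ι → Prop} {b t : ι} {φ : Matrix ι ι ℂ → Matrix ι ι ℂ}

/-- standard basis vector. -/
def ev (k : ι) : ι → ℂ := Pi.single k 1

theorem ev_apply (k i : ι) : ev k i = if i = k then 1 else 0 := by
  unfold ev; rw [Pi.single_apply]

theorem ev_dot (k : ι) (v : ι → ℂ) : ev k ⬝ᵥ v = v k := by
  unfold ev; rw [single_dotProduct, one_mul]

theorem dot_ev (k : ι) (v : ι → ℂ) : v ⬝ᵥ ev k = v k := by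
  unfold ev; rw [dotProduct_single, mul_one]

theorem Pat.swap {X : Matrix ι ι ℂ} (h : Pat (fun i j => r j i) X) : Pat r Xᵀ :=
  fun i j hij => h j i hij

theorem Hyp.dual (H : Hyp r φ) : Hyp (fun i j => r j i) (fun X => (φ Xᵀ)ᵀ) := by
  refine ⟨?_, ?_, ?_, ?_⟩
  · refine (continuous_id.matrix_transpose).comp_continuousOn ?_
    exact H.cont.comp (continuous_id.matrix_transpose).continuousOn (fun X hX => Pat.swap hX)
  · intro X Y hX hY hXY
    exact Matrix.transpose_injective
      (H.inj _ _ (Pat.swap hX) (Pat.swap hY) (Matrix.transpose_injective hXY))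
  · intro X Y hX hY hXY
    have := H.comm _ _ (Pat.swap hX) (Pat.swap hY)
      (by rw [← Matrix.transpose_mul, ← Matrix.transpose_mul, hXY])
    rw [← Matrix.transpose_mul, ← Matrix.transpose_mul, this]
  · intro X hX
    rw [aux_spec_transpose, H.spec _ (Pat.swap hX), aux_spec_transpose]

theorem pat_Q (P : Pre r b t) (j : ι) (s : ℂ) :
    Pat r (Matrix.vecMulVec (ev j - s • ev b) (ev j)) := by
  intro i k hik
  rw [Matrix.vecMulVec_apply]
  by_cases hk : k = j
  · subst hk
    have h1 : i ≠ k := by rintro rfl; exact hik (P.refl _)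
    have h2 : i ≠ b := by rintro rfl; exact hik (P.bot _)
    simp [ev_apply, h1, h2]
  · simp [ev_apply, hk]

theorem pat_E (P : Pre r b t) (k : ι) : Pat r (Matrix.vecMulVec (ev k) (ev k)) := by
  have := pat_Q P k 0
  simpa using this

theorem Q_inj {j : ι} (hjb : j ≠ b) (s s' : ℂ)
    (h : Matrix.vecMulVec (ev j - s • ev b) (ev j) = Matrix.vecMulVec (ev j - s' • ev b) (ev j)) :
    s = s' := by
  have := congrFun (congrFun h b) j
  rw [Matrix.vecMulVec_apply, Matrix.vecMulVec_apply] at this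
  simpa [ev_apply, hjb.symm] using this

theorem sum_two {j : ι} (hjb : j ≠ b) (g y : ι → ℂ) (h : ∀ k, k ≠ b → k ≠ j → g k = 0 ∨ y k = 0) :
    g ⬝ᵥ y = g b * y b + g j * y j := by
  unfold dotProduct
  rw [← Finset.sum_subset (Finset.subset_univ {b, j})]
  · rw [Finset.sum_pair hjb.symm]
  · intro k _ hk
    simp only [Finset.mem_insert, Finset.mem_singleton, not_or] at hk
    rcases h k hk.1 hk.2 with h | h <;> rw [h] <;> ring

theorem Q_supp (P : Pre r b t) (H : Hyp r φ)
    (hd : ∀ k, φ (Matrix.vecMulVec (ev k) (ev k)) = Matrix.vecMulVec (ev k) (ev k))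
    (j : ι) (hjb : j ≠ b) (s : ℂ) :
    ∃ y g : ι → ℂ, g ⬝ᵥ y = 1 ∧
      φ (Matrix.vecMulVec (ev j - s • ev b) (ev j)) = Matrix.vecMulVec y g ∧
      ∀ k, k ≠ b → k ≠ j → g k = 0 ∧ y k = 0 := by
  have h1 : ev j ⬝ᵥ (ev j - s • ev b) = 1 := by
    rw [ev_dot]; simp [ev_apply, hjb]
  obtain ⟨y, g, hgy, h⟩ := (H.rk P).ex _ _ h1 (pat_Q P j s)
  refine ⟨y, g, hgy, h, ?_⟩
  intro k hkb hkj
  have h2 : ev k ⬝ᵥ ev k = 1 := by rw [ev_dot]; simp [ev_apply]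
  have := (H.rk P).orth _ _ _ _ _ _ _ _ h1 h2 (pat_Q P j s) (pat_E P k) hgy h2 h (hd k)
    (by rw [ev_dot]; simp [ev_apply, hkj.symm])
    (by rw [ev_dot]; simp [ev_apply, hkb, hkj])
  rw [dot_ev, ev_dot] at this
  exact this

theorem dich (P : Pre r b t) (H : Hyp r φ) (hthird : ∀ j, ∃ k, k ≠ b ∧ k ≠ j)
    (hd : ∀ k, φ (Matrix.vecMulVec (ev k) (ev k)) = Matrix.vecMulVec (ev k) (ev k)) :
    (∃ β : ι → ℂ → ℂ, ∀ j, j ≠ b → ∀ s, φ (Matrix.vecMulVec (ev j - s • ev b) (ev j)) =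
      Matrix.vecMulVec (ev j - β j s • ev b) (ev j)) ∨
    (∃ β : ι → ℂ → ℂ, ∀ j, j ≠ b → ∀ s, φ (Matrix.vecMulVec (ev j - s • ev b) (ev j)) =
      Matrix.vecMulVec (ev j) (ev j - β j s • ev b)) := by
  have hQ : ∀ (j : ι) (s : ℂ), ∃ y g : ι → ℂ, j ≠ b → (g ⬝ᵥ y = 1 ∧
      φ (Matrix.vecMulVec (ev j - s • ev b) (ev j)) = Matrix.vecMulVec y g ∧
      ∀ k, k ≠ b → k ≠ j → g k = 0 ∧ y k = 0) := by
    intro j s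
    by_cases hjb : j = b
    · exact ⟨0, 0, fun h => absurd hjb h⟩
    · obtain ⟨y, g, h⟩ := Q_supp P H hd j hjb s
      exact ⟨y, g, fun _ => h⟩
  choose y g hyg using hQ
  have hdot : ∀ j s, j ≠ b → g j s b * y j s b + g j s j * y j s j = 1 := by
    intro j s hjb
    obtain ⟨h1, h2, h3⟩ := hyg j s hjb
    rw [← h1, sum_two hjb]
    intro k hk hk'
    exact Or.inl (h3 k hk hk').1
  have hz : ∀ j s k s', j ≠ b → k ≠ b → j ≠ k → g j s b * y k s' b = 0 := by
    intro j s k s' hjb hkb hjk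
    obtain ⟨h1, h2, h3⟩ := hyg j s hjb
    obtain ⟨h1', h2', h3'⟩ := hyg k s' hkb
    have := ((H.rk P).orth _ _ _ _ _ _ _ _ (by rw [ev_dot]; simp [ev_apply, hjb])
      (by rw [ev_dot]; simp [ev_apply, hkb]) (pat_Q P j s) (pat_Q P k s') h1 h1' h2 h2'
      (by rw [ev_dot]; simp [ev_apply, hjb, hjk]) (by rw [ev_dot]; simp [ev_apply, hkb, hjk.symm])).1
    rw [sum_two hjb, (h3' j hjb hjk).2] at this
    · simpa using this
    · intro l hl hl'
      exact Or.inl (h3 l hl hl').1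
  have form1 : ∀ j s, j ≠ b → g j s b = 0 → φ (Matrix.vecMulVec (ev j - s • ev b) (ev j)) =
      Matrix.vecMulVec (ev j - (-(y j s b * g j s j)) • ev b) (ev j) := by
    intro j s hjb h0
    obtain ⟨h1, h2, h3⟩ := hyg j s hjb
    have h4 := hdot j s hjb
    rw [h2]
    ext i k
    rw [Matrix.vecMulVec_apply, Matrix.vecMulVec_apply]
    by_cases hk : k = j
    · subst hk
      by_cases hi : i = k
      · subst hi
        simp [ev_apply, hjb]
        rw [h0] at h4; linear_combination h4
      · by_cases hib : i = b
        · subst hib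
          simp [ev_apply, hjb.symm]
        · simp [ev_apply, hi, hib, (h3 i hib hi).2]
    · by_cases hkb : k = b
      · subst hkb
        simp [ev_apply, hk, h0]
      · simp [ev_apply, hk, (h3 k hkb hk).1]
  have form2 : ∀ j s, j ≠ b → y j s b = 0 → φ (Matrix.vecMulVec (ev j - s • ev b) (ev j)) =
      Matrix.vecMulVec (ev j) (ev j - (-(g j s b * y j s j)) • ev b) := by
    intro j s hjb h0
    obtain ⟨h1, h2, h3⟩ := hyg j s hjb
    have h4 := hdot j s hjb
    rw [h2]
    ext k i
    rw [Matrix.vecMulVec_apply, Matrix.vecMulVec_apply]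
    by_cases hk : k = j
    · subst hk
      by_cases hi : i = k
      · subst hi
        simp [ev_apply, hjb]
        rw [h0] at h4; linear_combination h4
      · by_cases hib : i = b
        · subst hib
          simp [ev_apply, hjb.symm]
          ring
        · simp [ev_apply, hi, hib, (h3 i hib hi).1]
    · by_cases hkb : k = b
      · subst hkb
        simp [ev_apply, hk, h0]
      · simp [ev_apply, hk, (h3 k hkb hk).2]
  have hne : ∀ j s, j ≠ b → s ≠ 0 → y j s b = 0 → g j s b ≠ 0 := by
    intro j s hjb hs h1 h2
    have h3 := form1 j s hjb h2
    rw [h1] at h3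
    have h4 : φ (Matrix.vecMulVec (ev j - s • ev b) (ev j)) =
        φ (Matrix.vecMulVec (ev j - (0:ℂ) • ev b) (ev j)) := by
      rw [h3]; simp [hd]
    exact hs (Q_inj hjb s 0 (H.inj _ _ (pat_Q P j s) (pat_Q P j 0) h4))
  by_cases hall : ∀ j s, j ≠ b → g j s b = 0
  · left
    exact ⟨fun j s => -(y j s b * g j s j), fun j hj s => form1 j s hj (hall j s hj)⟩
  · right
    push Not at hall
    obtain ⟨j, s, hjb, hg⟩ := hall
    have hy : ∀ k s', k ≠ b → k ≠ j → y k s' b = 0 := by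
      intro k s' hkb hkj
      exact (mul_eq_zero.mp (hz j s k s' hjb hkb hkj.symm)).resolve_left hg
    obtain ⟨k, hkb, hkj⟩ := hthird j
    have hgk := hne k 1 hkb one_ne_zero (hy k 1 hkb hkj)
    have hy' : ∀ l s', l ≠ b → y l s' b = 0 := by
      intro l s' hlb
      by_cases hlj : l = j
      · subst hlj
        exact (mul_eq_zero.mp (hz k 1 l s' hkb hlb hkj)).resolve_left hgk
      · exact hy l s' hlb hlj
    exact ⟨fun j s => -(g j s b * y j s j), fun j hj s => form2 j s hj (hy' j s hj)⟩

/-- row type one determines the values on the first row. -/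
theorem row_vals (P : Pre r b t) (H : Hyp r φ) (β : ι → ℂ → ℂ)
    (hβ : ∀ j, j ≠ b → ∀ s, φ (Matrix.vecMulVec (ev j - s • ev b) (ev j)) =
      Matrix.vecMulVec (ev j - β j s • ev b) (ev j)) (f : ι → ℂ) (hf : f b = 1) :
    φ (Matrix.vecMulVec (ev b) f) =
      Matrix.vecMulVec (ev b) (fun j => if j = b then 1 else β j (f j)) := by
  have h1 : f ⬝ᵥ ev b = 1 := by rw [dot_ev, hf]
  obtain ⟨y, g, hgy, h⟩ := (H.rk P).ex _ _ h1 (pat_row P f)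
  have key : ∀ j, j ≠ b → g j = β j (f j) * g b ∧ y j = 0 := by
    intro j hjb
    have h2 : ∀ s : ℂ, ev j ⬝ᵥ (ev j - s • ev b) = 1 := by
      intro s; rw [ev_dot]; simp [ev_apply, hjb]
    have := (H.rk P).orth _ _ _ _ _ _ _ _ h1 (h2 (f j)) (pat_row P f) (pat_Q P j (f j)) hgy
      (h2 (β j (f j))) h (hβ j hjb (f j))
      (by rw [dotProduct_sub, dotProduct_smul, dot_ev, dot_ev, hf]; simp)
      (by rw [ev_dot]; simp [ev_apply, hjb])
    rw [dotProduct_sub, dotProduct_smul, dot_ev, dot_ev, ev_dot, smul_eq_mul] at this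
    exact ⟨by linear_combination this.1, this.2⟩
  have hb : g b * y b = 1 := by
    rw [← hgy]
    unfold dotProduct
    symm
    apply Finset.sum_eq_single b
    · intro k _ hk
      rw [(key k hk).2, mul_zero]
    · simp
  rw [h]
  ext i j
  rw [Matrix.vecMulVec_apply, Matrix.vecMulVec_apply]
  by_cases hi : i = b
  · subst hi
    by_cases hj : j = i
    · subst hj
      simp [ev_apply]; linear_combination hb
    · simp [ev_apply, hj]; rw [(key j hj).1]; linear_combination (β j (f j)) * hb
  · simp [ev_apply, hi, (key i hi).2]

end Types

section Norm

variable {ι : Type} [Fintype ι] [DecidableEq ι]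
variable {r : ι → ι → Prop} {b t : ι} {φ : Matrix ι ι ℂ → Matrix ι ι ℂ}

theorem beta_ne (P : Pre r b t) (H : Hyp r φ)
    (hd : ∀ k, φ (Matrix.vecMulVec (ev k) (ev k)) = Matrix.vecMulVec (ev k) (ev k))
    (β : ι → ℂ → ℂ)
    (hβ : ∀ j, j ≠ b → ∀ s, φ (Matrix.vecMulVec (ev j - s • ev b) (ev j)) =
      Matrix.vecMulVec (ev j - β j s • ev b) (ev j)) (j : ι) (hj : j ≠ b) (s : ℂ) (hs : s ≠ 0) :
    β j s ≠ 0 := by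
  intro h0
  have h4 : φ (Matrix.vecMulVec (ev j - s • ev b) (ev j)) =
      φ (Matrix.vecMulVec (ev j - (0:ℂ) • ev b) (ev j)) := by
    rw [hβ j hj, h0]; simp [hd]
  exact hs (Q_inj hj s 0 (H.inj _ _ (pat_Q P j s) (pat_Q P j 0) h4))

theorem beta_zero
    (hd : ∀ k, φ (Matrix.vecMulVec (ev k) (ev k)) = Matrix.vecMulVec (ev k) (ev k))
    (β : ι → ℂ → ℂ)
    (hβ : ∀ j, j ≠ b → ∀ s, φ (Matrix.vecMulVec (ev j - s • ev b) (ev j)) =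
      Matrix.vecMulVec (ev j - β j s • ev b) (ev j)) (j : ι) (hj : j ≠ b) :
    β j 0 = 0 := by
  have h := hβ j hj 0
  rw [zero_smul, sub_zero, hd] at h
  apply (Q_inj hj 0 (β j 0) _).symm
  rw [zero_smul, sub_zero, h]

theorem hd_dual
    (hd : ∀ k, φ (Matrix.vecMulVec (ev k) (ev k)) = Matrix.vecMulVec (ev k) (ev k)) (k : ι) :
    (φ (Matrix.vecMulVec (ev k) (ev k))ᵀ)ᵀ = Matrix.vecMulVec (ev k) (ev k) := by
  rw [Matrix.transpose_vecMulVec, hd, Matrix.transpose_vecMulVec]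

/-- columns are of type one when rows are. -/
theorem col_type (P : Pre r b t) (H : Hyp r φ) (hbt : b ≠ t) (m : ι) (hmb : m ≠ b) (hmt : m ≠ t)
    (hd : ∀ k, φ (Matrix.vecMulVec (ev k) (ev k)) = Matrix.vecMulVec (ev k) (ev k))
    (β : ι → ℂ → ℂ)
    (hβ : ∀ j, j ≠ b → ∀ s, φ (Matrix.vecMulVec (ev j - s • ev b) (ev j)) =
      Matrix.vecMulVec (ev j - β j s • ev b) (ev j)) :
    ∃ γ : ι → ℂ → ℂ, ∀ i, i ≠ t → ∀ s,
      (fun X => (φ Xᵀ)ᵀ) (Matrix.vecMulVec (ev i - s • ev t) (ev i)) =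
      Matrix.vecMulVec (ev i - γ i s • ev t) (ev i) := by
  rcases dich P.dual H.dual (fun j => by
    by_cases h : j = b
    · exact ⟨m, hmt, by rw [h]; exact hmb⟩
    · exact ⟨b, hbt, fun h' => h h'.symm⟩) (hd_dual hd) with h | ⟨γ, hγ⟩
  · exact h
  · exfalso
    have h1 := hγ b hbt 1
    rw [Matrix.transpose_vecMulVec, ← Matrix.transpose_vecMulVec (ev b - γ b 1 • ev t),
      Matrix.transpose_inj] at h1
    have h2 := hβ t hbt.symm (-1)
    have h3 := ((H.rk P).orth (ev b) (ev b - (1:ℂ) • ev t) _ _ _ _ _ _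
      (by rw [dot_ev]; simp [ev_apply, hbt]) (by rw [ev_dot]; simp [ev_apply, hbt.symm])
      (pat_row P _) (pat_Q P t (-1))
      (by rw [ev_dot]; simp [ev_apply, hbt]) (by rw [ev_dot]; simp [ev_apply, hbt.symm]) h1 h2
      (by simp [dotProduct_add, sub_dotProduct, ev_dot, dot_ev]; simp [ev_apply, hbt, hbt.symm])
      (by rw [ev_dot]; simp [ev_apply, hbt.symm])).1
    rw [ev_dot] at h3
    simp [ev_apply, hbt] at h3
    exact beta_ne P H hd β hβ t hbt.symm (-1) (by norm_num) h3

theorem smul_row (P : Pre r b t) (H : Hyp r φ) (f : ι → ℂ) (hf : f b = 1) (c : ℂ) :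
    φ (c • Matrix.vecMulVec (ev b) f) = c • φ (Matrix.vecMulVec (ev b) f) := by
  obtain ⟨y, g, _, h⟩ := rank_one_map P H (ev b) f (by rw [dot_ev, hf]) (pat_row P f)
  have h1 := h 1
  rw [one_smul, one_smul] at h1
  rw [h c, h1]

/-- complex homogeneity of an additive coefficient. -/
theorem beta_hom (P : Pre r b t) (H : Hyp r φ) (hbt : b ≠ t) (β : ι → ℂ → ℂ)
    (hβ : ∀ j, j ≠ b → ∀ s, φ (Matrix.vecMulVec (ev j - s • ev b) (ev j)) =
      Matrix.vecMulVec (ev j - β j s • ev b) (ev j))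
    (hadd : ∀ u v, β t (u + v) = β t u + β t v) (c : ℂ) : β t c = c * β t 1 := by
  have hnat : ∀ (n : ℕ) (z : ℂ), β t (n * z) = n * β t z := by
    intro n z
    have := map_nsmul (AddMonoidHom.mk' (β t) hadd) n z
    simpa [nsmul_eq_mul] using this
  by_cases hc : c = 0
  · subst hc
    have := hadd 0 0
    simp at this
    rw [this]; ring
  obtain ⟨M, hM⟩ : ∃ M : ℂ → Matrix ι ι ℂ,
    M = fun z => Matrix.vecMulVec (ev b) (z • ev b + c • ev t) := ⟨_, rfl⟩
  have hMpat : ∀ z, Pat r (M z) := by intro z; rw [hM]; exact pat_row P _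
  have hMc : Continuous M := by
    rw [hM]
    apply continuous_matrix
    intro i j
    simp only [Matrix.vecMulVec_apply, Pi.add_apply, Pi.smul_apply, smul_eq_mul]
    fun_prop
  have hFc : Continuous (fun z => φ (M z) b t) := by
    have h1 : Continuous (fun z => φ (M z)) := H.cont.comp_continuous hMc hMpat
    exact h1.matrix_elem b t
  have hval : ∀ z, z ≠ 0 → φ (M z) b t = z * β t (z⁻¹ * c) := by
    intro z hz
    have h1 : M z = z • Matrix.vecMulVec (ev b) (ev b + (z⁻¹ * c) • ev t) := by
      rw [hM]
      ext i j
      simp only [Matrix.smul_apply, Matrix.vecMulVec_apply, Pi.add_apply, Pi.smul_apply, smul_eq_mul]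
      field_simp
    have h2 : (ev b + (z⁻¹ * c) • ev t) b = 1 := by simp [ev_apply, hbt]
    rw [h1, smul_row P H _ h2, row_vals P H β hβ _ h2]
    simp [Matrix.vecMulVec_apply, ev_apply, hbt.symm]
  have hlim : Filter.Tendsto (fun n : ℕ => ((n : ℂ) + 1)⁻¹) Filter.atTop (nhds 0) := by
    have := tendsto_one_div_add_atTop_nhds_zero_nat (𝕜 := ℂ)
    simpa using this
  have hn0 : ∀ n : ℕ, (n : ℂ) + 1 ≠ 0 := fun n => Nat.cast_add_one_ne_zero n
  have t1 : Filter.Tendsto (fun n : ℕ => φ (M (((n : ℂ) + 1)⁻¹)) b t) Filter.atTop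
      (nhds (φ (M 0) b t)) := (hFc.tendsto 0).comp hlim
  have t2 : Filter.Tendsto (fun n : ℕ => φ (M (c * ((n : ℂ) + 1)⁻¹)) b t) Filter.atTop
      (nhds (φ (M 0) b t)) := by
    have h3 := hlim.const_mul c
    rw [mul_zero] at h3
    exact (hFc.tendsto 0).comp h3
  have e1 : (fun n : ℕ => φ (M (((n : ℂ) + 1)⁻¹)) b t) = fun _ => β t c := by
    funext n
    rw [hval _ (inv_ne_zero (hn0 n)), inv_inv]
    have := hnat (n + 1) c
    push_cast at this
    rw [this, ← mul_assoc, inv_mul_cancel₀ (hn0 n), one_mul]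
  have e2 : (fun n : ℕ => φ (M (c * ((n : ℂ) + 1)⁻¹)) b t) = fun _ => c * β t 1 := by
    funext n
    rw [hval _ (mul_ne_zero hc (inv_ne_zero (hn0 n)))]
    have := hnat (n + 1) 1
    push_cast at this
    have h5 : (c * ((n : ℂ) + 1)⁻¹)⁻¹ * c = ((n : ℂ) + 1) * 1 := by
      have := hn0 n
      field_simp
    rw [h5, this]
    have := hn0 n
    field_simp
  rw [e1] at t1
  rw [e2] at t2
  exact (tendsto_nhds_unique t1 tendsto_const_nhds).symm.trans
    (tendsto_nhds_unique t2 tendsto_const_nhds)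

theorem norm_form [Nonempty ι] (P : Pre r b t) (H : Hyp r φ) (hbt : b ≠ t) (m : ι) (hmb : m ≠ b)
    (hmt : m ≠ t)
    (hd : ∀ k, φ (Matrix.vecMulVec (ev k) (ev k)) = Matrix.vecMulVec (ev k) (ev k))
    (β : ι → ℂ → ℂ)
    (hβ : ∀ j, j ≠ b → ∀ s, φ (Matrix.vecMulVec (ev j - s • ev b) (ev j)) =
      Matrix.vecMulVec (ev j - β j s • ev b) (ev j)) :
    ∃ T T' : Matrix ι ι ℂ, T * T' = 1 ∧ ∀ X, Pat r X → φ X = T * X * T' := by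
  obtain ⟨γ, hγ⟩ := col_type P H hbt m hmb hmt hd β hβ
  have hrow := row_vals P H β hβ
  have hcol : ∀ u : ι → ℂ, u t = 1 → φ (Matrix.vecMulVec u (ev t)) =
      Matrix.vecMulVec (fun i => if i = t then 1 else γ i (u i)) (ev t) := by
    intro u hu
    have := row_vals P.dual H.dual γ hγ u hu
    rw [Matrix.transpose_vecMulVec, ← Matrix.transpose_vecMulVec _ (ev t),
      Matrix.transpose_inj] at this
    exact this
  have hβ0 := beta_zero hd β hβ
  have hγ0 := beta_zero (φ := fun X => (φ Xᵀ)ᵀ) (b := t) (hd_dual hd) γ hγ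
  have hne := beta_ne P H hd β hβ
  have horth : ∀ f u : ι → ℂ, f b = 1 → u t = 1 → f ⬝ᵥ u = 0 →
      (fun j => if j = b then 1 else β j (f j)) ⬝ᵥ (fun i => if i = t then 1 else γ i (u i)) = 0 := by
    intro f u hf hu hfu
    exact ((H.rk P).orth (ev b) f u (ev t) _ _ _ _ (by rw [dot_ev, hf]) (by rw [ev_dot, hu])
      (pat_row P f) (pat_col P u) (by rw [dot_ev]; simp) (by rw [ev_dot]; simp) (hrow f hf) (hcol u hu)
      hfu (by rw [ev_dot]; simp [ev_apply, hbt.symm])).1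
  have hthree : ∀ k, k ≠ b → k ≠ t → ∀ u w p q : ℂ, w + u + p * q = 0 →
      γ b w + β t u + β k p * γ k q = 0 := by
    intro k hkb hkt u w p q h
    have h1 := horth (ev b + u • ev t + p • ev k) (ev t + w • ev b + q • ev k)
      (by simp [ev_apply, hbt, hkb.symm]) (by simp [ev_apply, hbt.symm, hkt.symm])
      (by
        simp only [add_dotProduct, smul_dotProduct, ev_dot]
        simp [ev_apply, hbt, hbt.symm, hkt, hkt.symm, hkb, hkb.symm]
        linear_combination h)
    have h2 : (fun j => if j = b then (1:ℂ) else β j ((ev b + u • ev t + p • ev k) j)) =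
        ev b + β t u • ev t + β k p • ev k := by
      funext j
      by_cases hjb : j = b
      · subst hjb; simp [ev_apply, hbt, hkb.symm]
      · by_cases hjt : j = t
        · subst hjt; simp [ev_apply, hjb, hkt.symm]
        · by_cases hjk : j = k
          · subst hjk; simp [ev_apply, hjb, hjt]
          · simp [ev_apply, hjb, hjt, hjk, hβ0 j hjb]
    rw [h2] at h1
    simp only [add_dotProduct, smul_dotProduct, ev_dot] at h1
    simp [ev_apply, hbt, hbt.symm, hkt, hkt.symm, hkb, hkb.symm] at h1
    linear_combination h1
  have hγb : ∀ u, γ b (-u) = - β t u := by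
    intro u
    have := hthree m hmb hmt u (-u) 0 0 (by ring)
    rw [hβ0 m hmb] at this
    linear_combination this
  have hprod : ∀ k, k ≠ b → k ≠ t → ∀ u p q, β t (u + p * q) = β t u + β k p * γ k q := by
    intro k hkb hkt u p q
    have h1 := hthree k hkb hkt u (-(u + p * q)) p q (by ring)
    rw [hγb] at h1
    linear_combination -h1
  have hβt0 := hβ0 t hbt.symm
  have hprod' : ∀ k, k ≠ b → k ≠ t → ∀ p q, β t (p * q) = β k p * γ k q := by
    intro k hkb hkt p q
    have := hprod k hkb hkt 0 p q
    rw [hβt0, zero_add, zero_add] at this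
    exact this
  have hadd : ∀ u v, β t (u + v) = β t u + β t v := by
    intro u v
    have h1 := hprod m hmb hmt u v 1
    rw [← hprod' m hmb hmt, mul_one] at h1
    exact h1
  have hhom := beta_hom P H hbt β hβ hadd
  obtain ⟨L, hL⟩ : ∃ L, L = β t 1 := ⟨_, rfl⟩
  have hL0 : L ≠ 0 := by rw [hL]; exact hne t hbt.symm 1 one_ne_zero
  obtain ⟨δ, hδ⟩ : ∃ δ : ι → ℂ, δ = fun j => if j = b then 1 else β j 1 := ⟨_, rfl⟩
  have hδ0 : ∀ j, δ j ≠ 0 := by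
    intro j
    rw [hδ]
    by_cases h : j = b
    · simp [h]
    · simp only [h, if_false]; exact hne j h 1 one_ne_zero
  have hδb : δ b = 1 := by rw [hδ]; simp
  have hδt : δ t = L := by rw [hδ, hL]; simp [hbt.symm]
  have hβδ : ∀ j, j ≠ b → ∀ x, β j x = δ j * x := by
    intro j hjb x
    by_cases hjt : j = t
    · subst hjt; rw [hδt, hL, hhom]; ring
    · have e1 := hprod' j hjb hjt x 1
      have e2 := hprod' j hjb hjt 1 1
      rw [hhom] at e1 e2
      have : δ j = β j 1 := by rw [hδ]; simp [hjb]
      rw [this]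
      have hγn : γ j 1 ≠ 0 := by
        intro h0
        rw [h0] at e2
        apply hL0; rw [hL]; simpa using e2
      apply mul_right_cancel₀ hγn
      linear_combination -e1 + x * e2
  have hγδ : ∀ i, i ≠ t → ∀ x, γ i x = L * (δ i)⁻¹ * x := by
    intro i hit x
    by_cases hib : i = b
    · subst hib
      have := hγb (-x)
      rw [neg_neg, hhom, ← hL] at this
      rw [hδb, this]; simp; ring
    · have e1 := hprod' i hib hit 1 x
      rw [hhom, ← hL] at e1
      have : β i 1 = δ i := by rw [hδ]; simp [hib]
      rw [this] at e1
      have := hδ0 i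
      field_simp
      linear_combination -e1
  obtain ⟨D, hD⟩ : ∃ D, D = Matrix.diagonal δ := ⟨_, rfl⟩
  obtain ⟨D', hD'⟩ : ∃ D', D' = Matrix.diagonal (fun i => (δ i)⁻¹) := ⟨_, rfl⟩
  have hDD : D * D' = 1 := by
    rw [hD, hD', Matrix.diagonal_mul_diagonal, ← Matrix.diagonal_one]
    congr 1
    funext i
    exact mul_inv_cancel₀ (hδ0 i)
  have hDD' : D' * D = 1 := mul_eq_one_comm.mp hDD
  have hfix := fix_all P (H.conj D D' hDD) hbt m hmb hmt
    (by
      intro v hv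
      have h1 := hrow v hv
      change φ (Matrix.vecMulVec (Pi.single b 1) v) = _ at h1
      show D * φ _ * D' = _
      rw [h1, hD, hD']
      ext i j
      rw [Matrix.mul_diagonal, Matrix.diagonal_mul, Matrix.vecMulVec_apply, Matrix.vecMulVec_apply]
      change δ i * (ev b i * _) * _ = ev b i * _
      by_cases hi : i = b
      · subst hi
        by_cases hj : j = i
        · subst hj
          simp [hδb, hv]
        · have := hδ0 j
          simp only [hj, if_false, hβδ j hj, hδb]
          field_simp
      · simp [ev_apply, hi])
    (by
      intro u hu
      have h1 := hcol u hu
      change φ (Matrix.vecMulVec u (Pi.single t 1)) = _ at h1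
      show D * φ _ * D' = _
      rw [h1, hD, hD']
      ext i j
      rw [Matrix.mul_diagonal, Matrix.diagonal_mul, Matrix.vecMulVec_apply, Matrix.vecMulVec_apply]
      change δ i * (_ * ev t j) * _ = _ * ev t j
      by_cases hj : j = t
      · subst hj
        by_cases hi : i = j
        · subst hi
          have := hδ0 i
          simp [hu, ev_apply, this]
        · have := hδ0 i
          simp only [hi, if_false, hγδ i hi, hδt]
          field_simp
      · simp [ev_apply, hj])
  refine ⟨D', D, hDD', ?_⟩
  intro X hX
  have h1 : D * φ X * D' = X := hfix X hX
  calc φ X = (D' * D) * φ X * (D' * D) := by rw [hDD']; simp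
    _ = D' * (D * φ X * D') * D := by noncomm_ring
    _ = D' * X * D := by rw [h1]

theorem main_pat [Nonempty ι] (P : Pre r b t) (H : Hyp r φ) (hbt : b ≠ t) (m : ι) (hmb : m ≠ b)
    (hmt : m ≠ t) :
    ∃ T T' : Matrix ι ι ℂ, T * T' = 1 ∧
      ((∀ X, Pat r X → φ X = T * X * T') ∨ (∀ X, Pat r X → φ X = T * Xᵀ * T')) := by
  obtain ⟨S, S', hS, hφ⟩ := frame H 1 1 (by simp) (by intro l; simpa using Pat.diag P l)
  have hS' : S' * S = 1 := mul_eq_one_comm.mp hS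
  have H1 := H.conj S' S hS'
  have hback : ∀ X, φ X = S * (S' * φ X * S) * S' := by
    intro X
    calc φ X = (S * S') * φ X * (S * S') := by rw [hS]; simp
      _ = _ := by noncomm_ring
  have hE : ∀ k : ι, Matrix.vecMulVec (ev k) (ev k) = Matrix.diagonal (ev k) := by
    intro k
    ext i j
    rw [Matrix.vecMulVec_apply, Matrix.diagonal_apply]
    by_cases hij : i = j
    · subst hij; simp [ev_apply]
    · simp only [hij, if_false, ev_apply]
      by_cases hi : i = k
      · subst hi; simp [Ne.symm hij]
      · simp [hi]
  have hd : ∀ k, S' * φ (Matrix.vecMulVec (ev k) (ev k)) * S = Matrix.vecMulVec (ev k) (ev k) := by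
    intro k
    rw [hE]
    have := hφ (ev k)
    rw [one_mul, mul_one] at this
    rw [this]
    calc S' * (S * diagonal (ev k) * S') * S = (S' * S) * diagonal (ev k) * (S' * S) := by noncomm_ring
      _ = _ := by rw [hS']; simp
  have hthird : ∀ j, ∃ k, k ≠ b ∧ k ≠ j := by
    intro j
    by_cases h : j = t
    · exact ⟨m, hmb, by rw [h]; exact hmt⟩
    · exact ⟨t, hbt.symm, fun h' => h h'.symm⟩
  rcases dich P H1 hthird hd with ⟨β, hβ⟩ | ⟨β, hβ⟩
  · obtain ⟨T, T', hT, h⟩ := norm_form P H1 hbt m hmb hmt hd β hβ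
    refine ⟨S * T, T' * S', ?_, Or.inl ?_⟩
    · calc S * T * (T' * S') = S * (T * T') * S' := by noncomm_ring
        _ = 1 := by rw [hT, mul_one, hS]
    · intro X hX
      have h1 : S' * φ X * S = T * X * T' := h X hX
      rw [hback X, h1]
      noncomm_ring
  · obtain ⟨T, T', hT, h⟩ := norm_form P H1.transpose hbt m hmb hmt
      (by
        intro k
        show (S' * φ _ * S)ᵀ = _
        rw [hd, Matrix.transpose_vecMulVec]) β
      (by
        intro j hj s
        have h1 : S' * φ _ * S = _ := hβ j hj s
        show (S' * φ _ * S)ᵀ = _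
        rw [h1, Matrix.transpose_vecMulVec])
    have hT' : T' * T = 1 := mul_eq_one_comm.mp hT
    refine ⟨S * T'ᵀ, Tᵀ * S', ?_, Or.inr ?_⟩
    · calc S * T'ᵀ * (Tᵀ * S') = S * (T'ᵀ * Tᵀ) * S' := by noncomm_ring
        _ = 1 := by rw [← Matrix.transpose_mul, hT, Matrix.transpose_one, mul_one, hS]
    · intro X hX
      have h1 : (S' * φ X * S)ᵀ = T * X * T' := h X hX
      have h2 : S' * φ X * S = T'ᵀ * Xᵀ * Tᵀ := by
        rw [← Matrix.transpose_transpose (S' * φ X * S), h1, Matrix.transpose_mul,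
          Matrix.transpose_mul, mul_assoc]
      rw [hback X, h2]
      noncomm_ring

end Norm

section Final

theorem blockIdx_mono_s18 (k : List ℕ) : Monotone (blockIdx k) := by
  intro i j hij
  unfold blockIdx
  apply Finset.card_le_card
  intro s hs
  simp only [Finset.mem_filter] at hs ⊢
  exact ⟨hs.1, hs.2.trans hij⟩

theorem mem_block_of_tri {n : ℕ} (β : Fin n → ℕ) (hβ : Monotone β)
    (T T' : Matrix (Fin n) (Fin n) ℂ) (hT : T * T' = 1)
    (h : ∀ a c : Fin n, a ≤ c → ∀ i j, β j < β i → T i a * T' c j = 0) :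
    T.BlockTriangular β := by
  intro i j hij
  by_contra hne
  have h0 : ∀ c j', j ≤ c → j' ≤ j → T' c j' = 0 := by
    intro c j' hc hj'
    exact (mul_eq_zero.mp (h j c hc i j' (lt_of_le_of_lt (hβ hj') hij))).resolve_left hne
  let M : Matrix {c : Fin n // c < j} {c : Fin n // c ≤ j} ℂ := T'.submatrix Subtype.val Subtype.val
  let N : Matrix {c : Fin n // c ≤ j} {c : Fin n // c < j} ℂ := T.submatrix Subtype.val Subtype.val
  have hNM : N * M = 1 := by
    ext a c
    rw [Matrix.mul_apply]
    have h1 : (T * T') a c = ∑ l, T a l * T' l c := Matrix.mul_apply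
    rw [hT] at h1
    have h2 : ∑ l, T a l * T' l c = ∑ l ∈ Finset.univ.filter (fun l => l < j), T a l * T' l c := by
      symm
      apply Finset.sum_subset (Finset.subset_univ _)
      intro l _ hl
      simp only [Finset.mem_filter, Finset.mem_univ, true_and, not_lt] at hl
      rw [h0 l c hl c.2, mul_zero]
    rw [h2, Finset.sum_subtype (p := fun l => l < j) _ (by simp)] at h1
    rw [show (1 : Matrix {c : Fin n // c ≤ j} {c : Fin n // c ≤ j} ℂ) a c =
      (1 : Matrix (Fin n) (Fin n) ℂ) a c by simp [Matrix.one_apply, Subtype.ext_iff], h1]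
    rfl
  have h1 := Matrix.rank_mul_le_right N M
  rw [hNM, Matrix.rank_one] at h1
  have h2 := h1.trans (Matrix.rank_le_card_height M)
  rw [Fintype.card_subtype, Fintype.card_subtype] at h2
  refine absurd h2 (not_le.mpr (Finset.card_lt_card ?_))
  rw [Finset.ssubset_iff_of_subset]
  · exact ⟨j, by simp, by simp⟩
  · intro c hc
    simp only [Finset.mem_filter, Finset.mem_univ, true_and] at hc ⊢
    exact hc.le

theorem exch_sq (n : ℕ) : exchMat n * exchMat n = 1 := by
  ext i j
  rw [Matrix.mul_apply, Finset.sum_eq_single (Fin.rev i)]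
  · simp only [exchMat, Matrix.of_apply, Fin.val_rev, Matrix.one_apply, Fin.ext_iff]
    have := i.2
    have := j.2
    by_cases h : (i : ℕ) = j
    · rw [if_pos (by omega), if_pos (by omega), if_pos h, one_mul]
    · rw [if_neg h, if_neg (c := n - ((i : ℕ) + 1) + (j : ℕ) + 1 = n) (by omega), mul_zero]
  · intro l _ hl
    have : ¬ ((i : ℕ) + (l : ℕ) + 1 = n) := by
      intro h
      apply hl
      rw [Fin.ext_iff, Fin.val_rev]
      omega
    simp [exchMat, this]
  · simp

theorem exch_conj (n : ℕ) (X : Matrix (Fin n) (Fin n) ℂ) (i j : Fin n) :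
    (exchMat n * X * exchMat n) i j = X (Fin.rev i) (Fin.rev j) := by
  have hl : ∀ (Y : Matrix (Fin n) (Fin n) ℂ) (i j : Fin n), (exchMat n * Y) i j = Y (Fin.rev i) j := by
    intro Y i j
    rw [Matrix.mul_apply, Finset.sum_eq_single (Fin.rev i)]
    · have : (i : ℕ) + (Fin.rev i : ℕ) + 1 = n := by rw [Fin.val_rev]; omega
      simp only [exchMat, Matrix.of_apply, this, if_true, one_mul]
    · intro l _ hl
      have : ¬ ((i : ℕ) + (l : ℕ) + 1 = n) := by
        intro h
        apply hl
        rw [Fin.ext_iff, Fin.val_rev]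
        omega
      simp [exchMat, this]
    · simp
  have hr : ∀ (Y : Matrix (Fin n) (Fin n) ℂ) (i j : Fin n), (Y * exchMat n) i j = Y i (Fin.rev j) := by
    intro Y i j
    rw [Matrix.mul_apply, Finset.sum_eq_single (Fin.rev j)]
    · have : (Fin.rev j : ℕ) + (j : ℕ) + 1 = n := by rw [Fin.val_rev]; omega
      simp only [exchMat, Matrix.of_apply, this, if_true, mul_one]
    · intro l _ hl
      have : ¬ ((l : ℕ) + (j : ℕ) + 1 = n) := by
        intro h
        apply hl
        rw [Fin.ext_iff, Fin.val_rev]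
        omega
      simp [exchMat, this]
    · simp
  rw [hr, hl]

/-- a conjugation which sends a set containing all upper triangular matrix units into a block
upper-triangular algebra is implemented by an element of that algebra. -/
theorem conj_in {n : ℕ} (k : List ℕ) (𝒮 : Set (Matrix (Fin n) (Fin n) ℂ))
    (h𝒮 : ∀ a c : Fin n, a ≤ c → Matrix.single a c 1 ∈ 𝒮)
    (T T' : Matrix (Fin n) (Fin n) ℂ) (hT : T * T' = 1)
    (h : ∀ X ∈ 𝒮, T * X * T' ∈ blockAlg n k) :
    𝒮 ⊆ blockAlg n k ∧ T ∈ blockAlg n k ∧ IsUnit T.det ∧ T⁻¹ ∈ blockAlg n k ∧ T⁻¹ = T' := by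
  have hT' : T' * T = 1 := mul_eq_one_comm.mp hT
  have hinv : T⁻¹ = T' := Matrix.inv_eq_right_inv hT
  have hdet : IsUnit T.det := by
    rw [← Matrix.isUnit_iff_isUnit_det]
    exact ⟨⟨T, T', hT, hT'⟩, rfl⟩
  have hmono : Monotone (fun i : Fin n => blockIdx k (i : ℕ)) :=
    fun i j hij => blockIdx_mono_s18 k hij
  have hBT : T.BlockTriangular (fun i : Fin n => blockIdx k (i : ℕ)) := by
    apply mem_block_of_tri _ hmono T T' hT
    intro a c hac i j hij
    have h1 := h _ (h𝒮 a c hac) i j hij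
    rw [← h1, Matrix.mul_apply, Finset.sum_eq_single c]
    · rw [Matrix.mul_apply, Finset.sum_eq_single a]
      · simp
      · intro l _ hl
        simp [Matrix.single, hl.symm]
      · simp
    · intro l _ hl
      rw [Matrix.mul_apply]
      rw [Finset.sum_eq_zero, zero_mul]
      intro p _
      simp [Matrix.single, hl.symm]
    · simp
  let _ : Invertible T := ⟨T', hT', hT⟩
  have hBT' := Matrix.blockTriangular_inv_of_blockTriangular hBT
  refine ⟨?_, fun i j hij => hBT hij, hdet, fun i j hij => hBT' hij, hinv⟩
  intro X hX
  have h1 : (T * X * T').BlockTriangular (fun i : Fin n => blockIdx k (i : ℕ)) :=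
    fun i j hij => h X hX i j hij
  have h2 := (hBT'.mul h1).mul hBT
  have h3 : T⁻¹ * (T * X * T') * T = X := by
    rw [hinv]
    calc T' * (T * X * T') * T = (T' * T) * X * (T' * T) := by noncomm_ring
      _ = X := by rw [hT']; simp
  rw [h3] at h2
  exact fun i j hij => h2 hij

end Final

theorem main_between_blockAlgs {n : ℕ} (hn : 3 ≤ n) (𝒜 ℬ : Set (Matrix (Fin n) (Fin n) ℂ))
    (h𝒜 : IsBlockUT n 𝒜) (hℬ : IsBlockUT n ℬ)
    (φ : Matrix (Fin n) (Fin n) ℂ → Matrix (Fin n) (Fin n) ℂ)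
    (hmaps : ∀ X ∈ 𝒜, φ X ∈ ℬ)
    (hcont : ContinuousOn φ 𝒜)
    (hinj : Set.InjOn φ 𝒜)
    (hcomm : ∀ X ∈ 𝒜, ∀ Y ∈ 𝒜, X * Y = Y * X → φ X * φ Y = φ Y * φ X)
    (hspec : ∀ X ∈ 𝒜, spectrum ℂ (φ X) = spectrum ℂ X) :
    (𝒜 ⊆ ℬ ∧ ∃ T ∈ ℬ, IsUnit T.det ∧ T⁻¹ ∈ ℬ ∧
      ∀ X ∈ 𝒜, φ X = T * X * T⁻¹) ∨
    ((fun X : Matrix (Fin n) (Fin n) ℂ => exchMat n * Xᵀ * exchMat n) '' 𝒜 ⊆ ℬ ∧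
      ∃ T ∈ ℬ, IsUnit T.det ∧ T⁻¹ ∈ ℬ ∧
        ∀ X ∈ 𝒜, φ X = T * (exchMat n * Xᵀ * exchMat n) * T⁻¹) := by
  obtain ⟨k, _, _, rfl⟩ := h𝒜
  obtain ⟨k', _, _, rfl⟩ := hℬ
  obtain ⟨r, hr⟩ : ∃ r : Fin n → Fin n → Prop, r = fun (i j : Fin n) => blockIdx k (i : ℕ) ≤ blockIdx k (j : ℕ) :=
    ⟨_, rfl⟩
  have hpat : ∀ X, Pat r X ↔ X ∈ blockAlg n k := by
    intro X
    rw [hr]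
    simp only [Pat, blockAlg, Set.mem_setOf_eq, not_le]
  let b : Fin n := ⟨0, by omega⟩
  let t : Fin n := ⟨n - 1, by omega⟩
  let m : Fin n := ⟨1, by omega⟩
  have P : Pre r b t := by
    rw [hr]
    refine ⟨fun i => le_rfl, fun i j l h1 h2 => h1.trans h2, fun i => ?_, fun i => ?_⟩
    · exact blockIdx_mono_s18 k (Nat.zero_le _)
    · exact blockIdx_mono_s18 k (show (i : ℕ) ≤ n - 1 by omega)
  have H : Hyp r φ := by
    refine ⟨?_, ?_, ?_, ?_⟩
    · have : {X | Pat r X} = blockAlg n k := Set.ext hpat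
      rw [this]; exact hcont
    · intro X Y hX hY hXY
      exact hinj ((hpat X).mp hX) ((hpat Y).mp hY) hXY
    · intro X Y hX hY hXY
      exact hcomm X ((hpat X).mp hX) Y ((hpat Y).mp hY) hXY
    · intro X hX
      exact hspec X ((hpat X).mp hX)
  have hne : Nonempty (Fin n) := ⟨b⟩
  have hsingle : ∀ a c : Fin n, a ≤ c → Matrix.single a c (1 : ℂ) ∈ blockAlg n k := by
    intro a c hac i j hij
    by_cases h1 : a = i
    · subst h1
      by_cases h2 : c = j
      · subst h2
        exact absurd (blockIdx_mono_s18 k (show (a : ℕ) ≤ c from hac)) (not_le.mpr hij)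
      · simp [Matrix.single, h2]
    · simp [Matrix.single, h1]
  obtain ⟨T, T', hT, h | h⟩ := main_pat P H (show b ≠ t by
      simp only [b, t, ne_eq, Fin.mk.injEq]; omega) m
    (by simp only [b, m, ne_eq, Fin.mk.injEq]; omega)
    (by simp only [t, m, ne_eq, Fin.mk.injEq]; omega)
  · left
    obtain ⟨h1, h2, h3, h4, h5⟩ := conj_in k' (blockAlg n k) hsingle T T' hT (by
      intro X hX
      rw [← h X ((hpat X).mpr hX)]
      exact hmaps X hX)
    refine ⟨h1, T, h2, h3, h4, ?_⟩
    intro X hX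
    rw [h5]
    exact h X ((hpat X).mpr hX)
  · right
    have hJ := exch_sq n
    have hval : ∀ X ∈ blockAlg n k,
        φ X = (T * exchMat n) * (exchMat n * Xᵀ * exchMat n) * (exchMat n * T') := by
      intro X hX
      rw [h X ((hpat X).mpr hX)]
      calc T * Xᵀ * T' = T * 1 * Xᵀ * 1 * T' := by simp
        _ = T * (exchMat n * exchMat n) * Xᵀ * (exchMat n * exchMat n) * T' := by rw [hJ]
        _ = _ := by noncomm_ring
    obtain ⟨h1, h2, h3, h4, h5⟩ := conj_in k'
      ((fun X : Matrix (Fin n) (Fin n) ℂ => exchMat n * Xᵀ * exchMat n) '' blockAlg n k)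
      (by
        intro a c hac
        refine ⟨Matrix.single (Fin.rev c) (Fin.rev a) 1, hsingle _ _ (Fin.rev_le_rev.mpr hac), ?_⟩
        ext i j
        show (exchMat n * (Matrix.single (Fin.rev c) (Fin.rev a) (1:ℂ))ᵀ * exchMat n) i j = _
        rw [exch_conj, Matrix.transpose_apply]
        simp only [Matrix.single, Matrix.of_apply, Fin.rev_inj]
        simp only [and_comm])
      (T * exchMat n) (exchMat n * T')
      (by
        calc T * exchMat n * (exchMat n * T') = T * (exchMat n * exchMat n) * T' := by noncomm_ring
          _ = 1 := by rw [hJ, mul_one, hT])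
      (by
        rintro _ ⟨X, hX, rfl⟩
        show T * exchMat n * (exchMat n * Xᵀ * exchMat n) * (exchMat n * T') ∈ _
        rw [← hval X hX]
        exact hmaps X hX)
    refine ⟨h1, T * exchMat n, h2, h3, h4, ?_⟩
    intro X hX
    rw [h5]
    exact hval X hX
end
end
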